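/- arXiv:2206.12182 — 4 statements merged into one kernel-verified Lean document; each statement's English description precedes it below -/
import Mathlib

section
/- Let Γ be a finite simple graph, let (G_v) be a family of nontrivial groups indexed by the vertices of Γ, and let 𝒢 = 𝒢(Γ, {G_v}) be the associated graph product. Let N be a finitely generated full normal subgroup of 𝒢. Assume that for every central vertex v of Γ, every proper quotient of G_v (i.e., the quotient of G_v by any nontrivial normal subgroup) is both abelian-by-finite and finite-by-abelian. Then 𝒢/N is both abelian-by-finite and finite-by-abelian. -/
/-- The set of defining relators of the graph product: commutators of elements of
vertex groups attached to adjacent vertices. -/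
def graphProductRels {V : Type} (Γ : SimpleGraph V) (G : V → Type)
    [∀ v, Group (G v)] : Subgroup (Monoid.CoprodI G) :=
  Subgroup.normalClosure
    { x | ∃ (v w : V) (g : G v) (h : G w), Γ.Adj v w ∧
        x = Monoid.CoprodI.of g * Monoid.CoprodI.of h *
              (Monoid.CoprodI.of g)⁻¹ * (Monoid.CoprodI.of h)⁻¹ }

instance graphProductRels.normal {V : Type} (Γ : SimpleGraph V) (G : V → Type)
    [∀ v, Group (G v)] : (graphProductRels Γ G).Normal :=
  Subgroup.normalClosure_normal

/-- The graph product of the groups `G v` over the simple graph `Γ`. -/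
abbrev GraphProduct {V : Type} (Γ : SimpleGraph V) (G : V → Type)
    [∀ v, Group (G v)] : Type :=
  Monoid.CoprodI G ⧸ graphProductRels Γ G

/-- The subgroup `𝒢(Δ)` of the graph product generated by the images of the vertex
groups attached to the vertices in the set `S`. -/
def vertexSubgroup {V : Type} (Γ : SimpleGraph V) (G : V → Type)
    [∀ v, Group (G v)] (S : Set V) : Subgroup (GraphProduct Γ G) :=
  Subgroup.closure
    { x | ∃ v ∈ S, ∃ g : G v,
        x = (QuotientGroup.mk (Monoid.CoprodI.of g) : GraphProduct Γ G) }

/-- A set of vertices `S` is a join of two (nonempty) subgraphs if it can be split into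
two nonempty pieces every two vertices of which (one from each piece) are adjacent. -/
def IsJoinOfTwo {V : Type} (Γ : SimpleGraph V) (S : Set V) : Prop :=
  ∃ A B : Set V, A.Nonempty ∧ B.Nonempty ∧ Disjoint A B ∧ A ∪ B = S ∧
    ∀ a ∈ A, ∀ b ∈ B, Γ.Adj a b

/-- `P : Fin k → Set V` is a join decomposition of `Γ` into join-indecomposable pieces:
the pieces are nonempty, partition the vertices, any two vertices in distinct pieces are
adjacent, and no piece is itself a join of two nonempty subgraphs. -/
def IsJoinDecomposition {V : Type} (Γ : SimpleGraph V) {k : ℕ} (P : Fin k → Set V) : Prop :=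
  (∀ i, (P i).Nonempty) ∧ (∀ v : V, ∃! i, v ∈ P i) ∧
    (∀ i j, i ≠ j → ∀ a ∈ P i, ∀ b ∈ P j, Γ.Adj a b) ∧
    (∀ i, ¬ IsJoinOfTwo Γ (P i))

/-- A subgroup `N` of the graph product is full if for a join decomposition of `Γ` into
join-indecomposable pieces `Γ_1, …, Γ_k`, `N` intersects each `𝒢(Γ_i)` nontrivially. -/
def IsFullSubgroup {V : Type} (Γ : SimpleGraph V) (G : V → Type)
    [∀ v, Group (G v)] (N : Subgroup (GraphProduct Γ G)) : Prop :=
  ∀ (k : ℕ) (P : Fin k → Set V), IsJoinDecomposition Γ P →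
    ∀ i, N ⊓ vertexSubgroup Γ G (P i) ≠ ⊥

/-- A vertex is central if it is adjacent to every other vertex. -/
def IsCentralVertex {V : Type} (Γ : SimpleGraph V) (v : V) : Prop :=
  ∀ w : V, w ≠ v → Γ.Adj v w

/-- A group is abelian-by-finite if it has an abelian normal subgroup of finite index. -/
def AbelianByFinite (Q : Type) [Group Q] : Prop :=
  ∃ A : Subgroup Q, A.Normal ∧ A.FiniteIndex ∧ ∀ x y : A, x * y = y * x

/-- A group is finite-by-abelian if it has a finite normal subgroup with abelian quotient,
equivalently a finite normal subgroup containing all commutators. -/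
def FiniteByAbelian (Q : Type) [Group Q] : Prop :=
  ∃ F : Subgroup Q, F.Normal ∧ Finite F ∧ ∀ x y : Q, x * y * x⁻¹ * y⁻¹ ∈ F

namespace GPQ

open Monoid

/-! ### Normal forms in a free product of copies of one group -/

section FreeProduct

variable {Ω H : Type} [Group H]

/-- The free product of copies of `H` indexed by `Ω`. -/
abbrev FP (Ω H : Type) [Group H] : Type := CoprodI (fun _ : Ω => H)

/-- The inclusion of the copy with index `ω`. -/
abbrev inc (ω : Ω) : H →* FP Ω H := CoprodI.of (M := fun _ : Ω => H) (i := ω)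

/-- The product of a list of syllables. -/
def lp (l : List (Σ _ : Ω, H)) : FP Ω H := (l.map (fun p => inc p.1 p.2)).prod

@[simp] lemma lp_nil : lp ([] : List (Σ _ : Ω, H)) = 1 := rfl

@[simp] lemma lp_cons (p : Σ _ : Ω, H) (l) : lp (p :: l) = inc p.1 p.2 * lp l := by
  simp [lp]

@[simp] lemma lp_append (l m : List (Σ _ : Ω, H)) : lp (l ++ m) = lp l * lp m := by
  simp [lp]

/-- Reduced lists of syllables. -/
def Red (l : List (Σ _ : Ω, H)) : Prop :=
  (∀ p ∈ l, p.2 ≠ 1) ∧ l.IsChain (fun p q => p.1 ≠ q.1)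

open Classical in
/-- The normal form of an element of the free product. -/
noncomputable def nf (x : FP Ω H) : List (Σ _ : Ω, H) := (CoprodI.Word.equiv x).toList

lemma nf_red (x : FP Ω H) : Red (nf x) := by
  classical
  exact ⟨(CoprodI.Word.equiv x).ne_one, (CoprodI.Word.equiv x).chain_ne⟩

lemma lp_nf (x : FP Ω H) : lp (nf x) = x := by
  classical
  exact CoprodI.Word.equiv.symm_apply_apply x

lemma nf_lp {l : List (Σ _ : Ω, H)} (h : Red l) : nf (lp l) = l := by
  classical
  have := CoprodI.Word.equiv.apply_symm_apply (⟨l, h.1, h.2⟩ : CoprodI.Word (fun _ : Ω => H))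
  exact congrArg CoprodI.Word.toList this

lemma nf_eq {l : List (Σ _ : Ω, H)} {x : FP Ω H} (h : Red l) (hx : lp l = x) : nf x = l := by
  rw [← hx, nf_lp h]

lemma nf_injective : Function.Injective (nf : FP Ω H → _) := fun x y h => by
  rw [← lp_nf x, h, lp_nf]

@[simp] lemma nf_one : nf (1 : FP Ω H) = [] :=
  nf_eq ⟨by simp, by simp⟩ rfl

lemma nf_inc (ω : Ω) {h : H} (hh : h ≠ 1) : nf (inc ω h) = [⟨ω, h⟩] :=
  nf_eq ⟨by simpa using hh, by simp⟩ (by simp)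

lemma nf_eq_nil {x : FP Ω H} : nf x = [] ↔ x = 1 :=
  ⟨fun h => nf_injective (by simpa using h), fun h => by simp [h]⟩

/-- `x` starts with a syllable of index `ω`. -/
def SW (ω : Ω) (x : FP Ω H) : Prop := (nf x).head?.map Sigma.fst = some ω

lemma not_SW_one (ω : Ω) : ¬ SW ω (1 : FP Ω H) := by simp [SW]

lemma SW_inc {ω ω' : Ω} {h : H} (hs : SW ω' (inc ω h)) : ω = ω' := by
  by_cases hh : h = 1
  · subst hh; rw [map_one] at hs; exact absurd hs (not_SW_one _)
  · simpa [SW, nf_inc ω hh] using hs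

lemma SW_inc_mul {ω : Ω} {x : FP Ω H} {h : H} (hh : h ≠ 1) (hx : ¬ SW ω x) :
    SW ω (inc ω h * x) := by
  have : nf (inc ω h * x) = ⟨ω, h⟩ :: nf x := by
    refine nf_eq ⟨?_, ?_⟩ (by simp [lp_nf])
    · intro p hp
      rcases List.mem_cons.1 hp with rfl | hp
      · exact hh
      · exact (nf_red x).1 p hp
    · refine (nf_red x).2.cons ?_
      intro p hp he
      apply hx
      simp only [SW]
      rw [Option.mem_def] at hp
      simpa [hp] using he.symm
  simp [SW, this]

lemma lp_reverse_inv (l : List (Σ _ : Ω, H)) :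
    lp ((l.map (fun p => (⟨p.1, p.2⁻¹⟩ : Σ _ : Ω, H))).reverse) = (lp l)⁻¹ := by
  induction l with
  | nil => simp
  | cons p l ih => simp [ih]

lemma nf_inv (x : FP Ω H) :
    nf x⁻¹ = ((nf x).map (fun p => (⟨p.1, p.2⁻¹⟩ : Σ _ : Ω, H))).reverse := by
  refine nf_eq ⟨?_, ?_⟩ (by rw [lp_reverse_inv, lp_nf])
  · intro p hp
    simp only [List.mem_reverse, List.mem_map] at hp
    obtain ⟨q, hq, rfl⟩ := hp
    simpa using (nf_red x).1 q hq
  · rw [List.isChain_reverse, List.isChain_map]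
    exact (nf_red x).2.imp (fun a b h => h.symm)

/-- Syllable length. -/
noncomputable def len (x : FP Ω H) : ℕ := (nf x).length

lemma len_inv (x : FP Ω H) : len x⁻¹ = len x := by simp [len, nf_inv]

lemma nf_inv_mul {ω ω' : Ω} (hne : ω ≠ ω') {x y : FP Ω H} (hx : SW ω x) (hy : SW ω' y) :
    nf (x⁻¹ * y) = nf x⁻¹ ++ nf y := by
  refine nf_eq ⟨?_, ?_⟩ (by simp [lp_nf])
  · intro p hp
    rcases List.mem_append.1 hp with hp | hp
    · exact (nf_red _).1 p hp
    · exact (nf_red _).1 p hp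
  · refine List.IsChain.append (nf_red _).2 (nf_red _).2 ?_
    intro p hp q hq
    rw [nf_inv] at hp
    simp only [SW] at hx hy
    rw [Option.mem_def] at hp hq
    simp only [List.getLast?_reverse, List.head?_map] at hp
    rw [hq] at hy
    rw [Option.map_eq_some_iff] at hp hx
    obtain ⟨a, ha, rfl⟩ := hp
    obtain ⟨b, hb, rfl⟩ := hx
    rw [ha] at hb
    simp only [Option.map_some, Option.some.injEq] at hy hb
    subst hb hy
    exact hne

lemma len_inv_mul {ω ω' : Ω} (hne : ω ≠ ω') {x y : FP Ω H} (hx : SW ω x) (hy : SW ω' y) :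
    len (x⁻¹ * y) = len x + len y := by
  rw [len, nf_inv_mul hne hx hy, List.length_append]
  exact congrArg (· + _) (len_inv x)

lemma len_inc_mul_le (ω : Ω) (h : H) (x : FP Ω H) : len (inc ω h * x) ≤ len x + 1 := by
  by_cases hh : h = 1
  · subst hh; simp
  by_cases hx : SW ω x
  · rcases hn : nf x with _ | ⟨⟨ω', t⟩, l⟩
    · simp [SW, hn] at hx
    · have : ω' = ω := by simpa [SW, hn] using hx
      subst this
      have hr := nf_red x
      rw [hn] at hr
      have hxe : x = inc ω' t * lp l := by rw [← lp_nf x, hn]; simp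
      have hl : len x = l.length + 1 := by simp [len, hn]
      have hprod : inc ω' h * x = inc ω' (h * t) * lp l := by
        rw [hxe, map_mul, mul_assoc]
      have hlr : Red l := ⟨fun p hp => hr.1 p (List.mem_cons_of_mem _ hp), hr.2.tail⟩
      rw [hprod]
      by_cases ht : h * t = 1
      · rw [ht, map_one, one_mul, len, nf_lp hlr, hl]; omega
      · have : nf (inc ω' (h * t) * lp l) = ⟨ω', h * t⟩ :: l := by
          refine nf_eq ⟨?_, ?_⟩ (by simp)
          · intro p hp
            rcases List.mem_cons.1 hp with rfl | hp
            · exact ht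
            · exact hlr.1 p hp
          · have h3 := hr.2
            rw [List.isChain_cons] at h3 ⊢
            exact h3
        rw [len, this, hl]; simp
  · have : nf (inc ω h * x) = ⟨ω, h⟩ :: nf x := by
      refine nf_eq ⟨?_, ?_⟩ (by simp [lp_nf])
      · intro p hp
        rcases List.mem_cons.1 hp with rfl | hp
        · exact hh
        · exact (nf_red x).1 p hp
      · refine (nf_red x).2.cons ?_
        intro p hp he
        apply hx
        simp only [SW]
        rw [Option.mem_def] at hp
        simpa [hp] using he.symm
    simp [len, this]

lemma len_lp_le (l : List (Σ _ : Ω, H)) : len (lp l) ≤ l.length := by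
  induction l with
  | nil => simp [len]
  | cons p l ih =>
    rw [lp_cons]
    have := len_inc_mul_le p.1 p.2 (lp l)
    simp only [List.length_cons]; omega

/-- If the lengths add up then the normal forms concatenate. -/
lemma nf_mul_of_len {a b : FP Ω H} (h : len (a * b) = len a + len b) :
    nf (a * b) = nf a ++ nf b := by
  by_cases hc : ∀ p ∈ (nf a).getLast?, ∀ q ∈ (nf b).head?, p.1 ≠ q.1
  · refine nf_eq ⟨?_, List.IsChain.append (nf_red _).2 (nf_red _).2 hc⟩ (by simp [lp_nf])
    intro p hp
    rcases List.mem_append.1 hp with hp | hp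
    · exact (nf_red _).1 p hp
    · exact (nf_red _).1 p hp
  · exfalso
    push Not at hc
    obtain ⟨p, hp, q, hq, hpq⟩ := hc
    obtain ⟨l, hl⟩ : ∃ l, nf a = l ++ [p] := by
      exact List.mem_getLast?_eq_getLast hp |>.elim (fun h1 h2 =>
        ⟨(nf a).dropLast, by rw [h2]; exact (List.dropLast_append_getLast h1).symm⟩)
    obtain ⟨m, hm⟩ : ∃ m, nf b = q :: m := by
      rcases hb : nf b with _ | ⟨c, m⟩
      · simp [hb] at hq
      · simp [hb] at hq; exact ⟨m, by rw [hq]⟩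
    obtain ⟨ω, s⟩ := p
    obtain ⟨ω', t⟩ := q
    simp only at hpq
    subst hpq
    have : a * b = lp (l ++ ⟨ω, s * t⟩ :: m) := by
      rw [← lp_nf a, ← lp_nf b, hl, hm]
      simp [mul_assoc]
    have h2 := len_lp_le (l ++ ⟨ω, s * t⟩ :: m)
    rw [← this, h] at h2
    simp only [len, hl, hm, List.length_append, List.length_cons, List.length_nil] at h2
    omega

lemma unique_midpoint {p q m : FP Ω H} (h0 : len (p⁻¹ * q) = len p + len q)
    (h1 : len (p⁻¹ * m) = len p) (h2 : len (m⁻¹ * q) = len q) : m = 1 := by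
  have e1 : nf (p⁻¹ * q) = nf p⁻¹ ++ nf q := nf_mul_of_len (by rw [h0, len_inv])
  have e2 : nf (p⁻¹ * q) = nf (p⁻¹ * m) ++ nf (m⁻¹ * q) := by
    have : (p⁻¹ * m) * (m⁻¹ * q) = p⁻¹ * q := by group
    rw [← this]
    exact nf_mul_of_len (by rw [this, h0, h1, h2])
  rw [e1] at e2
  have := (List.append_inj e2 (by change len _ = len _; rw [len_inv, h1])).1
  simpa using nf_injective this

/-- Walls separating `x` and `x * s` for a syllable `s`. -/
lemma SW_mul_inc {ω ω' : Ω} {x : FP Ω H} {s : H} (hx : x ≠ 1) (hxs : x * inc ω' s ≠ 1) :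
    SW ω (x * inc ω' s) ↔ SW ω x := by
  by_cases hs : s = 1
  · subst hs; simp
  have hr := nf_red x
  rcases List.eq_nil_or_concat (nf x) with h | ⟨l, ⟨τ, t⟩, hl⟩
  · exact absurd (nf_eq_nil.1 h) hx
  rw [List.concat_eq_append] at hl
  have hxe : x = lp l * inc τ t := by rw [← lp_nf x, hl]; simp
  rw [hl] at hr
  by_cases hτ : τ = ω'
  · subst hτ
    have hprod : x * inc τ s = lp l * inc τ (t * s) := by rw [hxe, map_mul, mul_assoc]
    have hlr : Red l := ⟨fun p hp => hr.1 p (by simp [hp]), hr.2.left_of_append⟩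
    by_cases hts : t * s = 1
    · have e : nf (x * inc τ s) = l := nf_eq hlr (by rw [hprod, hts]; simp)
      have hne : l ≠ [] := by
        rintro rfl
        exact hxs (nf_eq_nil.1 e)
      simp only [SW, e, hl]
      rcases l with _ | ⟨c, l⟩
      · exact absurd rfl hne
      · simp
    · have e : nf (x * inc τ s) = l ++ [⟨τ, t * s⟩] := by
        refine nf_eq ⟨?_, ?_⟩ (by rw [hprod]; simp)
        · intro p hp
          rcases List.mem_append.1 hp with hp | hp
          · exact hlr.1 p hp
          · simp only [List.mem_singleton] at hp
            subst hp; exact hts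
        · have := hr.2
          rw [List.isChain_append] at this ⊢
          refine ⟨this.1, by simp, ?_⟩
          have h3 := this.2.2
          simp only [List.head?_cons, Option.mem_def, Option.some.injEq, forall_eq'] at h3 ⊢
          exact h3
      simp only [SW, e, hl]
      rcases l with _ | ⟨c, l⟩ <;> simp
  · have e : nf (x * inc ω' s) = l ++ [⟨τ, t⟩] ++ [⟨ω', s⟩] := by
      refine nf_eq ⟨?_, ?_⟩ (by rw [hxe]; simp [mul_assoc])
      · intro p hp
        rcases List.mem_append.1 hp with hp | hp
        · exact hr.1 p hp
        · simp only [List.mem_singleton] at hp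
          subst hp; exact hs
      · rw [List.isChain_append]
        exact ⟨hr.2, by simp, by simp [hτ]⟩
    simp only [SW, e, hl]
    rcases l with _ | ⟨c, l⟩ <;> simp

/-- The walls separating `1` from `x`. -/
def Sep (x : FP Ω H) : Set (FP Ω H × Ω) :=
  {w | ¬ (SW w.2 (w.1⁻¹) ↔ SW w.2 (w.1⁻¹ * x))}

lemma Sep_finite (x : FP Ω H) : (Sep x).Finite := by
  induction x using CoprodI.induction_on with
  | one => convert Set.finite_empty; ext w; simp [Sep]
  | of ω s =>
    refine (Set.toFinite ({(1, ω), (inc ω s, ω)} : Set (FP Ω H × Ω))).subset ?_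
    rintro ⟨k, τ⟩ hw
    have hw' : ¬ (SW τ k⁻¹ ↔ SW τ (k⁻¹ * inc ω s)) := hw
    by_cases h1 : k⁻¹ = 1
    · have hk : k = 1 := by simpa using h1
      subst hk
      rw [inv_one, one_mul] at hw'
      have : SW τ (inc ω s) := by
        by_contra hc
        exact hw' ⟨fun h => absurd h (not_SW_one _), fun h => absurd h hc⟩
      left
      rw [SW_inc this]
    by_cases h2 : k⁻¹ * inc ω s = 1
    · have hk : k = inc ω s := by
        rw [inv_mul_eq_one] at h2; exact h2
      rw [h2, hk, ← map_inv] at hw'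
      have : SW τ (inc ω s⁻¹) := by
        by_contra hc
        exact hw' ⟨fun h => absurd h hc, fun h => absurd h (not_SW_one _)⟩
      right
      rw [hk, SW_inc this]
      rfl
    · exact absurd (SW_mul_inc h1 h2).symm hw'
  | mul x y hx hy =>
    have hfin : ((fun w : FP Ω H × Ω => (x * w.1, w.2)) '' Sep y).Finite := hy.image _
    refine (hx.union hfin).subset ?_
    rintro ⟨k, τ⟩ hw
    by_cases h : (k, τ) ∈ Sep x
    · exact Or.inl h
    · right
      refine ⟨(x⁻¹ * k, τ), ?_, by simp⟩
      simp only [Sep, Set.mem_ofPred_eq, not_not] at h hw ⊢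
      rw [h] at hw
      simpa [mul_assoc] using hw

/-! The action of a group permuting the index set. -/

variable {A : Type} [Group A] [MulAction A Ω]

/-- The endomorphism of the free product given by permuting the copies. -/
def permHom (a : A) : FP Ω H →* FP Ω H := CoprodI.lift (fun ω => inc (a • ω))

@[simp] lemma permHom_inc (a : A) (ω : Ω) (h : H) :
    permHom a (inc ω h) = inc (a • ω) h := CoprodI.lift_of _ _

lemma permHom_mul (a b : A) (x : FP Ω H) : permHom (a * b) x = permHom a (permHom b x) := by
  induction x using CoprodI.induction_on with
  | one => simp
  | of ω s =>
    change permHom (a * b) (inc ω s) = permHom a (permHom b (inc ω s))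
    rw [permHom_inc, permHom_inc, permHom_inc, mul_smul]
  | mul x y hx hy => simp [hx, hy]

lemma permHom_one (x : FP Ω H) : permHom (1 : A) x = x := by
  induction x using CoprodI.induction_on with
  | one => simp
  | of ω s =>
    change permHom (1 : A) (inc ω s) = inc ω s
    rw [permHom_inc, one_smul]
  | mul x y hx hy => simp [hx, hy]

/-- The permutation action as a homomorphism to the automorphism group. -/
def permAut : A →* MulAut (FP Ω H) where
  toFun a :=
    { toFun := permHom a
      invFun := permHom a⁻¹
      left_inv := fun x => by rw [← permHom_mul, inv_mul_cancel, permHom_one]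
      right_inv := fun x => by rw [← permHom_mul, mul_inv_cancel, permHom_one]
      map_mul' := map_mul _ }
  map_one' := by ext x; exact permHom_one x
  map_mul' a b := by ext x; exact permHom_mul a b x

lemma permAut_apply (a : A) (x : FP Ω H) : permAut a x = permHom a x := rfl

@[simp] lemma permAut_inc (a : A) (ω : Ω) (h : H) :
    permAut a (inc ω h) = inc (a • ω) h := permHom_inc a ω h

lemma permAut_lp (a : A) (l : List (Σ _ : Ω, H)) :
    permAut a (lp l) = lp (l.map (fun p => (⟨a • p.1, p.2⟩ : Σ _ : Ω, H))) := by
  induction l with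
  | nil => simp
  | cons p l ih => simp [ih]

lemma nf_permAut (a : A) (x : FP Ω H) :
    nf (permAut a x) = (nf x).map (fun p => (⟨a • p.1, p.2⟩ : Σ _ : Ω, H)) := by
  refine nf_eq ⟨?_, ?_⟩ (by rw [← permAut_lp, lp_nf])
  · intro p hp
    obtain ⟨q, hq, rfl⟩ := List.mem_map.1 hp
    exact (nf_red x).1 q hq
  · rw [List.isChain_map]
    exact (nf_red x).2.imp (fun p q h h' => h (MulAction.injective a h'))

lemma len_permAut (a : A) (x : FP Ω H) : len (permAut a x) = len x := by
  simp [len, nf_permAut]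

lemma SW_permAut (a : A) (ω : Ω) (x : FP Ω H) : SW (a • ω) (permAut a x) ↔ SW ω x := by
  simp only [SW, nf_permAut]
  rcases nf x with _ | ⟨p, l⟩
  · simp
  · simp

end FreeProduct

/-! ### The finite index theorem -/

section Affine

variable {Ω H A : Type} [Group H] [Group A] [MulAction A Ω]

/-- The semidirect product of the free product with the permuting group. -/
abbrev SP (Ω H A : Type) [Group H] [Group A] [MulAction A Ω] : Type :=
  SemidirectProduct (FP Ω H) A permAut

/-- The affine action of the semidirect product on the free product. -/
def act (g : SP Ω H A) (x : FP Ω H) : FP Ω H := g.left * permAut g.right x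

lemma act_mul (g h : SP Ω H A) (x : FP Ω H) : act (g * h) x = act g (act h x) := by
  simp [act, mul_assoc]

lemma act_one (x : FP Ω H) : act (1 : SP Ω H A) x = x := by simp [act]

lemma act_at_one (g : SP Ω H A) : act g 1 = g.left := by simp [act]

lemma len_act (g : SP Ω H A) (x y : FP Ω H) :
    len ((act g x)⁻¹ * act g y) = len (x⁻¹ * y) := by
  have : (act g x)⁻¹ * act g y = permAut g.right (x⁻¹ * y) := by
    simp [act, mul_assoc]
  rw [this, len_permAut]

lemma act_inv (g : SP Ω H A) (x : FP Ω H) :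
    act g⁻¹ x = permAut g.right⁻¹ (g.left⁻¹ * x) := by
  simp [act]

lemma SW_act_inv (g : SP Ω H A) (ω : Ω) (x : FP Ω H) :
    SW ω (act g⁻¹ x) ↔ SW (g.right • ω) (g.left⁻¹ * x) := by
  rw [act_inv]
  conv_lhs => rw [← inv_smul_smul g.right ω]
  exact SW_permAut _ _ _

variable {P : Type} [Group P] (Φ : P →* SP Ω H A) (N : Subgroup P) [N.Normal] (ω₀ : Ω)

/-- An orbit contained in a half space forces `N` to fix the base point. -/
lemma fix_of_subset (a : P) (a' : A) (ha : Φ a = SemidirectProduct.inr a') (hne : a' • ω₀ ≠ ω₀)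
    (p : FP Ω H) (hp : ∀ n ∈ N, SW ω₀ (act (Φ n) p)) : ∀ n ∈ N, (Φ n).left = 1 := by
  have hq : ∀ n ∈ N, SW (a' • ω₀) (act (Φ n) (act (Φ a) p)) := by
    intro n hn
    have h1 : a⁻¹ * n * a ∈ N := by
      simpa using ‹N.Normal›.conj_mem n hn a⁻¹
    have h2 : act (Φ n) (act (Φ a) p) = permAut a' (act (Φ (a⁻¹ * n * a)) p) := by
      have : permAut a' (act (Φ (a⁻¹ * n * a)) p) = act (Φ a) (act (Φ (a⁻¹ * n * a)) p) := by
        rw [ha]; simp [act]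
      rw [this, ← act_mul, ← act_mul, ← map_mul, ← map_mul]
      congr 2; group
    rw [h2, SW_permAut]
    exact hp _ h1
  have hmin : ∀ q : FP Ω H, ∃ n₀ ∈ N, ∀ n ∈ N, len (act (Φ n₀) q) ≤ len (act (Φ n) q) := by
    intro q
    have hw := (measure (fun n : N => len (act (Φ n) q))).wf
    obtain ⟨⟨n₀, h₀⟩, -, hm⟩ := hw.has_min Set.univ ⟨1, trivial⟩
    exact ⟨n₀, h₀, fun n hn => not_lt.1 (hm ⟨n, hn⟩ trivial)⟩
  obtain ⟨n₀, hn₀, hm₀⟩ := hmin p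
  obtain ⟨n₁, hn₁, hm₁⟩ := hmin (act (Φ a) p)
  set p₀ := act (Φ n₀) p with hp₀
  set q₀ := act (Φ n₁) (act (Φ a) p) with hq₀
  have Hp : ∀ n ∈ N, SW ω₀ (act (Φ n) p₀) ∧ len p₀ ≤ len (act (Φ n) p₀) := by
    intro n hn
    rw [hp₀, ← act_mul, ← map_mul]
    exact ⟨hp _ (N.mul_mem hn hn₀), hm₀ _ (N.mul_mem hn hn₀)⟩
  have Hq : ∀ n ∈ N, SW (a' • ω₀) (act (Φ n) q₀) ∧ len q₀ ≤ len (act (Φ n) q₀) := by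
    intro n hn
    rw [hq₀, ← act_mul, ← map_mul]
    exact ⟨hq _ (N.mul_mem hn hn₁), hm₁ _ (N.mul_mem hn hn₁)⟩
  have hadd : len (p₀⁻¹ * q₀) = len p₀ + len q₀ := by
    have h1 := (Hp 1 N.one_mem).1
    have h2 := (Hq 1 N.one_mem).1
    rw [map_one, act_one] at h1 h2
    exact len_inv_mul hne.symm h1 h2
  have key : ∀ n ∈ N, (Φ n⁻¹).left = 1 := by
    intro n hn
    have h1 := len_inv_mul hne.symm (Hp n hn).1 (Hq n hn).1
    rw [len_act, hadd] at h1
    have h2 := (Hp n hn).2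
    have h3 := (Hq n hn).2
    have hfix : act (Φ n) (Φ n⁻¹).left = 1 := by
      rw [← act_at_one, ← act_mul, ← map_mul]; simp [act_one]
    refine unique_midpoint hadd ?_ ?_
    · rw [← len_act (Φ n), hfix, mul_one, len_inv]; omega
    · rw [← len_act (Φ n), hfix, inv_one, one_mul]; omega
  intro n hn
  simpa using key n⁻¹ (N.inv_mem hn)

theorem finiteIndex_sup (hfg : N.FG) (C : Subgroup P)
    (h1 : ∃ a a', Φ a = SemidirectProduct.inr a' ∧ a' • ω₀ ≠ ω₀)
    (h2 : ∃ s s', Φ s = SemidirectProduct.inl (inc ω₀ s') ∧ s' ≠ 1)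
    (h3 : ∀ g, (Φ g).left = 1 → (Φ g).right • ω₀ = ω₀ → g ∈ C)
    (h4 : ∃ n ∈ N, (Φ n).left ≠ 1) : (N ⊔ C).FiniteIndex := by
  obtain ⟨a, a', ha, hne⟩ := h1
  obtain ⟨s, s', hs, hs'⟩ := h2
  have notsub : ∀ p : FP Ω H, ∃ n ∈ N, ¬ SW ω₀ (act (Φ n) p) := by
    intro p
    by_contra hc
    push Not at hc
    obtain ⟨n, hn, hn'⟩ := h4
    exact hn' (fix_of_subset Φ N ω₀ a a' ha hne p hc n hn)
  have meets : ∀ p : FP Ω H, ∃ n ∈ N, SW ω₀ (act (Φ n) p) := by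
    intro p
    by_contra hc
    push Not at hc
    obtain ⟨n, hn, hn'⟩ := notsub (act (Φ s) p)
    apply hn'
    have h1 : s⁻¹ * n * s ∈ N := by
      simpa using ‹N.Normal›.conj_mem n hn s⁻¹
    have h2 : act (Φ n) (act (Φ s) p) = inc ω₀ s' * (act (Φ (s⁻¹ * n * s)) p) := by
      have : inc ω₀ s' * (act (Φ (s⁻¹ * n * s)) p) = act (Φ s) (act (Φ (s⁻¹ * n * s)) p) := by
        rw [hs]; simp [act]
      rw [this, ← act_mul, ← act_mul, ← map_mul, ← map_mul]
      congr 2; group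
    rw [h2]
    exact SW_inc_mul hs' (hc _ h1)
  -- finitely many walls
  obtain ⟨S, hS⟩ := hfg
  let wall : P → FP Ω H × Ω := fun g => ((Φ g).left, (Φ g).right • ω₀)
  let T : Set (FP Ω H × Ω) := ⋃ n ∈ (S : Set P), Sep (Φ n).left
  have hT : T.Finite := S.finite_toSet.biUnion (fun n _ => Sep_finite _)
  have hsep : ∀ n ∈ N, ∀ g : P,
      ¬ (SW ω₀ (act (Φ g⁻¹) 1) ↔ SW ω₀ (act (Φ (g⁻¹ * n)) 1)) → ∃ m ∈ N, wall (m * g) ∈ T := by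
    intro n hn
    have hn' : n ∈ Subgroup.closure (S : Set P) := hS ▸ hn
    induction hn' using Subgroup.closure_induction with
    | mem n hnS =>
      intro g hg
      refine ⟨1, N.one_mem, ?_⟩
      rw [one_mul]
      refine Set.mem_biUnion hnS ?_
      rw [map_mul, act_mul, map_inv, SW_act_inv, SW_act_inv, act_at_one, mul_one] at hg
      exact hg
    | one => intro g hg; simp at hg
    | mul n m hn1 hm1 ihn ihm =>
      have hnN : n ∈ N := hS ▸ hn1
      have hmN : m ∈ N := hS ▸ hm1
      intro g hg
      by_cases hg1 : SW ω₀ (act (Φ g⁻¹) 1) ↔ SW ω₀ (act (Φ (g⁻¹ * n)) 1)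
      · obtain ⟨k, hk, hk'⟩ := ihm hmN (n⁻¹ * g) (by
          rw [hg1] at hg
          simpa [mul_assoc] using hg)
        exact ⟨k * n⁻¹, N.mul_mem hk (N.inv_mem hnN), by simpa [mul_assoc] using hk'⟩
      · exact ihn hnN g hg1
    | inv n hn1 ih =>
      have hnN : n ∈ N := hS ▸ hn1
      intro g hg
      obtain ⟨k, hk, hk'⟩ := ih hnN (n * g) (by
        intro h
        apply hg
        rw [mul_inv_rev, inv_mul_cancel_right] at h
        exact h.symm)
      exact ⟨k * n, N.mul_mem hk hnN, by simpa [mul_assoc] using hk'⟩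
  have hall : ∀ g : P, ∃ m ∈ N, wall (m * g) ∈ T := by
    intro g
    have conv : ∀ n, act (Φ n) (act (Φ g⁻¹) 1) = act (Φ (g⁻¹ * (g * n * g⁻¹))) 1 := by
      intro n
      rw [← act_mul, ← map_mul]; congr 2; group
    obtain ⟨n, hn, hn'⟩ := meets (act (Φ g⁻¹) 1)
    obtain ⟨m, hm, hm'⟩ := notsub (act (Φ g⁻¹) 1)
    rw [conv] at hn' hm'
    by_cases h : SW ω₀ (act (Φ g⁻¹) 1)
    · exact hsep _ (‹N.Normal›.conj_mem m hm g) g (fun h' => hm' (h'.1 h))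
    · exact hsep _ (‹N.Normal›.conj_mem n hn g) g (fun h' => h (h'.2 hn'))
  choose m hmN hmT using hall
  have hwall : ∀ x y : P, wall x = wall y → x⁻¹ * y ∈ C := by
    intro x y h
    have hl : (Φ x).left = (Φ y).left := congrArg Prod.fst h
    have hr : (Φ x).right • ω₀ = (Φ y).right • ω₀ := congrArg Prod.snd h
    apply h3
    · rw [map_mul, map_inv, ← act_at_one, act_mul, act_at_one, act_inv, hl]; simp
    · rw [map_mul, map_inv]
      simp only [SemidirectProduct.mul_right, SemidirectProduct.inv_right, mul_smul]
      rw [← hr, inv_smul_smul]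
  have : Finite T := hT
  have hfin : Finite (P ⧸ (N ⊔ C)) := by
    refine Finite.of_injective
      (fun q : P ⧸ (N ⊔ C) => (⟨wall (m q.out * q.out), hmT q.out⟩ : T)) ?_
    intro q r hqr
    have hw : wall (m q.out * q.out) = wall (m r.out * r.out) := congrArg Subtype.val hqr
    have hC := hwall _ _ hw
    rw [← QuotientGroup.out_eq' q, ← QuotientGroup.out_eq' r, QuotientGroup.eq]
    set x := q.out
    set y := r.out
    have e : x⁻¹ * y = (x⁻¹ * (m x) * x) * ((m x * x)⁻¹ * (m y * y)) * (y⁻¹ * (m y)⁻¹ * y) := by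
      group
    rw [e]
    have c1 : x⁻¹ * (m x) * x ∈ N := by simpa using ‹N.Normal›.conj_mem _ (hmN x) x⁻¹
    have c2 : y⁻¹ * (m y)⁻¹ * y ∈ N := by
      simpa using ‹N.Normal›.conj_mem _ (N.inv_mem (hmN y)) y⁻¹
    exact Subgroup.mul_mem _ (Subgroup.mul_mem _ (Subgroup.mem_sup_left c1)
      (Subgroup.mem_sup_right hC)) (Subgroup.mem_sup_left c2)
  exact Subgroup.finiteIndex_of_finite_quotient

end Affine

/-! ### Graph products -/

section Graph

variable {V : Type} (Γ : SimpleGraph V) (G : V → Type) [∀ v, Group (G v)]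

/-- The vertex group inclusion. -/
def vi (v : V) : G v →* GraphProduct Γ G :=
  (QuotientGroup.mk' (graphProductRels Γ G)).comp CoprodI.of

lemma vi_comm {v w : V} (h : Γ.Adj v w) (g : G v) (k : G w) :
    vi Γ G v g * vi Γ G w k = vi Γ G w k * vi Γ G v g := by
  have : (CoprodI.of g * CoprodI.of k * (CoprodI.of g)⁻¹ * (CoprodI.of k)⁻¹ : CoprodI G)
      ∈ graphProductRels Γ G :=
    Subgroup.subset_normalClosure ⟨v, w, g, k, h, rfl⟩
  have h2 := (QuotientGroup.eq_one_iff _).2 this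
  have h3 : vi Γ G v g * vi Γ G w k * (vi Γ G v g)⁻¹ * (vi Γ G w k)⁻¹ = 1 := h2
  rw [mul_inv_eq_one, mul_inv_eq_iff_eq_mul] at h3
  exact h3

variable {Γ G}

/-- The universal property of graph products. -/
def gpLift {M : Type} [Group M] (f : ∀ v, G v →* M)
    (hf : ∀ v w, Γ.Adj v w → ∀ g k, f v g * f w k = f w k * f v g) : GraphProduct Γ G →* M :=
  QuotientGroup.lift (graphProductRels Γ G) (CoprodI.lift f) (by
    have : graphProductRels Γ G ≤ (CoprodI.lift f).ker := by
      refine Subgroup.normalClosure_le_normal ?_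
      rintro x ⟨v, w, g, k, h, rfl⟩
      simp only [SetLike.mem_coe, MonoidHom.mem_ker, map_mul, map_inv, CoprodI.lift_of]
      rw [hf v w h]
      group
    exact this)

@[simp] lemma gpLift_vi {M : Type} [Group M] (f : ∀ v, G v →* M)
    (hf : ∀ v w, Γ.Adj v w → ∀ g k, f v g * f w k = f w k * f v g) (v : V) (g : G v) :
    gpLift f hf (vi Γ G v g) = f v g := by
  simp only [gpLift, vi, MonoidHom.comp_apply]
  exact CoprodI.lift_of f g

lemma gp_hom_ext {M : Type} [Group M] {f f' : GraphProduct Γ G →* M}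
    (h : ∀ v g, f (vi Γ G v g) = f' (vi Γ G v g)) : f = f' := by
  apply QuotientGroup.monoidHom_ext
  apply CoprodI.ext_hom
  intro v
  ext g
  exact h v g

lemma vi_mem {S : Set V} {v : V} (hv : v ∈ S) (g : G v) : vi Γ G v g ∈ vertexSubgroup Γ G S :=
  Subgroup.subset_closure ⟨v, hv, g, rfl⟩

lemma vs_induction {S : Set V} {D : Subgroup (GraphProduct Γ G)}
    (h : ∀ v ∈ S, ∀ g : G v, vi Γ G v g ∈ D) : vertexSubgroup Γ G S ≤ D := by
  refine (Subgroup.closure_le D).2 ?_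
  rintro x ⟨v, hv, g, rfl⟩
  exact h v hv g

lemma vs_univ : vertexSubgroup Γ G Set.univ = ⊤ := by
  rw [eq_top_iff]
  rintro x -
  obtain ⟨x, rfl⟩ := QuotientGroup.mk_surjective x
  induction x using CoprodI.induction_on with
  | one => exact Subgroup.one_mem _
  | of v g => exact vi_mem (Set.mem_univ v) g
  | mul x y hx hy => exact Subgroup.mul_mem _ hx hy

open Classical in
variable (Γ G) in
/-- The retraction killing the vertices outside `S`. -/
noncomputable def retr (S : Set V) : GraphProduct Γ G →* GraphProduct Γ G :=
  gpLift (fun v => if v ∈ S then vi Γ G v else 1) (by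
    intro v w h g k
    by_cases hv : v ∈ S <;> by_cases hw : w ∈ S <;> simp [hv, hw, vi_comm Γ G h])

lemma retr_vi_mem {S : Set V} {v : V} (hv : v ∈ S) (g : G v) :
    retr Γ G S (vi Γ G v g) = vi Γ G v g := by simp [retr, hv]

lemma retr_vi_not_mem {S : Set V} {v : V} (hv : v ∉ S) (g : G v) :
    retr Γ G S (vi Γ G v g) = 1 := by simp [retr, hv]

lemma retr_fix {S : Set V} {x : GraphProduct Γ G} (hx : x ∈ vertexSubgroup Γ G S) :
    retr Γ G S x = x := by
  have : vertexSubgroup Γ G S ≤ (retr Γ G S).eqLocus (MonoidHom.id _) :=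
    vs_induction (fun v hv g => retr_vi_mem hv g)
  exact this hx

lemma vs_mono {S T : Set V} (h : S ⊆ T) : vertexSubgroup Γ G S ≤ vertexSubgroup Γ G T :=
  vs_induction (fun _ hv g => vi_mem (h hv) g)

lemma retr_retr (S T : Set V) (x : GraphProduct Γ G) :
    retr Γ G S (retr Γ G T x) = retr Γ G (S ∩ T) x := by
  have : (retr Γ G S).comp (retr Γ G T) = retr Γ G (S ∩ T) := by
    apply gp_hom_ext
    intro v g
    rw [MonoidHom.comp_apply]
    by_cases hT : v ∈ T
    · rw [retr_vi_mem hT]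
      by_cases hS : v ∈ S
      · rw [retr_vi_mem hS, retr_vi_mem (S := S ∩ T) ⟨hS, hT⟩]
      · rw [retr_vi_not_mem hS, retr_vi_not_mem (S := S ∩ T) (fun h => hS h.1)]
    · rw [retr_vi_not_mem hT, map_one, retr_vi_not_mem (S := S ∩ T) (fun h => hT h.2)]
  exact DFunLike.congr_fun this x

lemma retr_empty (x : GraphProduct Γ G) : retr Γ G ∅ x = 1 := by
  have : retr Γ G ∅ = 1 := gp_hom_ext (fun v g => retr_vi_not_mem (by simp) g)
  rw [this]; rfl

/-! The semidirect product decomposition at a vertex. -/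

variable (Γ G) in
/-- The subgroup of the link of a vertex. -/
abbrev lkS (v : V) : Subgroup (GraphProduct Γ G) := vertexSubgroup Γ G {w | Γ.Adj v w}

lemma lkS_comm {v : V} {c : GraphProduct Γ G} (hc : c ∈ lkS Γ G v) (s : G v) :
    c * vi Γ G v s = vi Γ G v s * c := by
  have : lkS Γ G v ≤ Subgroup.centralizer {vi Γ G v s} := by
    refine vs_induction ?_
    intro w hw g
    rw [Subgroup.mem_centralizer_singleton_iff]
    exact (vi_comm Γ G hw s g).symm
  exact Subgroup.mem_centralizer_singleton_iff.1 (this hc)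

variable (Γ G) in
/-- The index set of the free product decomposition. -/
abbrev Om (v : V) : Type := GraphProduct Γ G ⧸ lkS Γ G v

variable (Γ G) in
/-- The base point. -/
abbrev om0 (v : V) : Om Γ G v := ((1 : GraphProduct Γ G) : Om Γ G v)

variable (Γ G) in
/-- The ambient semidirect product. -/
abbrev SPv (v : V) : Type := SP (Om Γ G v) (G v) (GraphProduct Γ G)

open Classical in
variable (Γ G) in
/-- The vertex components of the map to the semidirect product. -/
noncomputable def phiv (v w : V) : G w →* SPv Γ G v :=
  if h : w = v then
    (SemidirectProduct.inl.comp (inc (om0 Γ G v))).comp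
      (MulEquiv.cast (M := G) h).toMonoidHom
  else SemidirectProduct.inr.comp (vi Γ G w)

lemma phiv_same (v : V) (s : G v) :
    phiv Γ G v v s = SemidirectProduct.inl (inc (om0 Γ G v) s) := by
  simp [phiv]

lemma phiv_ne {v w : V} (h : w ≠ v) (s : G w) :
    phiv Γ G v w s = SemidirectProduct.inr (vi Γ G w s) := by
  simp [phiv, h]

lemma phiv_comm_aux {v w : V} (h : Γ.Adj v w) (s : G v) (k : G w) :
    phiv Γ G v v s * phiv Γ G v w k = phiv Γ G v w k * phiv Γ G v v s := by
  rw [phiv_same, phiv_ne h.ne']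
  have hk : vi Γ G w k • om0 Γ G v = om0 Γ G v := by
    change ((vi Γ G w k * 1 : GraphProduct Γ G) : Om Γ G v) = _
    rw [mul_one]
    exact ((QuotientGroup.eq (s := lkS Γ G v)).2 (by
      rw [inv_one, one_mul]; exact vi_mem (by exact h) k)).symm
  have := SemidirectProduct.inl_aut (φ := permAut (Ω := Om Γ G v) (H := G v))
    (vi Γ G w k) (inc (om0 Γ G v) s)
  rw [permAut_inc, hk] at this
  conv_lhs => rw [this]
  simp [mul_assoc]

variable (Γ G) in
/-- The map to the semidirect product. -/
noncomputable def Phi (v : V) : GraphProduct Γ G →* SPv Γ G v :=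
  gpLift (phiv Γ G v) (by
    intro w w' h g k
    by_cases hw : w = v
    · subst hw
      exact phiv_comm_aux h g k
    · by_cases hw' : w' = v
      · subst hw'
        exact (phiv_comm_aux h.symm k g).symm
      · rw [phiv_ne hw, phiv_ne hw', ← map_mul, ← map_mul, vi_comm Γ G h])

lemma Phi_same (v : V) (s : G v) :
    Phi Γ G v (vi Γ G v s) = SemidirectProduct.inl (inc (om0 Γ G v) s) := by
  rw [Phi, gpLift_vi, phiv_same]

lemma Phi_ne {v w : V} (h : w ≠ v) (s : G w) :
    Phi Γ G v (vi Γ G w s) = SemidirectProduct.inr (vi Γ G w s) := by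
  rw [Phi, gpLift_vi, phiv_ne h]

lemma vi_injective (v : V) : Function.Injective (vi Γ G v) := by
  intro s t h
  have := congrArg (Phi Γ G v) h
  rw [Phi_same, Phi_same] at this
  exact CoprodI.of_injective (M := fun _ : Om Γ G v => G v) _ (SemidirectProduct.inl_injective this)

lemma Phi_right (v : V) (x : GraphProduct Γ G) :
    (Phi Γ G v x).right = retr Γ G {v}ᶜ x := by
  have : (SemidirectProduct.rightHom).comp (Phi Γ G v) = retr Γ G {v}ᶜ := by
    apply gp_hom_ext
    intro w g
    rw [MonoidHom.comp_apply]
    by_cases hw : w = v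
    · subst hw
      rw [Phi_same, retr_vi_not_mem (by simp)]; simp
    · rw [Phi_ne hw, retr_vi_mem (by simpa using hw)]; simp
  exact DFunLike.congr_fun this x

lemma Phi_retr (v : V) (x : GraphProduct Γ G) :
    Phi Γ G v (retr Γ G {v}ᶜ x) = SemidirectProduct.inr (retr Γ G {v}ᶜ x) := by
  have : (Phi Γ G v).comp (retr Γ G {v}ᶜ) = SemidirectProduct.inr.comp (retr Γ G {v}ᶜ) := by
    apply gp_hom_ext
    intro w g
    rw [MonoidHom.comp_apply, MonoidHom.comp_apply]
    by_cases hw : w = v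
    · subst hw
      rw [retr_vi_not_mem (by simp)]; simp
    · rw [retr_vi_mem (by simpa using hw), Phi_ne hw]
  exact DFunLike.congr_fun this x

variable (Γ G) in
/-- The free product part of the inverse map. -/
noncomputable def psi (v : V) : FP (Om Γ G v) (G v) →* GraphProduct Γ G :=
  CoprodI.lift (fun ω => (MulAut.conj (Quotient.out ω)).toMonoidHom.comp (vi Γ G v))

lemma psi_inc (v : V) (a : GraphProduct Γ G) (s : G v) :
    psi Γ G v (inc (a : Om Γ G v) s) = a * vi Γ G v s * a⁻¹ := by
  have h1 : psi Γ G v (inc (a : Om Γ G v) s) =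
      Quotient.out (a : Om Γ G v) * vi Γ G v s * (Quotient.out (a : Om Γ G v))⁻¹ :=
    CoprodI.lift_of _ _
  obtain ⟨⟨c, hc⟩, hc'⟩ := QuotientGroup.mk_out_eq_mul (lkS Γ G v) a
  rw [h1, hc']
  simp only
  rw [mul_assoc a c, lkS_comm hc]
  group

variable (Γ G) in
/-- The inverse map. -/
noncomputable def Psi (v : V) : SPv Γ G v →* GraphProduct Γ G :=
  SemidirectProduct.lift (psi Γ G v) (MonoidHom.id _) (by
    intro a
    apply CoprodI.ext_hom
    intro ω
    ext s
    obtain ⟨b, rfl⟩ := QuotientGroup.mk_surjective ω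
    change psi Γ G v (permAut a (inc (b : Om Γ G v) s)) =
      a * psi Γ G v (inc (b : Om Γ G v) s) * a⁻¹
    rw [permAut_inc, psi_inc]
    change psi Γ G v (inc ((a * b : GraphProduct Γ G) : Om Γ G v) s) = _
    rw [psi_inc]
    group)

lemma Psi_Phi (v : V) (x : GraphProduct Γ G) : Psi Γ G v (Phi Γ G v x) = x := by
  have : (Psi Γ G v).comp (Phi Γ G v) = MonoidHom.id _ := by
    apply gp_hom_ext
    intro w g
    rw [MonoidHom.comp_apply]
    by_cases hw : w = v
    · subst hw
      rw [Phi_same, Psi, SemidirectProduct.lift_inl, psi_inc]; simp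
    · rw [Phi_ne hw, Psi, SemidirectProduct.lift_inr]
  exact DFunLike.congr_fun this x

lemma eq_retr_of_left {v : V} {x : GraphProduct Γ G} (h : (Phi Γ G v x).left = 1) :
    retr Γ G {v}ᶜ x = x := by
  have h1 : Phi Γ G v x = SemidirectProduct.inr (retr Γ G {v}ᶜ x) := by
    ext
    · rw [h]; simp
    · rw [Phi_right]; simp
  have h2 := Psi_Phi v x
  rw [h1, Psi, SemidirectProduct.lift_inr] at h2
  exact h2

lemma smul_om0 {v : V} {x : GraphProduct Γ G} : x • om0 Γ G v = om0 Γ G v ↔ x ∈ lkS Γ G v := by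
  change ((x * 1 : GraphProduct Γ G) : Om Γ G v) = _ ↔ _
  rw [mul_one, eq_comm, QuotientGroup.eq, inv_one, one_mul]

/-! Good and bad vertices. -/

variable (N : Subgroup (GraphProduct Γ G)) [N.Normal]

/-- A vertex is bad if `N` does not involve it. -/
def Bad (v : V) : Prop := ∀ n ∈ N, retr Γ G {v}ᶜ n = n

variable [∀ v, Nontrivial (G v)]

lemma bad_le {v : V} (hb : Bad N v) {n} (hn : n ∈ N) : n ∈ lkS Γ G v := by
  obtain ⟨s, hs⟩ := exists_ne (1 : G v)
  have h1 : n * vi Γ G v s * n⁻¹ * (vi Γ G v s)⁻¹ ∈ N := by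
    rw [mul_assoc, mul_assoc, ← mul_assoc (vi Γ G v s)]
    exact N.mul_mem hn (‹N.Normal›.conj_mem _ (N.inv_mem hn) _)
  have h2 := hb _ h1
  rw [map_mul, map_mul, map_mul, map_inv, map_inv, retr_vi_not_mem (by simp), mul_one,
    mul_inv_cancel, inv_one, mul_one] at h2
  have h3 : n * vi Γ G v s * n⁻¹ = vi Γ G v s := (mul_inv_eq_one.1 h2.symm)
  have h4 := congrArg (Phi Γ G v) h3
  have h5 : Phi Γ G v n = SemidirectProduct.inr n := by
    have := Phi_retr v n
    rwa [hb n hn] at this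
  rw [map_mul, map_mul, map_inv, h5, Phi_same, ← map_inv, ← SemidirectProduct.inl_aut,
    permAut_inc, SemidirectProduct.inl_inj] at h4
  have h6 := congrArg nf h4
  rw [nf_inc _ hs, nf_inc _ hs] at h6
  simp only [List.cons.injEq, and_true] at h6
  exact smul_om0.1 (congrArg Sigma.fst h6)

lemma bad_of_not_adj {v u : V} (hb : Bad N v) (h : ¬ Γ.Adj v u) : Bad N u := by
  intro n hn
  refine retr_fix (vs_mono ?_ (bad_le N hb hn))
  intro w hw
  simp only [Set.mem_compl_iff, Set.mem_singleton_iff]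
  rintro rfl
  exact h hw

lemma bad_set [Finite V] {S : Set V} (hS : ∀ v ∈ S, Bad N v) {n} (hn : n ∈ N) :
    retr Γ G Sᶜ n = n := by
  induction S, S.toFinite using Set.Finite.induction_on with
  | empty =>
    rw [Set.compl_empty]
    exact retr_fix (by rw [vs_univ]; trivial)
  | @insert a S _ _ ih =>
    have h1 := ih (fun v hv => hS v (Set.mem_insert_of_mem _ hv))
    have h2 := hS a (Set.mem_insert _ _) n hn
    have : (insert a S)ᶜ = Sᶜ ∩ {a}ᶜ := by
      rw [← Set.compl_union, Set.insert_eq, Set.union_comm]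
    rw [this, ← retr_retr, h2, h1]

/-! The join decomposition by the components of the complement. -/

lemma join_decomposition [Finite V] (Γ : SimpleGraph V) : ∃ (k : ℕ) (P : Fin k → Set V),
    IsJoinDecomposition Γ P ∧ ∀ v, ∃ i, P i = {w | Γᶜ.Reachable v w} := by
  have : Finite Γᶜ.ConnectedComponent := Quot.finite _
  obtain ⟨k, ⟨e⟩⟩ := Finite.exists_equiv_fin Γᶜ.ConnectedComponent
  refine ⟨k, fun i => {w | Γᶜ.connectedComponentMk w = e.symm i}, ⟨?_, ?_, ?_, ?_⟩, ?_⟩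
  · intro i
    obtain ⟨w, hw⟩ := (e.symm i).exists_rep
    exact ⟨w, hw⟩
  · intro v
    refine ⟨e (Γᶜ.connectedComponentMk v), by simp, ?_⟩
    intro j hj
    have hj' : Γᶜ.connectedComponentMk v = e.symm j := hj
    rw [hj']; simp
  · intro i j hij a ha b hb
    by_contra hc
    have ha' : Γᶜ.connectedComponentMk a = e.symm i := ha
    have hb' : Γᶜ.connectedComponentMk b = e.symm j := hb
    have hne : a ≠ b := by
      rintro rfl
      exact hij (e.symm.injective (ha'.symm.trans hb'))
    have : Γᶜ.Adj a b := (SimpleGraph.compl_adj Γ a b).2 ⟨hne, hc⟩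
    have h2 := SimpleGraph.ConnectedComponent.sound this.reachable
    exact hij (e.symm.injective (ha'.symm.trans (h2.trans hb')))
  · rintro i ⟨A, B, ⟨a, ha⟩, ⟨b, hb⟩, hd, hu, hadj⟩
    have hmem : ∀ w, w ∈ A ∪ B ↔ Γᶜ.connectedComponentMk w = e.symm i := by
      intro w; rw [hu]; rfl
    have hab : Γᶜ.Reachable a b := SimpleGraph.ConnectedComponent.exact
      (((hmem a).1 (Or.inl ha)).trans ((hmem b).1 (Or.inr hb)).symm)
    have key : ∀ x y, Γᶜ.Walk x y → x ∈ A → y ∈ A := by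
      intro x y w
      induction w with
      | nil => exact id
      | @cons x y z h _ ih =>
        intro hx
        apply ih
        have hy : y ∈ A ∪ B := by
          rw [hmem, ← (hmem x).1 (Or.inl hx)]
          exact SimpleGraph.ConnectedComponent.sound h.symm.reachable
        rcases hy with hy | hy
        · exact hy
        · exact absurd (hadj x hx y hy) ((SimpleGraph.compl_adj Γ x y).1 h).2
    obtain ⟨w⟩ := hab
    exact Set.disjoint_left.1 hd (key a b w ha) hb
  · intro v
    refine ⟨e (Γᶜ.connectedComponentMk v), ?_⟩
    ext w
    simp only [Equiv.symm_apply_apply]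
    exact SimpleGraph.ConnectedComponent.eq.trans ⟨fun h => h.symm, fun h => h.symm⟩

lemma not_bad [Finite V] (hfull : IsFullSubgroup Γ G N) (v : V) : ¬ Bad N v := by
  intro hb
  obtain ⟨k, P, hP, hPv⟩ := join_decomposition Γ
  obtain ⟨i, hi⟩ := hPv v
  apply hfull k P hP i
  rw [eq_bot_iff]
  rintro n ⟨hn, hn'⟩
  have hbad : ∀ x y, Γᶜ.Walk x y → Bad N x → Bad N y := by
    intro x y w
    induction w with
    | nil => exact id
    | cons h _ ih =>
      exact fun hx => ih (bad_of_not_adj N hx ((SimpleGraph.compl_adj Γ _ _).1 h).2)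
  have h1 : retr Γ G (P i)ᶜ n = n := by
    refine bad_set N (fun u hu => ?_) hn
    rw [hi] at hu
    obtain ⟨w⟩ := hu
    exact hbad v u w hb
  have h2 : retr Γ G (P i) n = n := retr_fix hn'
  have h3 := retr_retr (P i) (P i)ᶜ n
  rw [h1, h2, Set.inter_compl_self, retr_empty] at h3
  exact h3

/-- The crucial finiteness statement. -/
lemma finiteIndex_lk [Finite V] (hfg : N.FG) (hfull : IsFullSubgroup Γ G N) {v : V}
    (hv : ¬ IsCentralVertex Γ v) : (N ⊔ lkS Γ G v).FiniteIndex := by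
  refine finiteIndex_sup (Phi Γ G v) N (om0 Γ G v) hfg (lkS Γ G v) ?_ ?_ ?_ ?_
  · simp only [IsCentralVertex, not_forall] at hv
    obtain ⟨w, hw, hadj⟩ := hv
    obtain ⟨g, hg⟩ := exists_ne (1 : G w)
    refine ⟨vi Γ G w g, vi Γ G w g, Phi_ne hw g, ?_⟩
    intro h
    rw [smul_om0] at h
    have h1 : retr Γ G {w}ᶜ (vi Γ G w g) = vi Γ G w g := by
      refine retr_fix (vs_mono ?_ h)
      intro u hu
      simp only [Set.mem_compl_iff, Set.mem_singleton_iff]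
      rintro rfl
      exact hadj hu
    rw [retr_vi_not_mem (by simp)] at h1
    exact hg (vi_injective w (by rw [← h1, map_one]))
  · obtain ⟨s, hs⟩ := exists_ne (1 : G v)
    exact ⟨vi Γ G v s, s, Phi_same v s, hs⟩
  · intro g hl hr
    rw [Phi_right, eq_retr_of_left hl, smul_om0] at hr
    exact hr
  · by_contra hc
    push Not at hc
    exact not_bad N hfull v (fun n hn => eq_retr_of_left (hc n hn))

lemma central_inter [Finite V] (hfull : IsFullSubgroup Γ G N) {v : V}
    (hv : IsCentralVertex Γ v) : ∃ g : G v, g ≠ 1 ∧ vi Γ G v g ∈ N := by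
  obtain ⟨k, P, hP, hPv⟩ := join_decomposition Γ
  obtain ⟨i, hi⟩ := hPv v
  have hPi : P i ⊆ {v} := by
    rw [hi]
    rintro w ⟨p⟩
    cases p with
    | nil => rfl
    | cons h _ =>
      rw [SimpleGraph.compl_adj] at h
      exact absurd (hv _ h.1.symm) h.2
  obtain ⟨⟨n, hn⟩, hne'⟩ := Subgroup.ne_bot_iff_exists_ne_one.1 (hfull k P hP i)
  have hne : n ≠ 1 := fun h => hne' (Subtype.ext h)
  have h1 : vertexSubgroup Γ G (P i) ≤ (vi Γ G v).range := by
    refine vs_induction ?_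
    intro w hw g
    have := hPi hw
    rw [Set.mem_singleton_iff] at this
    subst this
    exact ⟨g, rfl⟩
  obtain ⟨g, rfl⟩ := h1 hn.2
  exact ⟨g, fun h => hne (by rw [h, map_one]), hn.1⟩

end Graph

/-! ### Groups with centre of finite index -/

section Center

lemma center_both {Q : Type} [Group Q] (h : (Subgroup.center Q).FiniteIndex) :
    AbelianByFinite Q ∧ FiniteByAbelian Q := by
  refine ⟨⟨Subgroup.center Q, inferInstance, h, ?_⟩, ?_⟩
  · rintro ⟨x, hx⟩ ⟨y, hy⟩
    exact Subtype.ext ((Subgroup.mem_center_iff.1 hy x))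
  · have hfin : Finite (commutatorSet Q) := by
      let f : (Q ⧸ Subgroup.center Q) × (Q ⧸ Subgroup.center Q) → Q :=
        fun p => p.1.out * p.2.out * p.1.out⁻¹ * p.2.out⁻¹
      refine Set.Finite.subset (Set.finite_range f) ?_
      rintro _ ⟨x, y, rfl⟩
      refine ⟨((x : Q ⧸ Subgroup.center Q), (y : Q ⧸ Subgroup.center Q)), ?_⟩
      obtain ⟨⟨c, hc⟩, hc'⟩ := QuotientGroup.mk_out_eq_mul (Subgroup.center Q) x
      obtain ⟨⟨d, hd⟩, hd'⟩ := QuotientGroup.mk_out_eq_mul (Subgroup.center Q) y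
      simp only [f, hc', hd', commutatorElement_def]
      rw [Subgroup.mem_center_iff] at hc hd
      calc x * c * (y * d) * (x * c)⁻¹ * (y * d)⁻¹
          = x * (c * y) * (d * c⁻¹ * x⁻¹) * d⁻¹ * y⁻¹ := by group
        _ = x * y * (c * d * c⁻¹) * x⁻¹ * d⁻¹ * y⁻¹ := by rw [← hc y]; group
        _ = x * y * (d * x⁻¹) * d⁻¹ * y⁻¹ := by rw [hd c]; group
        _ = x * y * x⁻¹ * y⁻¹ := by rw [← hd x⁻¹]; group
    refine ⟨commutator Q, inferInstance, inferInstance, ?_⟩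
    intro x y
    exact Subgroup.commutator_mem_commutator (Subgroup.mem_top x) (Subgroup.mem_top y)

lemma both_center {Q : Type} [Group Q] (h1 : AbelianByFinite Q) (h2 : FiniteByAbelian Q) :
    (Subgroup.center Q).FiniteIndex := by
  obtain ⟨B, -, hB, hBc⟩ := h1
  obtain ⟨F, -, hF, hFc⟩ := h2
  have hcent : ∀ x : Q, (Subgroup.centralizer {x}).FiniteIndex := by
    intro x
    have : Finite (Q ⧸ Subgroup.centralizer {x}) := by
      refine Finite.of_injective
        (fun q : Q ⧸ Subgroup.centralizer {x} =>
          (⟨q.out * x * q.out⁻¹ * x⁻¹, hFc _ _⟩ : F)) ?_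
      intro q r h
      have h' : q.out * x * q.out⁻¹ * x⁻¹ = r.out * x * r.out⁻¹ * x⁻¹ := congrArg Subtype.val h
      have h3 : q.out * x * q.out⁻¹ = r.out * x * r.out⁻¹ := mul_right_cancel h'
      rw [← QuotientGroup.out_eq' q, ← QuotientGroup.out_eq' r, QuotientGroup.eq,
        Subgroup.mem_centralizer_singleton_iff]
      calc q.out⁻¹ * r.out * x = q.out⁻¹ * (r.out * x * r.out⁻¹) * r.out := by group
        _ = x * (q.out⁻¹ * r.out) := by rw [← h3]; group
    exact Subgroup.finiteIndex_of_finite_quotient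
  have hI : (⨅ q : Q ⧸ B, Subgroup.centralizer {q.out}).FiniteIndex :=
    Subgroup.finiteIndex_iInf (fun q => hcent q.out)
  have hJ : (B ⊓ ⨅ q : Q ⧸ B, Subgroup.centralizer {q.out}).FiniteIndex := inferInstance
  refine Subgroup.finiteIndex_of_le (H := B ⊓ ⨅ q : Q ⧸ B, Subgroup.centralizer {q.out}) ?_
  rintro z ⟨hzB, hz⟩
  rw [Subgroup.mem_center_iff]
  intro x
  obtain ⟨⟨b, hb⟩, hb'⟩ := QuotientGroup.mk_out_eq_mul B x
  have hz' := Subgroup.mem_iInf.1 hz (x : Q ⧸ B)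
  rw [Subgroup.mem_centralizer_singleton_iff, hb'] at hz'
  have hc : z * b = b * z := congrArg Subtype.val (hBc ⟨z, hzB⟩ ⟨b, hb⟩)
  have e : x * z * b = z * x * b := by
    calc x * z * b = x * b * z := by rw [mul_assoc, hc, mul_assoc]
      _ = z * x * b := by rw [← hz', mul_assoc]
  exact mul_right_cancel e

end Center

section Final

variable {V : Type} [Finite V] {Γ : SimpleGraph V} {G : V → Type} [∀ v, Group (G v)]
  [∀ v, Nontrivial (G v)]

/-- The image of a vertex group in the quotient. -/
def vq (N : Subgroup (GraphProduct Γ G)) [N.Normal] (v : V) : G v →* GraphProduct Γ G ⧸ N :=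
  (QuotientGroup.mk' N).comp (vi Γ G v)

lemma map_finiteIndex {P R : Type} [Group P] [Group R] (f : P →* R) (hf : Function.Surjective f)
    (D : Subgroup P) [D.FiniteIndex] : (D.map f).FiniteIndex :=
  ⟨fun h => Subgroup.FiniteIndex.index_ne_zero (H := D)
    (Nat.eq_zero_of_zero_dvd (h ▸ Subgroup.index_map_dvd D hf))⟩

lemma cent_noncentral (N : Subgroup (GraphProduct Γ G)) [N.Normal] (hfg : N.FG)
    (hfull : IsFullSubgroup Γ G N) {v : V} (hv : ¬ IsCentralVertex Γ v) :
    (Subgroup.centralizer ((vq N v).range : Set (GraphProduct Γ G ⧸ N))).FiniteIndex := by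
  have h := finiteIndex_lk N hfg hfull hv
  have h2 := map_finiteIndex (QuotientGroup.mk' N) (QuotientGroup.mk'_surjective N)
    (N ⊔ lkS Γ G v)
  refine Subgroup.finiteIndex_of_le (H := (N ⊔ lkS Γ G v).map (QuotientGroup.mk' N)) ?_
  rw [Subgroup.map_sup, sup_le_iff]
  constructor
  · rintro _ ⟨n, hn, rfl⟩
    have : QuotientGroup.mk' N n = 1 := (QuotientGroup.eq_one_iff n).2 hn
    rw [this]
    exact Subgroup.one_mem _
  · rintro _ ⟨c, hc, rfl⟩
    rw [Subgroup.mem_centralizer_iff]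
    rintro _ ⟨s, rfl⟩
    simp only [vq, MonoidHom.comp_apply]
    rw [← map_mul, ← map_mul, lkS_comm hc]

lemma cent_central (N : Subgroup (GraphProduct Γ G)) [N.Normal] {v : V}
    (hv : IsCentralVertex Γ v) (hc : (Subgroup.center (vq N v).range).FiniteIndex) :
    (Subgroup.centralizer ((vq N v).range : Set (GraphProduct Γ G ⧸ N))).FiniteIndex := by
  set Q := GraphProduct Γ G ⧸ N
  set R := (vq N v).range with hR
  set D := Subgroup.centralizer (R : Set Q) with hD
  -- every element is a product of an element of `R` and one of `D`
  have hgen : ∀ x : GraphProduct Γ G, ∃ r ∈ R, ∃ d ∈ D, (QuotientGroup.mk' N) x = r * d := by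
    have hcov : vertexSubgroup Γ G Set.univ ≤ (R ⊔ D).comap (QuotientGroup.mk' N) := by
      refine vs_induction ?_
      intro w _ g
      rw [Subgroup.mem_comap]
      by_cases hw : w = v
      · subst hw
        exact Subgroup.mem_sup_left ⟨g, rfl⟩
      · refine Subgroup.mem_sup_right ?_
        rw [hD, Subgroup.mem_centralizer_iff]
        rintro _ ⟨s, rfl⟩
        simp only [vq, MonoidHom.comp_apply]
        rw [← map_mul, ← map_mul, vi_comm Γ G (hv w hw)]
    have hnorm : R ≤ Subgroup.normalizer (D : Set Q) := by
      intro r hr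
      rw [Subgroup.mem_normalizer_iff]
      intro d
      have key : ∀ r ∈ R, ∀ d ∈ D, r * d * r⁻¹ = d := by
        intro r hr d hd
        rw [hD, Subgroup.mem_centralizer_iff] at hd
        rw [hd r hr]; group
      constructor
      · intro hd
        have := key r hr d hd
        rwa [this]
      · intro hd
        have := key r⁻¹ (R.inv_mem hr) _ hd
        have e : r⁻¹ * (r * d * r⁻¹) * r⁻¹⁻¹ = d := by group
        rw [e] at this
        rw [this]; exact hd
    intro x
    have hx : (QuotientGroup.mk' N) x ∈ R ⊔ D := hcov (by rw [vs_univ]; trivial)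
    have hx2 : (QuotientGroup.mk' N) x ∈ ((R ⊔ D : Subgroup Q) : Set Q) := hx
    rw [Subgroup.coe_mul_of_left_le_normalizer_right R D hnorm] at hx2
    obtain ⟨r, hr, d, hd, h⟩ := Set.mem_mul.1 hx2
    exact ⟨r, hr, d, hd, h.symm⟩
  have hfin : Finite (R ⧸ Subgroup.center R) := Subgroup.finiteIndex_iff_finite_quotient.1 hc
  have : Finite (Q ⧸ D) := by
    refine Finite.of_surjective
      (fun q : R ⧸ Subgroup.center R => ((q.out : Q) : Q ⧸ D)) ?_
    intro y
    obtain ⟨x, rfl⟩ := QuotientGroup.mk_surjective y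
    obtain ⟨x, rfl⟩ := QuotientGroup.mk_surjective x
    obtain ⟨r, hr, d, hd, h⟩ := hgen x
    refine ⟨((⟨r, hr⟩ : R) : R ⧸ Subgroup.center R), ?_⟩
    obtain ⟨⟨c, hcc⟩, hc'⟩ := QuotientGroup.mk_out_eq_mul (Subgroup.center R) (⟨r, hr⟩ : R)
    have hcD : (c : Q) ∈ D := by
      rw [hD, Subgroup.mem_centralizer_iff]
      intro t ht
      exact congrArg Subtype.val (Subgroup.mem_center_iff.1 hcc ⟨t, ht⟩)
    simp only [hc']
    rw [QuotientGroup.eq]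
    change (r * (c : Q))⁻¹ * (QuotientGroup.mk' N) x ∈ D
    rw [h]
    have e : (r * (c : Q))⁻¹ * (r * d) = (c : Q)⁻¹ * d := by group
    rw [e]
    exact D.mul_mem (D.inv_mem hcD) hd
  exact Subgroup.finiteIndex_of_finite_quotient

end Final

end GPQ

theorem quotient_of_graph_product_by_fg_full_normal_subgroup
    {V : Type} [Fintype V] (Γ : SimpleGraph V) (G : V → Type)
    [∀ v, Group (G v)] [∀ v, Nontrivial (G v)]
    (N : Subgroup (GraphProduct Γ G)) [N.Normal]
    (hfg : N.FG) (hfull : IsFullSubgroup Γ G N)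
    (hcentral : ∀ v : V, IsCentralVertex Γ v →
      ∀ (Q : Type) (instQ : Group Q), letI := instQ
        ∀ φ : G v →* Q, Function.Surjective φ → φ.ker ≠ ⊥ →
          AbelianByFinite Q ∧ FiniteByAbelian Q) :
    AbelianByFinite (GraphProduct Γ G ⧸ N) ∧ FiniteByAbelian (GraphProduct Γ G ⧸ N) := by
  refine GPQ.center_both ?_
  have hI : ∀ v, (Subgroup.centralizer
      ((GPQ.vq N v).range : Set (GraphProduct Γ G ⧸ N))).FiniteIndex := by
    intro v
    by_cases hv : IsCentralVertex Γ v
    · refine GPQ.cent_central N hv ?_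
      obtain ⟨g, hg, hgN⟩ := GPQ.central_inter N hfull hv
      have := hcentral v hv (GPQ.vq N v).range inferInstance (GPQ.vq N v).rangeRestrict
        (MonoidHom.rangeRestrict_surjective _) (by
          intro hk
          rw [MonoidHom.ker_rangeRestrict] at hk
          apply hg
          rw [← Subgroup.mem_bot, ← hk]
          exact (QuotientGroup.eq_one_iff _).2 hgN)
      exact GPQ.both_center this.1 this.2
    · exact GPQ.cent_noncentral N hfg hfull hv
  have hJ := Subgroup.finiteIndex_iInf hI
  refine Subgroup.finiteIndex_of_le (H := ⨅ v, Subgroup.centralizer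
      ((GPQ.vq N v).range : Set (GraphProduct Γ G ⧸ N))) ?_
  intro z hz
  rw [Subgroup.mem_iInf] at hz
  rw [Subgroup.mem_center_iff]
  intro y
  obtain ⟨x, rfl⟩ := QuotientGroup.mk'_surjective N y
  have hcov : vertexSubgroup Γ G Set.univ ≤
      (Subgroup.centralizer {z}).comap (QuotientGroup.mk' N) := by
    refine GPQ.vs_induction ?_
    intro w _ g
    rw [Subgroup.mem_comap, Subgroup.mem_centralizer_singleton_iff]
    exact Subgroup.mem_centralizer_iff.1 (hz w) _ ⟨g, rfl⟩
  have hx : x ∈ (Subgroup.centralizer {z}).comap (QuotientGroup.mk' N) :=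
    hcov (by rw [GPQ.vs_univ]; trivial)
  exact Subgroup.mem_centralizer_singleton_iff.1 (Subgroup.mem_comap.1 hx)
end

section
/- Let Γ be a finite simple graph with no central vertices, let (G_v) be a family of nontrivial groups indexed by the vertices of Γ, and let 𝒢 = 𝒢(Γ, {G_v}) be the associated graph product. Let N be a finitely generated full normal subgroup of 𝒢. Then 𝒢/N is both abelian-by-finite and finite-by-abelian. -/
namespace GPAux

open Monoid

section Head
variable {ι : Type} {M : ι → Type} [∀ i, Group (M i)]

open Classical in
/-- The leading letter of an element of a free product in the factor `j`. -/
noncomputable def hd (j : ι) (k : CoprodI M) : M j :=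
  (CoprodI.Word.equivPair j (CoprodI.Word.equiv k)).head

theorem hd_of_mul (j : ι) (a : M j) (k : CoprodI M) :
    hd j (CoprodI.of a * k) = a * hd j k := by
  classical
  unfold hd
  have : CoprodI.Word.equiv (CoprodI.of a * k) = CoprodI.of a • CoprodI.Word.equiv k := by
    simp [CoprodI.Word.equiv, mul_smul]
  rw [this, CoprodI.Word.equivPair_smul_same]

theorem hd_eq_one_of {j : ι} {w : CoprodI.Word M} (h : w.fstIdx ≠ some j) :
    hd j w.prod = 1 := by
  classical
  unfold hd
  have : CoprodI.Word.equiv w.prod = w := CoprodI.Word.equiv.apply_symm_apply w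
  rw [this, CoprodI.Word.equivPair_eq_of_fstIdx_ne h]

theorem hd_one (j : ι) : hd j (1 : CoprodI M) = 1 := by
  have := hd_eq_one_of (M := M) (j := j) (w := CoprodI.Word.empty) (by simp [CoprodI.Word.fstIdx])
  simpa using this

theorem hd_of (j : ι) (a : M j) : hd j (CoprodI.of a) = a := by
  have := hd_of_mul j a 1
  simpa [hd_one] using this

theorem exists_word (k : CoprodI M) : ∃ w : CoprodI.Word M, w.prod = k := by
  classical
  exact ⟨CoprodI.Word.equiv k, CoprodI.Word.equiv.symm_apply_apply k⟩

theorem hd_ne {j l : ι} (hjl : j ≠ l) {k : CoprodI M} (h : hd l k ≠ 1) : hd j k = 1 := by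
  obtain ⟨w, rfl⟩ := exists_word k
  by_contra hj
  have h1 : w.fstIdx = some l := by
    by_contra h'
    exact h (hd_eq_one_of h')
  have h2 : w.fstIdx = some j := by
    by_contra h'
    exact hj (hd_eq_one_of h')
  rw [h1] at h2
  exact hjl (Option.some.inj h2).symm

theorem hd_of_ne {j l : ι} (hjl : j ≠ l) (m : M l) : hd j (CoprodI.of m : CoprodI M) = 1 := by
  by_cases hm : m = 1
  · subst hm; simp [hd_one]
  · exact hd_ne hjl (by rwa [hd_of])

theorem hd_cross {i : ι} (h : M i) (w : CoprodI.Word M) :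
    ∀ j, hd j (w.prod * CoprodI.of h) ≠ hd j w.prod →
      i = j ∧ ∃ a : M j, w.prod = CoprodI.of a := by
  induction w using CoprodI.Word.consRecOn with
  | empty =>
    intro j hj
    simp only [CoprodI.Word.prod_empty, one_mul, hd_one] at hj ⊢
    refine ⟨?_, 1, by simp⟩
    by_contra hij
    exact hj (hd_of_ne (Ne.symm hij) h)
  | cons l m w h1 h2 ih =>
    intro j hj
    rw [CoprodI.Word.prod_cons, mul_assoc] at hj
    rw [CoprodI.Word.prod_cons]
    by_cases hjl : j = l
    · subst hjl
      rw [hd_of_mul, hd_of_mul] at hj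
      obtain ⟨rfl, a, ha⟩ := ih j (fun h => hj (by rw [h]))
      exact ⟨rfl, m * a, by rw [ha, map_mul]⟩
    · exfalso
      have hw1 : hd l w.prod = 1 := hd_eq_one_of h1
      have e1 : hd j (CoprodI.of m * w.prod) = 1 := by
        apply hd_ne hjl
        rwa [hd_of_mul, hw1, mul_one]
      rw [e1] at hj
      by_cases hl : hd l (w.prod * CoprodI.of h) = hd l w.prod
      · apply hj
        apply hd_ne hjl
        rwa [hd_of_mul, hl, hw1, mul_one]
      · obtain ⟨rfl, a, ha⟩ := ih l hl
        apply hj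
        rw [ha, ← map_mul, ← map_mul]
        exact hd_of_ne hjl _

theorem hd_cross' {i : ι} (h : M i) (k : CoprodI M) (j : ι)
    (hne : hd j (k * CoprodI.of h) ≠ hd j k) : i = j ∧ ∃ a : M j, k = CoprodI.of a := by
  obtain ⟨w, rfl⟩ := exists_word k
  exact hd_cross h w j hne

end Head

section GP
variable {V : Type} (Γ : SimpleGraph V) (G : V → Type) [∀ v, Group (G v)]

/-- The canonical map from a vertex group. -/
def inc (v : V) : G v →* GraphProduct Γ G :=
  (QuotientGroup.mk' (graphProductRels Γ G)).comp CoprodI.of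

theorem inc_comm {v w : V} (hvw : Γ.Adj v w) (g : G v) (h : G w) :
    inc Γ G v g * inc Γ G w h = inc Γ G w h * inc Γ G v g := by
  have h0 : CoprodI.of g * CoprodI.of h * (CoprodI.of g)⁻¹ * (CoprodI.of h)⁻¹
      ∈ graphProductRels Γ G := Subgroup.subset_normalClosure ⟨v, w, g, h, hvw, rfl⟩
  have h1 := (QuotientGroup.eq_one_iff _).2 h0
  have h2 : inc Γ G v g * inc Γ G w h * (inc Γ G v g)⁻¹ * (inc Γ G w h)⁻¹ = 1 := h1
  rw [mul_inv_eq_one, mul_inv_eq_iff_eq_mul] at h2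
  exact h2

variable {Γ G} in
/-- Universal property of the graph product. -/
def gpLift {H : Type} [Group H] (f : ∀ v, G v →* H)
    (hf : ∀ v w, Γ.Adj v w → ∀ g h, f v g * f w h = f w h * f v g) :
    GraphProduct Γ G →* H :=
  QuotientGroup.lift (graphProductRels Γ G) (CoprodI.lift f) (by
    have : graphProductRels Γ G ≤ (CoprodI.lift f).ker := by
      apply Subgroup.normalClosure_le_normal
      rintro x ⟨v, w, g, h, hvw, rfl⟩
      simp only [SetLike.mem_coe, MonoidHom.mem_ker, map_mul, map_inv, CoprodI.lift_of]
      rw [mul_inv_eq_one, mul_inv_eq_iff_eq_mul]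
      exact hf v w hvw g h
    exact fun x hx => this hx)

variable {Γ G} in
theorem gpLift_inc {H : Type} [Group H] (f : ∀ v, G v →* H)
    (hf : ∀ v w, Γ.Adj v w → ∀ g h, f v g * f w h = f w h * f v g) (v : V) (g : G v) :
    gpLift (Γ := Γ) f hf (inc Γ G v g) = f v g := by
  have : gpLift (Γ := Γ) f hf (inc Γ G v g) = CoprodI.lift f (CoprodI.of g) := rfl
  rw [this, CoprodI.lift_of]

variable {Γ G} in
theorem gp_induction {p : GraphProduct Γ G → Prop} (h1 : p 1)
    (hi : ∀ v g, p (inc Γ G v g)) (hm : ∀ x y, p x → p y → p (x * y)) (x) : p x := by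
  obtain ⟨y, rfl⟩ := QuotientGroup.mk_surjective x
  induction y using CoprodI.induction_on with
  | one => exact h1
  | of i m => exact hi i m
  | mul x y hx hy => exact hm _ _ hx hy

variable {Γ G} in
theorem gp_hom_ext {H : Type} [Group H] {f f' : GraphProduct Γ G →* H}
    (h : ∀ v g, f (inc Γ G v g) = f' (inc Γ G v g)) (x : GraphProduct Γ G) : f x = f' x := by
  induction x using gp_induction with
  | h1 => simp
  | hi v g => exact h v g
  | hm x y hx hy => rw [map_mul, map_mul, hx, hy]

theorem inc_mem {S : Set V} {v : V} (hv : v ∈ S) (g : G v) :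
    inc Γ G v g ∈ vertexSubgroup Γ G S :=
  Subgroup.subset_closure ⟨v, hv, g, rfl⟩

variable {Γ G} in
theorem vs_le {S : Set V} {K : Subgroup (GraphProduct Γ G)}
    (h : ∀ v ∈ S, ∀ g, inc Γ G v g ∈ K) : vertexSubgroup Γ G S ≤ K := by
  unfold vertexSubgroup
  rw [Subgroup.closure_le]
  rintro x ⟨v, hv, g, rfl⟩
  exact h v hv g

/-- The subgroup of the link of `v`. -/
abbrev Lk (v : V) : Subgroup (GraphProduct Γ G) := vertexSubgroup Γ G {u | Γ.Adj v u}

theorem lk_comm (v : V) (a : G v) {c : GraphProduct Γ G} (hc : c ∈ Lk Γ G v) :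
    c * inc Γ G v a = inc Γ G v a * c := by
  have : Lk Γ G v ≤ Subgroup.centralizer {inc Γ G v a} := by
    apply vs_le
    intro u hu g
    rw [Subgroup.mem_centralizer_singleton_iff]
    exact (inc_comm Γ G hu a g).symm
  exact Subgroup.mem_centralizer_singleton_iff.1 (this hc)

/-- The index permutation action on the free product of copies of `G v`. -/
def permHom {X A H : Type} [Group A] [Group H] [MulAction A X] :
    A →* MulAut (CoprodI (fun _ : X => H)) where
  toFun a :=
    { toFun := CoprodI.lift (fun x => (CoprodI.of (M := fun _ : X => H) (i := a • x)))
      invFun := CoprodI.lift (fun x => (CoprodI.of (M := fun _ : X => H) (i := a⁻¹ • x)))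
      left_inv := fun k => by
        induction k using CoprodI.induction_on with
        | one => simp
        | of i m => simp only [CoprodI.lift_of]; rw [inv_smul_smul]
        | mul x y hx hy => simp only [map_mul, hx, hy]
      right_inv := fun k => by
        induction k using CoprodI.induction_on with
        | one => simp
        | of i m => simp only [CoprodI.lift_of]; rw [smul_inv_smul]
        | mul x y hx hy => simp only [map_mul, hx, hy]
      map_mul' := fun x y => map_mul _ x y }
  map_one' := by
    ext k
    simp only [MulEquiv.coe_mk, Equiv.coe_fn_mk, MulAut.one_apply]
    induction k using CoprodI.induction_on with
    | one => simp
    | of i m => simp only [CoprodI.lift_of]; rw [one_smul]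
    | mul x y hx hy => simp only [map_mul, hx, hy]
  map_mul' := fun a b => by
    ext k
    simp only [MulEquiv.coe_mk, Equiv.coe_fn_mk, MulAut.mul_apply]
    induction k using CoprodI.induction_on with
    | one => simp
    | of i m => simp only [CoprodI.lift_of]; rw [mul_smul]
    | mul x y hx hy => simp only [map_mul, hx, hy]

theorem permHom_of {X A H : Type} [Group A] [Group H] [MulAction A X] (a : A) (x : X) (m : H) :
    permHom a (CoprodI.of (M := fun _ : X => H) (i := x) m)
      = CoprodI.of (M := fun _ : X => H) (i := a • x) m :=
  CoprodI.lift_of _ _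

/-- The free product of copies of `G v` indexed by cosets of the link subgroup. -/
abbrev KK (v : V) : Type := CoprodI (fun _ : GraphProduct Γ G ⧸ Lk Γ G v => G v)

/-- Letters. -/
abbrev lt (v : V) (x : GraphProduct Γ G ⧸ Lk Γ G v) : G v →* KK Γ G v :=
  CoprodI.of (M := fun _ : GraphProduct Γ G ⧸ Lk Γ G v => G v) (i := x)

/-- The semidirect product. -/
abbrev SD (v : V) : Type :=
  KK Γ G v ⋊[permHom (X := GraphProduct Γ G ⧸ Lk Γ G v) (A := GraphProduct Γ G) (H := G v)]
    GraphProduct Γ G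

/-- The base coset. -/
abbrev bs (v : V) : GraphProduct Γ G ⧸ Lk Γ G v := ((1 : GraphProduct Γ G) : _ ⧸ Lk Γ G v)

open Classical in
/-- vertex maps into the semidirect product -/
noncomputable def phiV (v u : V) : G u →* SD Γ G v :=
  if h : u = v then
    (by subst h; exact SemidirectProduct.inl.comp (lt Γ G u (bs Γ G u)))
  else SemidirectProduct.inr.comp (inc Γ G u)

theorem phiV_self (v : V) : phiV Γ G v v =
    SemidirectProduct.inl.comp (lt Γ G v (bs Γ G v)) := by simp [phiV]

theorem phiV_ne {v u : V} (h : u ≠ v) : phiV Γ G v u =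
    SemidirectProduct.inr.comp (inc Γ G u) := by simp [phiV, h]

theorem smul_bs {v : V} {c : GraphProduct Γ G} : c • bs Γ G v = bs Γ G v ↔ c ∈ Lk Γ G v := by
  have : c • bs Γ G v = ((c : GraphProduct Γ G) : _ ⧸ Lk Γ G v) := by
    show ((c * 1 : GraphProduct Γ G) : _ ⧸ Lk Γ G v) = _
    rw [mul_one]
  rw [this, eq_comm, QuotientGroup.eq]
  simp

theorem phi_comm_aux {v w : V} (h : Γ.Adj v w) (g : G v) (k : G w) :
    phiV Γ G v v g * phiV Γ G v w k = phiV Γ G v w k * phiV Γ G v v g := by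
  rw [phiV_self, phiV_ne Γ G h.ne']
  ext
  · simp only [MonoidHom.comp_apply, SemidirectProduct.mul_left, SemidirectProduct.left_inl,
      SemidirectProduct.right_inl, SemidirectProduct.left_inr, SemidirectProduct.right_inr,
      map_one, mul_one, one_mul, permHom_of]
    rw [(smul_bs Γ G).2 (inc_mem Γ G h k)]
  · simp

/-- The map to the semidirect product. -/
noncomputable def phi (v : V) : GraphProduct Γ G →* SD Γ G v :=
  gpLift (phiV Γ G v) (by
    intro x w hxw g h
    by_cases hx : x = v
    · subst hx
      exact phi_comm_aux Γ G hxw g h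
    · by_cases hw : w = v
      · subst hw
        exact (phi_comm_aux Γ G hxw.symm h g).symm
      · rw [phiV_ne Γ G hx, phiV_ne Γ G hw]
        simp only [MonoidHom.comp_apply, ← map_mul, inc_comm Γ G hxw])

/-- The inverse map from the semidirect product. -/
noncomputable def psi (v : V) : SD Γ G v →* GraphProduct Γ G :=
  SemidirectProduct.lift
    (CoprodI.lift (fun x => ((MulAut.conj x.out).toMonoidHom.comp (inc Γ G v))))
    (MonoidHom.id _) (by
      intro g
      apply CoprodI.ext_hom
      intro x
      ext a
      simp only [MonoidHom.comp_apply, MulEquiv.coe_toMonoidHom, permHom_of, CoprodI.lift_of,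
        MonoidHom.id_apply, MulAut.conj_apply]
      have h1 : (((g • x).out : GraphProduct Γ G) : _ ⧸ Lk Γ G v)
          = ((g * x.out : GraphProduct Γ G) : _ ⧸ Lk Γ G v) := by
        rw [QuotientGroup.out_eq']
        conv_lhs => rw [← QuotientGroup.out_eq' x]
        rfl
      rw [QuotientGroup.eq] at h1
      have h2 := lk_comm Γ G v a h1
      set y := (g • x).out
      set z := x.out
      have h3 : g * z * inc Γ G v a = y * (inc Γ G v a * (y⁻¹ * (g * z))) := by
        rw [← h2]; group
      have h4 : g * (z * inc Γ G v a * z⁻¹) * g⁻¹ = (g * z * inc Γ G v a) * z⁻¹ * g⁻¹ := by group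
      rw [h4, h3]
      group)

theorem psi_phi (v : V) (g : GraphProduct Γ G) : psi Γ G v (phi Γ G v g) = g := by
  refine gp_hom_ext (f := (psi Γ G v).comp (phi Γ G v)) (f' := MonoidHom.id _) ?_ g
  intro u a
  simp only [MonoidHom.comp_apply, phi, gpLift_inc, MonoidHom.id_apply]
  by_cases hu : u = v
  · subst hu
    rw [phiV_self]
    simp only [MonoidHom.comp_apply, psi, SemidirectProduct.lift_inl, CoprodI.lift_of,
      MulEquiv.coe_toMonoidHom, MulAut.conj_apply]
    have : (bs Γ G u).out ∈ Lk Γ G u := by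
      have := QuotientGroup.out_eq' (bs Γ G u)
      rw [eq_comm, QuotientGroup.eq] at this
      simpa using this
    rw [lk_comm Γ G u a this]
    group
  · rw [phiV_ne Γ G hu]
    simp [psi]

theorem exists_head (v : V) : ∃ s : GraphProduct Γ G → G v,
    s 1 = 1 ∧ (∀ a g, s (inc Γ G v a * g) = a * s g) ∧
    (∀ u, u ≠ v → ∀ h g, s (g * inc Γ G u h) = s g) ∧
    (∀ g h, s (g * inc Γ G v h) ≠ s g → ∃ a, ∃ c ∈ Lk Γ G v, g = inc Γ G v a * c) := by
  refine ⟨fun g => hd (bs Γ G v) (phi Γ G v g).left, ?_, ?_, ?_, ?_⟩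
  · simp [hd_one]
  · intro a g
    simp only [map_mul]
    simp only [phi, gpLift_inc, phiV_self, MonoidHom.comp_apply, SemidirectProduct.mul_left,
      SemidirectProduct.left_inl, SemidirectProduct.right_inl, map_one, MulAut.one_apply]
    exact hd_of_mul _ _ _
  · intro u hu h g
    simp only [map_mul]
    simp [phi, gpLift_inc, phiV_ne Γ G hu]
  · intro g h hne
    simp only [map_mul, SemidirectProduct.mul_left] at hne
    have e : (phi Γ G v (inc Γ G v h)).left = lt Γ G v (bs Γ G v) h := by
      simp [phi, gpLift_inc, phiV_self]
    rw [e, permHom_of] at hne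
    obtain ⟨h1, a, ha⟩ := hd_cross' _ _ _ hne
    refine ⟨a, (phi Γ G v g).right, (smul_bs Γ G).1 h1, ?_⟩
    conv_lhs => rw [← psi_phi Γ G v g, ← SemidirectProduct.inl_left_mul_inr_right (phi Γ G v g), ha]
    have := psi_phi Γ G v (inc Γ G v a)
    rw [map_mul]
    congr 1
    · simpa [phi, gpLift_inc, phiV_self] using this
    · simp [psi]

end GP
end GPAux

namespace GPAux

section Dyn
variable {V : Type} {Γ : SimpleGraph V} {G : V → Type} [∀ v, Group (G v)]

/-- A head function at the vertex `v`. -/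
structure HeadFn (Γ : SimpleGraph V) (G : V → Type) [∀ v, Group (G v)] (v : V) where
  s : GraphProduct Γ G → G v
  one : s 1 = 1
  left : ∀ a g, s (inc Γ G v a * g) = a * s g
  right : ∀ u, u ≠ v → ∀ h g, s (g * inc Γ G u h) = s g
  cross : ∀ g h, s (g * inc Γ G v h) ≠ s g → ∃ a, ∃ c ∈ Lk Γ G v, g = inc Γ G v a * c

theorem headFn_nonempty (v : V) : Nonempty (HeadFn Γ G v) := by
  obtain ⟨s, h1, h2, h3, h4⟩ := exists_head Γ G v
  exact ⟨⟨s, h1, h2, h3, h4⟩⟩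

theorem path_exists (t : GraphProduct Γ G) : ∃ P : Set (GraphProduct Γ G), P.Finite ∧
    ∀ (F : GraphProduct Γ G → Prop) (x : GraphProduct Γ G), F x ≠ F (x * t) →
      ∃ p ∈ P, ∃ (u : V) (h : G u), p * inc Γ G u h ∈ P ∧
        F (x * p) ≠ F (x * (p * inc Γ G u h)) := by
  induction t using gp_induction with
  | h1 => exact ⟨∅, Set.finite_empty, fun F x h => absurd (by rw [mul_one]) h⟩
  | hi v g =>
    refine ⟨{1, inc Γ G v g}, by simp, fun F x h => ⟨1, by simp, v, g, by simp, ?_⟩⟩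
    simpa using h
  | hm a b ha hb =>
    obtain ⟨P, hP, hP'⟩ := ha
    obtain ⟨R, hR, hR'⟩ := hb
    refine ⟨P ∪ Set.image (fun r => a * r) R, hP.union (hR.image _), fun F x h => ?_⟩
    by_cases h1 : F x = F (x * a)
    · rw [h1, ← mul_assoc] at h
      obtain ⟨p, hp, u, k, hpk, hne⟩ := hR' F (x * a) h
      refine ⟨a * p, Or.inr ⟨p, hp, rfl⟩, u, k, Or.inr ⟨_, hpk, by simp [mul_assoc]⟩, ?_⟩
      simpa only [mul_assoc] using hne
    · obtain ⟨p, hp, u, k, hpk, hne⟩ := hP' F x h1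
      exact ⟨p, Or.inl hp, u, k, Or.inl hpk, hne⟩

theorem const_of_step (F : GraphProduct Γ G → Prop)
    (hF : ∀ z u (h : G u), F z = F (z * inc Γ G u h)) (x y : GraphProduct Γ G) : F x = F y := by
  by_contra hne
  obtain ⟨P, -, hP⟩ := path_exists (x⁻¹ * y)
  obtain ⟨p, -, u, h, -, h2⟩ := hP F x (by simpa using hne)
  exact h2 (by rw [← mul_assoc]; exact hF _ _ _)

namespace HeadFn
variable {v : V} (H : HeadFn Γ G v)

theorem right_vs {S : Set V} (hS : v ∉ S) {c : GraphProduct Γ G}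
    (hc : c ∈ vertexSubgroup Γ G S) : ∀ x, H.s (x * c) = H.s x := by
  unfold vertexSubgroup at hc
  induction hc using Subgroup.closure_induction with
  | mem y hy =>
    obtain ⟨u, hu, g, rfl⟩ := hy
    intro x
    exact H.right u (fun h => hS (h ▸ hu)) g x
  | one => simp
  | mul a b _ _ ha hb => intro x; rw [← mul_assoc, hb, ha]
  | inv a _ ha => intro x; rw [← ha (x * a⁻¹), inv_mul_cancel_right]

theorem right_lk {c : GraphProduct Γ G} (hc : c ∈ Lk Γ G v) (x) : H.s (x * c) = H.s x :=
  H.right_vs (by simp) hc x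

theorem s_lk {c : GraphProduct Γ G} (hc : c ∈ Lk Γ G v) : H.s c = 1 := by
  have := H.right_lk hc 1
  rwa [one_mul, H.one] at this

theorem s_inc (a : G v) : H.s (inc Γ G v a) = a := by
  have := H.left a 1
  rwa [mul_one, H.one, mul_one] at this

theorem s_inc_ne {u : V} (hu : u ≠ v) (a : G u) : H.s (inc Γ G u a) = 1 := by
  have := H.right u hu a 1
  rwa [one_mul, H.one] at this

theorem s_mul_lk (a : G v) {c : GraphProduct Γ G} (hc : c ∈ Lk Γ G v) :
    H.s (inc Γ G v a * c) = a := by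
  rw [H.left, H.s_lk hc, mul_one]

theorem form_mul (a h : G v) {c : GraphProduct Γ G} (hc : c ∈ Lk Γ G v) :
    inc Γ G v a * c * inc Γ G v h = inc Γ G v (a * h) * c := by
  rw [mul_assoc, lk_comm Γ G v h hc, map_mul, mul_assoc]

theorem cross_cases (z : GraphProduct Γ G) (u : V) (h : G u) :
    H.s (z * inc Γ G u h) = H.s z ∨ ∃ a b : G v, ∃ c ∈ Lk Γ G v, z = inc Γ G v a * c ∧
      z * inc Γ G u h = inc Γ G v b * c := by
  by_cases hu : u = v
  · subst hu
    by_cases hs : H.s (z * inc Γ G u h) = H.s z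
    · exact Or.inl hs
    · obtain ⟨a, c, hc, rfl⟩ := H.cross z h hs
      exact Or.inr ⟨a, a * h, c, hc, rfl, form_mul a h hc⟩
  · exact Or.inl (H.right u hu h z)

theorem cross_one {z : GraphProduct Γ G} {u : V} {h : G u}
    (hne : (H.s z = 1) ≠ (H.s (z * inc Γ G u h) = 1)) :
    z ∈ Lk Γ G v ∨ z * inc Γ G u h ∈ Lk Γ G v := by
  rcases H.cross_cases z u h with h1 | ⟨a, b, c, hc, h1, h2⟩
  · rw [h1] at hne; exact absurd rfl hne
  · rw [h2, h1, H.s_mul_lk a hc, H.s_mul_lk b hc] at hne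
    by_cases ha : a = 1
    · left; rw [h1, ha]; simpa using hc
    · by_cases hb : b = 1
      · right; rw [h2, hb]; simpa using hc
      · exact absurd (by simp [ha, hb]) hne

theorem mem_lk_of {z : GraphProduct Γ G} {u : V} {h : G u} (h1 : H.s z = 1)
    (h2 : H.s (z * inc Γ G u h) ≠ 1) : z ∈ Lk Γ G v := by
  rcases H.cross_one (z := z) (u := u) (h := h) (by simp [h1, h2]) with h3 | h3
  · exact h3
  · exact absurd (H.s_lk h3) h2

theorem left_lk {c : GraphProduct Γ G} (hc : c ∈ Lk Γ G v) (g : GraphProduct Γ G) :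
    H.s (c * g) = H.s g := by
  have key : ∀ g z, H.s (c * z) = H.s z → H.s (c * (z * g)) = H.s (z * g) := by
    intro g
    induction g using gp_induction with
    | h1 => intro z hz; simpa using hz
    | hi u h =>
      intro z hz
      rcases H.cross_cases z u h with h1 | ⟨a, b, c', hc', h1, h2⟩
      · rcases H.cross_cases (c * z) u h with h3 | ⟨a, b, c', hc', h3, h4⟩
        · rw [← mul_assoc, h3, h1, hz]
        · have e : ∀ a, c⁻¹ * (inc Γ G v a * c') = inc Γ G v a * (c⁻¹ * c') := by
            intro a
            rw [← mul_assoc, lk_comm Γ G v a (inv_mem hc), mul_assoc]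
          have h5 : H.s z = a := by
            rw [← hz, h3, H.s_mul_lk a hc']
          have h6 : H.s (z * inc Γ G u h) = b := by
            have : z * inc Γ G u h = c⁻¹ * (inc Γ G v b * c') := by rw [← h4]; group
            rw [this, e, H.s_mul_lk b (mul_mem (inv_mem hc) hc')]
          rw [← mul_assoc, h4, H.s_mul_lk b hc', h6]
      · rw [h2, ← mul_assoc, lk_comm Γ G v b hc, mul_assoc, H.s_mul_lk b (mul_mem hc hc'),
          H.s_mul_lk b hc']
    | hm x y hx hy =>
      intro z hz
      rw [← mul_assoc z]
      exact hy _ (hx z hz)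
  simpa using key g 1 (by simp [H.s_lk hc, H.one])

theorem const_b {m : GraphProduct Γ G} {b : G v} (hm : H.s m ≠ b) {x y : GraphProduct Γ G}
    (hx : H.s x = b) (hy : H.s y = b) : (H.s (m⁻¹ * x) = 1) = (H.s (m⁻¹ * y) = 1) := by
  have key := const_of_step
    (fun x => H.s (m⁻¹ * (inc Γ G v (b * (H.s x)⁻¹) * x)) = 1) (by
      intro z u h
      show (H.s _ = 1) = (H.s _ = 1)
      rcases H.cross_cases z u h with h1 | ⟨a, b', c, hc, h1, h2⟩
      · rw [h1]
        by_contra hne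
        set w := inc Γ G v (b * (H.s z)⁻¹) * z with hw
        have hsw : H.s w = b := by rw [hw, H.left]; group
        have hsw2 : H.s (w * inc Γ G u h) = b := by rw [hw, mul_assoc, H.left, h1]; group
        have e : m⁻¹ * (inc Γ G v (b * (H.s z)⁻¹) * (z * inc Γ G u h))
            = m⁻¹ * w * inc Γ G u h := by rw [hw]; group
        rw [e] at hne
        rcases H.cross_one hne with h3 | h3
        · have := H.right_lk h3 m
          rw [mul_inv_cancel_left, hsw] at this
          exact hm this.symm
        · have := H.right_lk h3 m
          rw [mul_assoc, mul_inv_cancel_left, hsw2] at this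
          exact hm this.symm
      · rw [h2, h1, H.s_mul_lk a hc, H.s_mul_lk b' hc]
        congr 3
        simp only [map_mul, map_inv]
        group) x y
  simpa [hx, hy] using key

theorem const_ne {m : GraphProduct Γ G} (hm : H.s m = 1) {x y : GraphProduct Γ G}
    (hx : H.s x ≠ 1) (hy : H.s y ≠ 1) : (H.s (m⁻¹ * x) = 1) = (H.s (m⁻¹ * y) = 1) := by
  have h1 := H.const_b (m := m) (b := H.s x) (hm ▸ hx.symm) rfl (H.s_inc (H.s x))
  have h2 := H.const_b (m := m) (b := H.s y) (hm ▸ hy.symm) rfl (H.s_inc (H.s y))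
  rw [h1, h2]
  by_contra hne
  have e : m⁻¹ * inc Γ G v (H.s y) = m⁻¹ * inc Γ G v (H.s x) * inc Γ G v ((H.s x)⁻¹ * H.s y) := by
    rw [mul_assoc, ← map_mul, mul_inv_cancel_left]
  rw [e] at hne
  rcases H.cross_one hne with h3 | h3
  · have := H.right_lk h3 m
    rw [mul_inv_cancel_left, hm, H.s_inc] at this
    exact hx this
  · rw [← e] at h3
    have := H.right_lk h3 m
    rw [mul_inv_cancel_left, hm, H.s_inc] at this
    exact hy this

theorem pingpong [Nontrivial (G v)] {h : GraphProduct Γ G} (h1 : H.s h = 1) (h2 : H.s h⁻¹ = 1)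
    (hL : h ∉ Lk Γ G v) {g : GraphProduct Γ G} (hg : H.s g ≠ 1) : H.s (h * g) = 1 := by
  by_contra hne
  obtain ⟨b, hb⟩ := exists_ne (1 : G v)
  have := H.const_ne h1 hne (y := inc Γ G v b) (by rwa [H.s_inc])
  rw [inv_mul_cancel_left] at this
  have h3 : H.s (h⁻¹ * inc Γ G v b) ≠ 1 := fun h => hg (this ▸ h)
  exact hL (inv_mem_iff.1 (H.mem_lk_of h2 h3))

theorem inc_notMem_lk {w : V} (hw : ¬ Γ.Adj v w) {h : G w} (hh : h ≠ 1) :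
    inc Γ G w h ∉ Lk Γ G v := by
  intro hmem
  obtain ⟨H'⟩ := headFn_nonempty (Γ := Γ) (G := G) w
  have := H'.right_vs (S := {u | Γ.Adj v u}) hw hmem 1
  rw [one_mul, H'.s_inc, H'.one] at this
  exact hh this

theorem exists_good [∀ v, Nontrivial (G v)] (N : Subgroup (GraphProduct Γ G)) [hN : N.Normal]
    {w : V} (hwv : w ≠ v) (hadj : ¬ Γ.Adj v w) (hNL : ¬ N ≤ Lk Γ G v) :
    ∃ n ∈ N, H.s n ≠ 1 ∧ ∀ x, H.s x ≠ 1 → H.s (n * x) ≠ 1 := by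
  obtain ⟨b, hb⟩ := exists_ne (1 : G v)
  obtain ⟨h0, hh0⟩ := exists_ne (1 : G w)
  have hL := inc_notMem_lk (G := G) hadj hh0
  set h := inc Γ G w h0
  have hs : H.s h = 1 := H.s_inc_ne hwv h0
  have hs' : H.s h⁻¹ = 1 := by
    have := H.s_inc_ne hwv h0⁻¹
    rwa [map_inv] at this
  have caseA : ∀ m ∈ N, (∀ x, H.s x = 1 → H.s (m * x) ≠ 1) →
      ∃ n ∈ N, H.s n ≠ 1 ∧ ∀ x, H.s x ≠ 1 → H.s (n * x) ≠ 1 := by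
    intro m hm hmx
    refine ⟨m * (h * m * h⁻¹), mul_mem hm (hN.conj_mem m hm h), ?_, ?_⟩
    · apply hmx
      rw [mul_assoc]
      exact H.pingpong hs hs' hL (hmx _ hs')
    · intro x hx
      rw [mul_assoc]
      apply hmx
      rw [mul_assoc, mul_assoc]
      apply H.pingpong hs hs' hL
      apply hmx
      exact H.pingpong hs' (by rwa [inv_inv]) (fun h => hL (inv_mem_iff.1 h)) hx
  have caseB : ∀ m ∈ N, (∀ x, H.s x ≠ 1 → H.s (m * x) = 1) →
      ∃ n ∈ N, H.s n ≠ 1 ∧ ∀ x, H.s x ≠ 1 → H.s (n * x) ≠ 1 := by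
    intro m hm hmx
    apply caseA _ (hN.conj_mem m hm (inc Γ G v b))
    intro x hx
    rw [mul_assoc, mul_assoc, H.left, hmx, mul_one]
    · exact hb
    · rw [← map_inv, H.left, hx, mul_one]
      simpa using hb
  obtain ⟨m, hm, hmL⟩ := Set.not_subset.1 hNL
  change m ∈ N at hm
  change m ∉ Lk Γ G v at hmL
  by_cases hsm : H.s m = 1
  · have hbs : H.s (inc Γ G v b) ≠ 1 := by rwa [H.s_inc]
    by_cases h1 : H.s (m⁻¹ * inc Γ G v b) = 1
    · apply caseB m⁻¹ (inv_mem hm)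
      intro x hx
      rw [H.const_ne hsm hx hbs]
      exact h1
    · refine ⟨m⁻¹, inv_mem hm, ?_, ?_⟩
      · intro h2
        exact hmL (inv_mem_iff.1 (H.mem_lk_of h2 h1))
      · intro x hx
        rw [ne_eq, H.const_ne hsm hx hbs]
        exact h1
  · by_cases h1 : H.s m⁻¹ = 1
    · refine ⟨m, hm, hsm, fun x hx hmx => hx ?_⟩
      have := H.const_b hsm hmx H.one
      rw [inv_mul_cancel_left, mul_one] at this
      rw [this]; exact h1
    · apply caseA m⁻¹ (inv_mem hm)
      intro x hx
      rw [ne_eq, H.const_b hsm hx H.one, mul_one]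
      exact h1

theorem pigeon (q : ℕ → GraphProduct Γ G) (x : GraphProduct Γ G)
    (hq : ∀ k, (H.s (q k) = 1) ≠ (H.s (q k * x) = 1)) :
    ∃ j k, j < k ∧ q j * (q k)⁻¹ ∈ Lk Γ G v := by
  obtain ⟨P, hP, hP'⟩ := path_exists x
  have h1 : ∀ k, ∃ p : P, q k * p ∈ Lk Γ G v := by
    intro k
    obtain ⟨p, hp, u, h, hph, hne⟩ := hP' (fun y => H.s y = 1) (q k) (hq k)
    change (H.s (q k * p) = 1) ≠ (H.s (q k * (p * inc Γ G u h)) = 1) at hne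
    rw [← mul_assoc] at hne
    rcases H.cross_one hne with h2 | h2
    · exact ⟨⟨p, hp⟩, h2⟩
    · exact ⟨⟨_, hph⟩, by rwa [mul_assoc] at h2⟩
  choose f hf using h1
  have : Finite P := hP
  obtain ⟨j, k, hjk, he⟩ := Finite.exists_ne_map_eq_of_infinite f
  have key : ∀ j k, f j = f k → q j * (q k)⁻¹ ∈ Lk Γ G v := by
    intro j k he
    have := mul_mem (hf j) (inv_mem (hf k))
    rw [he] at this
    convert this using 1
    group
  rcases lt_or_gt_of_ne hjk with h | h
  · exact ⟨j, k, h, key j k he⟩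
  · exact ⟨k, j, h, key k j he.symm⟩

theorem both_sides {n : GraphProduct Γ G} (hn : H.s n ≠ 1)
    (hn' : ∀ x, H.s x ≠ 1 → H.s (n * x) ≠ 1) (x : GraphProduct Γ G) :
    (∃ k : ℕ, H.s (n ^ k * x) ≠ 1) ∧ ∃ k : ℕ, H.s ((n⁻¹) ^ k * x) = 1 := by
  have hpow : ∀ k : ℕ, H.s (n ^ (k + 1)) ≠ 1 := by
    intro k
    induction k with
    | zero => simpa using hn
    | succ k ih => rw [pow_succ']; exact hn' _ ih
  have hinv : ∀ k : ℕ, H.s ((n⁻¹) ^ k) = 1 := by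
    intro k
    induction k with
    | zero => simpa using H.one
    | succ k ih =>
      by_contra h
      apply hn' _ h
      rw [pow_succ', mul_inv_cancel_left]
      exact ih
  constructor
  · by_contra! hall
    obtain ⟨j, k, hjk, hm⟩ := H.pigeon (fun k => n ^ (k + 1)) x (by
      intro k; simp [hpow k, hall (k + 1)])
    obtain ⟨d, rfl⟩ := Nat.exists_eq_add_of_lt hjk
    have e : n ^ (j + 1) * (n ^ (j + d + 1 + 1))⁻¹ = (n ^ (d + 1))⁻¹ := by
      rw [show j + d + 1 + 1 = (d + 1) + (j + 1) by ring, pow_add n (d + 1) (j + 1)]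
      group
    simp only [e] at hm
    exact hpow d (H.s_lk (inv_mem_iff.1 hm))
  · by_contra! hall
    obtain ⟨j, k, hjk, hm⟩ := H.pigeon (fun k => (n⁻¹) ^ k) x (by
      intro k; simp only [hinv k, hall k]; simp)
    obtain ⟨d, rfl⟩ := Nat.exists_eq_add_of_lt hjk
    have e : (n⁻¹) ^ j * ((n⁻¹) ^ (j + d + 1))⁻¹ = n ^ (d + 1) := by
      rw [show j + d + 1 = (d + 1) + j by ring, pow_add n⁻¹ (d + 1) j, mul_inv_rev,
        mul_inv_cancel_left, inv_pow, inv_inv]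
    simp only [e] at hm
    exact hpow d (H.s_lk hm)

theorem cover (H : HeadFn Γ G v) [∀ v, Nontrivial (G v)] (N : Subgroup (GraphProduct Γ G)) [hN : N.Normal]
    (hfg : N.FG) {w : V} (hwv : w ≠ v) (hadj : ¬ Γ.Adj v w) (hNL : ¬ N ≤ Lk Γ G v) :
    ∃ P : Set (GraphProduct Γ G), P.Finite ∧
      ∀ g, ∃ n ∈ N, ∃ p ∈ P, g * n * p ∈ Lk Γ G v := by
  obtain ⟨n, hnN, hn, hn'⟩ := H.exists_good N hwv hadj hNL
  obtain ⟨S, hS⟩ := hfg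
  choose P hPf hP using fun t : GraphProduct Γ G => path_exists (Γ := Γ) (G := G) t
  refine ⟨⋃ t ∈ S, P t, S.finite_toSet.biUnion (fun t _ => hPf t), fun g => ?_⟩
  by_contra! hcon
  have hstep : ∀ n ∈ N, ∀ t ∈ S, (H.s (g * n) = 1) = (H.s (g * n * t) = 1) := by
    intro n hn t ht
    by_contra hne
    obtain ⟨p, hp, u, h, hph, h2⟩ := hP t (fun y => H.s y = 1) (g * n) hne
    change (H.s (g * n * p) = 1) ≠ (H.s (g * n * (p * inc Γ G u h)) = 1) at h2
    rw [← mul_assoc] at h2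
    rcases H.cross_one h2 with h3 | h3
    · exact hcon n hn p (Set.mem_biUnion ht hp) h3
    · rw [mul_assoc] at h3
      exact hcon n hn _ (Set.mem_biUnion ht hph) h3
  have hall : ∀ m ∈ Subgroup.closure (S : Set (GraphProduct Γ G)), ∀ n ∈ N,
      (H.s (g * n) = 1) = (H.s (g * n * m) = 1) := by
    intro m hm
    induction hm using Subgroup.closure_induction with
    | mem t ht => exact fun n hn => hstep n hn t ht
    | one => simp
    | mul a b ha hb iha ihb =>
      intro n hn
      rw [hS] at ha
      rw [iha n hn, mul_assoc g n a, ihb (n * a) (mul_mem hn ha)]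
      simp only [mul_assoc]
    | inv a ha iha =>
      intro n hn
      rw [hS] at ha
      have := iha (n * a⁻¹) (mul_mem hn (inv_mem ha))
      rw [← mul_assoc, inv_mul_cancel_right] at this
      exact this.symm
  rw [hS] at hall
  have hconj : ∀ m ∈ N, (H.s g = 1) = (H.s (m * g) = 1) := by
    intro m hm
    have h1 := hN.conj_mem m hm g⁻¹
    have := hall _ h1 1 (one_mem _)
    rw [mul_one] at this
    have e : g * (g⁻¹ * m * g⁻¹⁻¹) = m * g := by group
    rw [this, e]
  obtain ⟨⟨k, hk⟩, l, hl⟩ := H.both_sides hn hn' g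
  rw [← hconj _ (pow_mem (inv_mem hnN) l)] at hl
  rw [hconj _ (pow_mem hnN k)] at hl
  exact hk hl

end HeadFn

theorem lk_spread [∀ v, Nontrivial (G v)] (M : Subgroup (GraphProduct Γ G)) [hM : M.Normal]
    {u w : V} (hadj : ¬ Γ.Adj u w) (h : M ≤ Lk Γ G u) : M ≤ Lk Γ G w := by
  intro m hm
  obtain ⟨H⟩ := headFn_nonempty (Γ := Γ) (G := G) w
  obtain ⟨a, ha⟩ := exists_ne (1 : G w)
  have h1 := H.right_vs (S := {x | Γ.Adj u x}) hadj (h (hM.conj_mem m hm (inc Γ G w a))) 1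
  have h2 := H.right_vs (S := {x | Γ.Adj u x}) hadj (h hm) 1
  rw [one_mul, H.one] at h1 h2
  rw [mul_assoc, H.left, ← map_inv] at h1
  apply H.mem_lk_of (u := w) (h := a⁻¹) h2
  intro h3
  rw [h3, mul_one] at h1
  exact ha h1

open Classical in
/-- The retraction killing the vertex group of `u`. -/
noncomputable def kill (Γ : SimpleGraph V) (G : V → Type) [∀ v, Group (G v)] (u : V) :
    GraphProduct Γ G →* GraphProduct Γ G :=
  gpLift (fun x => if x = u then 1 else inc Γ G x) (by
    intro x w hxw g h
    by_cases hx : x = u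
    · simp [hx]
    · by_cases hw : w = u
      · simp [hw]
      · simp [hx, hw, inc_comm Γ G hxw])

theorem mem_diff {S : Set V} {u : V} {m : GraphProduct Γ G} (hm : m ∈ vertexSubgroup Γ G S)
    (hu : m ∈ Lk Γ G u) : m ∈ vertexSubgroup Γ G (S \ {u}) := by
  have h1 : Lk Γ G u ≤ (kill Γ G u).eqLocus (MonoidHom.id _) := by
    apply vs_le
    intro x hx g
    have : x ≠ u := (SimpleGraph.Adj.ne hx).symm
    show kill Γ G u _ = _
    simp [kill, gpLift_inc, this]
  have h2 : vertexSubgroup Γ G S ≤ (vertexSubgroup Γ G (S \ {u})).comap (kill Γ G u) := by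
    apply vs_le
    intro x hx g
    rw [Subgroup.mem_comap]
    by_cases hxu : x = u
    · simp [kill, gpLift_inc, hxu]
    · simp only [kill, gpLift_inc, hxu, if_false]
      exact inc_mem Γ G (show x ∈ S \ {u} from ⟨hx, hxu⟩) g
  have h3 : kill Γ G u m = m := h1 hu
  have h4 := h2 hm
  rwa [Subgroup.mem_comap, h3] at h4

theorem eq_one_of_all_lk [Finite V] {S : Set V} {m : GraphProduct Γ G}
    (hm : m ∈ vertexSubgroup Γ G S) (h : ∀ u ∈ S, m ∈ Lk Γ G u) : m = 1 := by
  have key : ∀ T : Set V, T.Finite → m ∈ vertexSubgroup Γ G (S \ (T ∩ S)) := by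
    intro T hT
    induction T, hT using Set.Finite.induction_on with
    | empty => simpa using hm
    | @insert a T _ _ ih =>
      by_cases ha : a ∈ S
      · have := mem_diff ih (h a ha)
        convert this using 2
        ext x
        simp
        tauto
      · convert ih using 2
        ext x
        simp only [Set.mem_sdiff, Set.mem_inter_iff, Set.mem_insert_iff]
        constructor
        · tauto
        · rintro ⟨h1, h2⟩
          refine ⟨h1, ?_⟩
          rintro ⟨rfl | h3, h4⟩
          · exact ha h4
          · exact h2 ⟨h3, h4⟩
  have h1 := key Set.univ Set.finite_univ
  simp only [Set.univ_inter, sdiff_self] at h1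
  have h2 : vertexSubgroup Γ G (⊥ : Set V) ≤ ⊥ := by
    apply vs_le
    intro v hv
    exact absurd hv (by simp)
  simpa using h2 h1

theorem exists_decomp [Finite V] (Γ : SimpleGraph V) (v : V) :
    ∃ (k : ℕ) (P : Fin k → Set V) (i : Fin k), IsJoinDecomposition Γ P ∧
      ∀ x ∈ P i, Γᶜ.Reachable v x := by
  have : Finite Γᶜ.ConnectedComponent := Quot.finite _
  obtain ⟨k, ⟨e⟩⟩ := Finite.exists_equiv_fin Γᶜ.ConnectedComponent
  refine ⟨k, fun i => (e.symm i).supp, e (Γᶜ.connectedComponentMk v), ⟨?_, ?_, ?_, ?_⟩, ?_⟩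
  · intro i
    exact SimpleGraph.ConnectedComponent.nonempty_supp _
  · intro x
    refine ⟨e (Γᶜ.connectedComponentMk x), by simp, ?_⟩
    intro i hi
    rw [SimpleGraph.ConnectedComponent.mem_supp_iff] at hi
    rw [hi]; simp
  · intro i j hij a ha b hb
    rw [SimpleGraph.ConnectedComponent.mem_supp_iff] at ha hb
    by_contra hab
    have hne : a ≠ b := by
      rintro rfl
      exact hij (e.symm.injective (ha.symm.trans hb))
    have h1 : Γᶜ.Adj a b := (SimpleGraph.compl_adj _ _ _).2 ⟨hne, hab⟩
    have h2 := SimpleGraph.ConnectedComponent.connectedComponentMk_eq_of_adj h1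
    exact hij (e.symm.injective (ha.symm.trans (h2.trans hb)))
  · rintro i ⟨A, B, ⟨a, ha⟩, ⟨b, hb⟩, hd, hU, hadj⟩
    change A ∪ B = (e.symm i).supp at hU
    have hr : Γᶜ.Reachable a b :=
      SimpleGraph.ConnectedComponent.reachable_of_mem_supp (e.symm i)
        (hU ▸ Or.inl ha) (hU ▸ Or.inr hb)
    obtain ⟨p⟩ := hr
    have key : ∀ x y : V, Γᶜ.Walk x y → x ∈ A → y ∈ A := by
      intro x y p
      induction p with
      | nil => exact id
      | @cons x y z hxy p ih =>
        intro hx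
        apply ih
        have hy : y ∈ (e.symm i).supp :=
          SimpleGraph.ConnectedComponent.mem_supp_of_adj_mem_supp (e.symm i)
            (hU ▸ Or.inl hx) hxy
        rw [← hU] at hy
        rcases hy with hy | hy
        · exact hy
        · exact absurd (hadj x hx y hy) ((SimpleGraph.compl_adj _ _ _).1 hxy).2
    exact Set.disjoint_left.1 hd (key a b p ha) hb
  · intro x hx
    simp only [Equiv.symm_apply_apply, SimpleGraph.ConnectedComponent.mem_supp_iff] at hx
    exact (SimpleGraph.ConnectedComponent.eq.1 hx).symm

theorem not_le_lk [Finite V] [∀ v, Nontrivial (G v)] (N : Subgroup (GraphProduct Γ G)) [N.Normal]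
    (hfull : IsFullSubgroup Γ G N) (v : V) : ¬ N ≤ Lk Γ G v := by
  intro hN
  obtain ⟨k, P, i, hP, hr⟩ := exists_decomp Γ v
  have key : ∀ x y : V, Γᶜ.Walk x y → N ≤ Lk Γ G x → N ≤ Lk Γ G y := by
    intro x y p
    induction p with
    | nil => exact id
    | cons hxy p ih =>
      intro hx
      exact ih (lk_spread N ((SimpleGraph.compl_adj _ _ _).1 hxy).2 hx)
  apply hfull k P hP i
  rw [eq_bot_iff]
  rintro m ⟨hm1, hm2⟩
  rw [Subgroup.mem_bot]
  apply eq_one_of_all_lk hm2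
  intro u hu
  obtain ⟨p⟩ := hr u hu
  exact key v u p hN hm1

theorem finiteByAbelian_of_center {Q : Type} [Group Q] [(Subgroup.center Q).FiniteIndex] :
    FiniteByAbelian Q := by
  have hfin : Finite (commutatorSet Q) := by
    have : commutatorSet Q ⊆ Set.range
        (fun p : (Q ⧸ Subgroup.center Q) × (Q ⧸ Subgroup.center Q) => 
          p.1.out * p.2.out * (p.1.out)⁻¹ * (p.2.out)⁻¹) := by
      rintro x ⟨a, b, rfl⟩
      refine ⟨(a, b), ?_⟩
      obtain ⟨⟨c, hc⟩, h1⟩ := QuotientGroup.mk_out_eq_mul (Subgroup.center Q) a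
      obtain ⟨⟨d, hd⟩, h2⟩ := QuotientGroup.mk_out_eq_mul (Subgroup.center Q) b
      simp only [h1, h2]
      rw [Subgroup.mem_center_iff] at hc hd
      simp only [commutatorElement_def, mul_inv_rev]
      have e1 : a * c * (b * d) * (c⁻¹ * a⁻¹) * (d⁻¹ * b⁻¹)
          = a * (c * (b * d)) * (c⁻¹ * a⁻¹) * (d⁻¹ * b⁻¹) := by group
      have e2 : a * (b * d * c) * (c⁻¹ * a⁻¹) * (d⁻¹ * b⁻¹) = a * b * (d * a⁻¹) * d⁻¹ * b⁻¹ := by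
        group
      rw [e1, ← hc (b * d), e2, ← hd a⁻¹]
      group
    exact Set.Finite.subset (Set.finite_range _) this
  refine ⟨commutator Q, inferInstance, inferInstance, fun x y => ?_⟩
  have := Subgroup.commutator_mem_commutator (Subgroup.mem_top x) (Subgroup.mem_top y)
  rwa [commutatorElement_def] at this

theorem center_finiteIndex [Finite V] [∀ v, Nontrivial (G v)]
    (hnc : ∀ v : V, ¬ IsCentralVertex Γ v)
    (N : Subgroup (GraphProduct Γ G)) [N.Normal]
    (hfg : N.FG) (hfull : IsFullSubgroup Γ G N) :
    (Subgroup.center (GraphProduct Γ G ⧸ N)).FiniteIndex := by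
  have hC : ∀ v : V, (Subgroup.centralizer
      (Set.range fun a => (QuotientGroup.mk (inc Γ G v a) : GraphProduct Γ G ⧸ N))).FiniteIndex := by
    intro v
    have hv := hnc v
    unfold IsCentralVertex at hv
    push Not at hv
    obtain ⟨w, hwv, hadj⟩ := hv
    obtain ⟨H⟩ := headFn_nonempty (Γ := Γ) (G := G) v
    obtain ⟨P, hPf, hP⟩ := H.cover N hfg hwv hadj (not_le_lk N hfull v)
    set K := (Lk Γ G v).map (QuotientGroup.mk' N) with hK
    have hKf : K.FiniteIndex := by
      have : Finite P := hPf
      have hsurj : Function.Surjective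
          (fun p : P => (((p : GraphProduct Γ G) : GraphProduct Γ G ⧸ N) :
            (GraphProduct Γ G ⧸ N) ⧸ K)) := by
        intro x
        obtain ⟨q, rfl⟩ := QuotientGroup.mk_surjective x
        obtain ⟨g, rfl⟩ := QuotientGroup.mk_surjective q
        obtain ⟨n, hn, p, hp, hL⟩ := hP g⁻¹
        refine ⟨⟨p, hp⟩, ?_⟩
        symm
        rw [QuotientGroup.eq]
        refine ⟨_, hL, ?_⟩
        have : ((n : GraphProduct Γ G) : GraphProduct Γ G ⧸ N) = 1 :=
          (QuotientGroup.eq_one_iff n).2 hn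
        simp [this]
      have : Finite ((GraphProduct Γ G ⧸ N) ⧸ K) := Finite.of_surjective _ hsurj
      exact Subgroup.finiteIndex_of_finite_quotient
    refine Subgroup.finiteIndex_of_le (H := K) ?_
    rintro _ ⟨c, hc, rfl⟩
    rw [Subgroup.mem_centralizer_iff]
    rintro _ ⟨a, rfl⟩
    have := congrArg (QuotientGroup.mk' N) (lk_comm Γ G v a hc)
    simp only [map_mul] at this
    exact this.symm
  have hI : (⨅ v : V, Subgroup.centralizer
      (Set.range fun a => (QuotientGroup.mk (inc Γ G v a) : GraphProduct Γ G ⧸ N))).FiniteIndex :=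
    Subgroup.finiteIndex_iInf hC
  refine Subgroup.finiteIndex_of_le (H := ⨅ v : V, Subgroup.centralizer
      (Set.range fun a => (QuotientGroup.mk (inc Γ G v a) : GraphProduct Γ G ⧸ N))) ?_
  intro z hz
  rw [Subgroup.mem_iInf] at hz
  rw [Subgroup.mem_center_iff]
  intro g
  obtain ⟨g, rfl⟩ := QuotientGroup.mk_surjective g
  induction g using gp_induction with
  | h1 => simp
  | hi v a => exact Subgroup.mem_centralizer_iff.1 (hz v) _ ⟨a, rfl⟩
  | hm x y hx hy => rw [QuotientGroup.mk_mul, mul_assoc, hy, ← mul_assoc, hx, mul_assoc]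

end Dyn
end GPAux

theorem quotient_of_graph_product_without_central_vertices_by_fg_full_normal_subgroup
    {V : Type} [Fintype V] (Γ : SimpleGraph V) (G : V → Type)
    [∀ v, Group (G v)] [∀ v, Nontrivial (G v)]
    (hnc : ∀ v : V, ¬ IsCentralVertex Γ v)
    (N : Subgroup (GraphProduct Γ G)) [N.Normal]
    (hfg : N.FG) (hfull : IsFullSubgroup Γ G N) :
    AbelianByFinite (GraphProduct Γ G ⧸ N) ∧ FiniteByAbelian (GraphProduct Γ G ⧸ N) := by
  have := GPAux.center_finiteIndex hnc N hfg hfull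
  refine ⟨⟨Subgroup.center _, inferInstance, this, fun x y => ?_⟩,
    GPAux.finiteByAbelian_of_center⟩
  exact Subtype.ext (Subgroup.mem_center_iff.1 y.2 x)
end

section
/- Let Γ be a finite simple graph and let G = G(Γ) be the associated right-angled Artin group. Let N be any finitely generated normal subgroup of G. Then G/N is virtually a RAAG, i.e., there exist a finite simple graph Δ and a finite index subgroup of G/N isomorphic to the right-angled Artin group G(Δ). -/
/-- The defining relators of a right-angled Artin group: commutators of generators
corresponding to adjacent vertices. -/
def raagRels {V : Type} (Γ : SimpleGraph V) : Set (FreeGroup V) :=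
  { r | ∃ v w : V, Γ.Adj v w ∧
      r = FreeGroup.of v * FreeGroup.of w * (FreeGroup.of v)⁻¹ * (FreeGroup.of w)⁻¹ }

/-- The right-angled Artin group associated to the simple graph `Γ`. -/
abbrev RAAG {V : Type} (Γ : SimpleGraph V) : Type := PresentedGroup (raagRels Γ)


namespace RaagQuot

section Abstract

variable {G : Type} [Group G]

/-- Permutation module. -/
noncomputable def T (X : Type) [MulAction G X] (g : G) : (X →₀ ℤ) →ₗ[ℤ] (X →₀ ℤ) :=
  Finsupp.lmapDomain ℤ ℤ (fun x : X => g • x)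

theorem T_def {X : Type} [MulAction G X] (g : G) (f : X →₀ ℤ) :
    T X g f = Finsupp.mapDomain (fun x : X => g • x) f := rfl

theorem T_single {X : Type} [MulAction G X] (g : G) (x : X) (c : ℤ) :
    T X g (Finsupp.single x c) = Finsupp.single (g • x) c := by
  rw [T_def, Finsupp.mapDomain_single]

theorem T_apply_smul {X : Type} [MulAction G X] (g : G) (f : X →₀ ℤ) (x : X) :
    T X g f (g • x) = f x := by
  rw [T_def]
  exact Finsupp.mapDomain_apply (MulAction.injective g) f x

theorem T_apply {X : Type} [MulAction G X] (g : G) (f : X →₀ ℤ) (x : X) :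
    T X g f x = f (g⁻¹ • x) := by
  rw [← T_apply_smul g f (g⁻¹ • x), smul_inv_smul]

@[simp]
theorem T_one {X : Type} [MulAction G X] (f : X →₀ ℤ) : T X (1 : G) f = f := by
  ext x
  simp [T_apply]

theorem T_mul {X : Type} [MulAction G X] (g h : G) (f : X →₀ ℤ) :
    T X (g * h) f = T X g (T X h f) := by
  ext x
  simp [T_apply, mul_smul]

theorem T_inv_cancel {X : Type} [MulAction G X] (g : G) (f : X →₀ ℤ) :
    T X g (T X g⁻¹ f) = f := by
  rw [← T_mul]; simp

/-- A derivation. -/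
def IsDer {X : Type} [MulAction G X] (d : G → (X →₀ ℤ)) : Prop :=
  ∀ g h, d (g * h) = d g + T X g (d h)

theorem IsDer.one {X : Type} [MulAction G X] {d : G → (X →₀ ℤ)} (hd : IsDer d) : d 1 = 0 := by
  have := hd 1 1
  simpa using this

theorem IsDer.inv {X : Type} [MulAction G X] {d : G → (X →₀ ℤ)} (hd : IsDer d) (g : G) :
    d g⁻¹ = - T X g⁻¹ (d g) := by
  have := hd g⁻¹ g
  rw [inv_mul_cancel, hd.one] at this
  exact eq_neg_of_add_eq_zero_left this.symm

/-- Ellipticity, homologically. -/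
def Ell {X : Type} [MulAction G X] (d : G → (X →₀ ℤ)) (n : G) : Prop :=
  ∃ y, d n = y - T X n y

theorem zpow_mem_range {X : Type} [MulAction G X] (n : G) (k : ℤ) (y : X →₀ ℤ) :
    y - T X (n ^ k) y ∈ LinearMap.range (LinearMap.id - T X n) := by
  induction k using Int.induction_on with
  | zero => simp
  | succ k ih =>
    have : y - T X (n ^ ((k : ℤ) + 1)) y
        = (y - T X (n ^ (k : ℤ)) y) +
          (LinearMap.id - T X n : (X →₀ ℤ) →ₗ[ℤ] (X →₀ ℤ)) (T X (n ^ (k : ℤ)) y) := by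
      rw [add_comm (k : ℤ) 1, zpow_add, zpow_one, T_mul]
      simp
    rw [this]
    exact Submodule.add_mem _ ih ⟨_, rfl⟩
  | pred k ih =>
    have : y - T X (n ^ (-(k : ℤ) - 1)) y
        = (y - T X (n ^ (-(k : ℤ))) y) -
          (LinearMap.id - T X n : (X →₀ ℤ) →ₗ[ℤ] (X →₀ ℤ)) (T X (n ^ (-(k : ℤ) - 1)) y) := by
      have h : n ^ (-(k : ℤ)) = n * n ^ (-(k : ℤ) - 1) := by
        rw [← zpow_one_add]; congr 1; ring
      rw [h, T_mul]
      simp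
    rw [this]
    exact Submodule.sub_mem _ ih ⟨_, rfl⟩

open Classical in
theorem ell_of_mapDomain {X : Type} [MulAction G X] (n : G) (f : X →₀ ℤ)
    (h : Finsupp.mapDomain
      (Quotient.mk (MulAction.orbitRel (Subgroup.zpowers n) X)) f = 0) :
    ∃ y, f = y - T X n y := by
  set q : X → Quotient (MulAction.orbitRel (Subgroup.zpowers n) X) := Quotient.mk _ with hq
  let s : Quotient (MulAction.orbitRel (Subgroup.zpowers n) X) → X := Quotient.out
  have key : ∀ f : X →₀ ℤ, f - Finsupp.mapDomain s (Finsupp.mapDomain q f) ∈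
      LinearMap.range (LinearMap.id - T X n) := by
    intro f
    induction f using Finsupp.induction_linear with
    | zero => simp
    | add f g hf hg =>
      rw [Finsupp.mapDomain_add, Finsupp.mapDomain_add, add_sub_add_comm]
      exact Submodule.add_mem _ hf hg
    | single x c =>
      rw [Finsupp.mapDomain_single, Finsupp.mapDomain_single]
      have : (MulAction.orbitRel (Subgroup.zpowers n) X) (s (q x)) x :=
        Quotient.mk_out x
      rw [MulAction.orbitRel_apply] at this
      obtain ⟨⟨m, k, rfl⟩, hm⟩ := this
      have hm' : n ^ k • x = s (q x) := hm
      rw [← hm', ← T_single]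
      exact zpow_mem_range n k _
  have := key f
  rw [h, Finsupp.mapDomain_zero, sub_zero] at this
  obtain ⟨y, hy⟩ := this
  exact ⟨y, by simpa using hy.symm⟩

open Classical in
theorem crit {X : Type} [MulAction G X] [MulAction.IsPretransitive G X]
    {d : G → (X →₀ ℤ)} (hd : IsDer d) (N : Subgroup G) [hN : N.Normal] (hfg : N.FG)
    (n : G) (hn : n ∈ N) (hne : ¬ Ell d n) :
    ∃ F : Finset X, ∀ x, ∃ m ∈ N, ∃ f ∈ F, x = m • f := by
  obtain ⟨S, hS⟩ := hfg
  refine ⟨S.biUnion (fun s => (d s).support), ?_⟩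
  set F := S.biUnion (fun s => (d s).support) with hF
  by_contra hcon
  push Not at hcon
  obtain ⟨x₀, hx₀⟩ := hcon
  -- support of d on N
  have hsup : ∀ m ∈ N, ∀ x, d m x ≠ 0 → ∃ k ∈ N, ∃ f ∈ F, x = k • f := by
    intro m hm
    rw [← hS] at hm
    induction hm using Subgroup.closure_induction with
    | mem s hs =>
      intro x hx
      refine ⟨1, N.one_mem, x, ?_, by simp⟩
      rw [hF, Finset.mem_biUnion]
      exact ⟨s, hs, by simpa using hx⟩
    | one => intro x hx; rw [hd.one] at hx; simp at hx
    | mul a b ha hb iha ihb =>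
      intro x hx
      rw [hS] at ha hb
      rw [hd, Finsupp.add_apply] at hx
      by_cases h1 : d a x = 0
      · rw [h1, zero_add, T_apply] at hx
        obtain ⟨k, hk, f, hf, e⟩ := ihb _ hx
        exact ⟨a * k, N.mul_mem ha hk, f, hf, by rw [mul_smul, ← e]; simp⟩
      · exact iha x h1
    | inv a ha iha =>
      intro x hx
      rw [hS] at ha
      rw [hd.inv, Finsupp.neg_apply, neg_ne_zero, T_apply, inv_inv] at hx
      obtain ⟨k, hk, f, hf, e⟩ := iha _ hx
      exact ⟨a⁻¹ * k, N.mul_mem (N.inv_mem ha) hk, f, hf, by rw [mul_smul, ← e]; simp⟩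
  apply hne
  apply ell_of_mapDomain
  ext e
  induction e using Quotient.inductionOn with
  | h e =>
  obtain ⟨g, hg⟩ := MulAction.exists_smul_eq G x₀ e
  set q : X → Quotient (MulAction.orbitRel (Subgroup.zpowers n) X) := Quotient.mk _ with hq
  have h1 : T X g (d (g⁻¹ * n * g)) = d n + (T X n (d g) - d g) := by
    rw [hd, hd, hd.inv]
    simp only [map_add, map_neg, T_mul, T_inv_cancel]
    abel
  have hqn : ∀ f : X →₀ ℤ, Finsupp.mapDomain q (T X n f) = Finsupp.mapDomain q f := by
    intro f
    rw [T_def, ← Finsupp.mapDomain_comp]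
    congr 1
    funext x
    apply Quotient.sound
    exact ⟨⟨n, Subgroup.mem_zpowers n⟩, rfl⟩
  have h2 : Finsupp.mapDomain q (d n) = Finsupp.mapDomain q (T X g (d (g⁻¹ * n * g))) := by
    rw [h1, Finsupp.mapDomain_add, sub_eq_add_neg, Finsupp.mapDomain_add, hqn,
      ← Finsupp.mapDomain_add, ← Finsupp.mapDomain_add]
    congr 1
    abel
  rw [h2]
  by_contra hz
  have hz' : q e ∈ (Finsupp.mapDomain q (T X g (d (g⁻¹ * n * g)))).support := by
    simpa using hz
  obtain ⟨x, hx, hxe⟩ := Finset.mem_image.1 (Finsupp.mapDomain_support hz')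
  rw [Finsupp.mem_support_iff, T_apply] at hx
  have hnn : g⁻¹ * n * g ∈ N := by simpa using hN.conj_mem n hn g⁻¹
  obtain ⟨k, hk, f, hf, hkf⟩ := hsup _ hnn _ hx
  obtain ⟨⟨m, hm⟩, hme⟩ : (MulAction.orbitRel (Subgroup.zpowers n) X) e x := Quotient.exact hxe.symm
  have hme' : m • x = e := hme
  have hmN : m ∈ N := (Subgroup.zpowers_le.2 hn) hm
  refine hx₀ (g⁻¹ * m * g * k) (N.mul_mem ?_ hk) f hf ?_
  · simpa using hN.conj_mem m hmN g⁻¹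
  · have : x₀ = g⁻¹ • e := by rw [← hg]; simp
    rw [this, ← hme', mul_smul _ k, ← hkf]
    simp [mul_smul]

theorem finiteIndex_of_orbits (N L : Subgroup G) [hN : N.Normal] (F : Finset (G ⧸ L))
    (hF : ∀ x, ∃ m ∈ N, ∃ f ∈ F, x = m • f) : (N ⊔ L).FiniteIndex := by
  let p : G ⧸ L → G ⧸ (N ⊔ L) := Quotient.map' id (by
    intro a b h
    rw [QuotientGroup.leftRel_apply] at h ⊢
    exact (le_sup_right : L ≤ N ⊔ L) h)
  have hp : ∀ g : G, p (g : G ⧸ L) = (g : G ⧸ (N ⊔ L)) := fun g => rfl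
  have hsurj : Function.Surjective (fun f : F => p f) := by
    intro y
    induction y using QuotientGroup.induction_on with
    | H g =>
    obtain ⟨m, hm, f, hf, e⟩ := hF (g : G ⧸ L)
    refine ⟨⟨f, hf⟩, ?_⟩
    rw [← hp, e]
    induction f using QuotientGroup.induction_on with
    | H a =>
    change ((a : G) : G ⧸ (N ⊔ L)) = ((m * a : G) : G ⧸ (N ⊔ L))
    rw [QuotientGroup.eq]
    apply (le_sup_left : N ≤ N ⊔ L)
    rw [← mul_assoc]
    simpa using hN.conj_mem m hm a⁻¹
  have : Finite (G ⧸ (N ⊔ L)) := Finite.of_surjective _ hsurj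
  exact Subgroup.finiteIndex_of_finite_quotient

/-- The boundary argument: elliptic elements have a power fixing a vertex. -/
theorem ell_fix (v : G) (L K : Subgroup G) (hLK : L ≤ K) (hv : ∀ l ∈ L, l * v = v * l)
    (d : G → (G ⧸ L →₀ ℤ)) (hd : IsDer d) (hdv : d v = Finsupp.single ((1 : G) : G ⧸ L) 1)
    (hdK : ∀ k ∈ K, d k = 0) (htop : Subgroup.closure ({v} ∪ K : Set G) = ⊤)
    (n : G) (hn : Ell d n) : ∃ k : ℕ, 0 < k ∧ ∃ g : G, g⁻¹ * n ^ k * g ∈ K := by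
  let t : G ⧸ L → G ⧸ K := Quotient.map' id (by
    intro a b h
    rw [QuotientGroup.leftRel_apply] at h ⊢
    exact hLK h)
  let hd' : G ⧸ L → G ⧸ K := Quotient.map' (fun g => g * v) (by
    intro a b h
    rw [QuotientGroup.leftRel_apply] at h ⊢
    have : (a * v)⁻¹ * (b * v) = a⁻¹ * b := by
      have := hv _ h
      rw [mul_inv_rev]
      calc v⁻¹ * a⁻¹ * (b * v) = v⁻¹ * (a⁻¹ * b * v) := by group
        _ = a⁻¹ * b := by rw [this]; group
    rw [this]
    exact hLK h)
  let bd : (G ⧸ L →₀ ℤ) →ₗ[ℤ] (G ⧸ K →₀ ℤ) :=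
    Finsupp.lmapDomain ℤ ℤ hd' - Finsupp.lmapDomain ℤ ℤ t
  have hbd : ∀ (g : G) f, bd (T (G ⧸ L) g f) = T (G ⧸ K) g (bd f) := by
    intro g f
    induction f using Finsupp.induction_linear with
    | zero => simp
    | add f g hf hg => simp only [map_add, hf, hg]
    | single x c =>
      induction x using QuotientGroup.induction_on with
      | H a =>
      simp only [bd, LinearMap.sub_apply, T_single,
        Finsupp.lmapDomain_apply, Finsupp.mapDomain_single, map_sub]
      congr 2
      change ((g * a * v : G) : G ⧸ K) = ((g * (a * v) : G) : G ⧸ K)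
      rw [mul_assoc]
  have hbdd : ∀ g, bd (d g) = Finsupp.single ((g : G) : G ⧸ K) 1
      - Finsupp.single ((1 : G) : G ⧸ K) 1 := by
    intro g
    have hg : g ∈ Subgroup.closure ({v} ∪ K : Set G) := by rw [htop]; trivial
    have hs : ∀ a b : G, T (G ⧸ K) a (Finsupp.single (b : G ⧸ K) 1) =
        Finsupp.single ((a * b : G) : G ⧸ K) 1 := by
      intro a b
      rw [T_single]; rfl
    induction hg using Subgroup.closure_induction with
    | mem s hs =>
      rcases hs with hs | hs
      · rw [Set.mem_singleton_iff] at hs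
        subst hs
        rw [hdv]
        simp only [bd, LinearMap.sub_apply, 
          Finsupp.lmapDomain_apply, Finsupp.mapDomain_single]
        congr 2
        change ((1 * s : G) : G ⧸ K) = _
        rw [one_mul]
      · rw [hdK s hs, map_zero]
        have : ((s : G) : G ⧸ K) = ((1 : G) : G ⧸ K) := by
          rw [QuotientGroup.eq]; simpa using hs
        rw [this, sub_self]
    | one => rw [hd.one]; simp
    | mul a b ha hb iha ihb =>
      rw [hd, map_add, hbd, iha, ihb, map_sub, hs, hs, mul_one]
      abel
    | inv a ha iha =>
      rw [hd.inv, map_neg, hbd, iha, map_sub, hs, hs, mul_one, inv_mul_cancel]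
      abel
  obtain ⟨y, hy⟩ := hn
  set z := bd y + Finsupp.single ((1 : G) : G ⧸ K) 1 with hz
  have hnz : T (G ⧸ K) n z = z := by
    have h1 := hbdd n
    rw [hy, map_sub, hbd] at h1
    have h2 : T (G ⧸ K) n (Finsupp.single ((1 : G) : G ⧸ K) 1) =
        Finsupp.single ((n : G) : G ⧸ K) 1 := by
      rw [T_single]
      congr 1
      change ((n * 1 : G) : G ⧸ K) = _
      rw [mul_one]
    rw [hz, map_add, h2, ← sub_eq_zero]
    have h3 := sub_eq_zero.2 h1
    rw [← neg_eq_zero, ← h3]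
    abel
  have hz0 : z ≠ 0 := by
    intro h0
    let ε : (G ⧸ K →₀ ℤ) →ₗ[ℤ] ℤ := Finsupp.linearCombination ℤ (fun _ => (1 : ℤ))
    have hε : ∀ f, ε (bd f) = 0 := by
      intro f
      induction f using Finsupp.induction_linear with
      | zero => simp
      | add f g hf hg => simp only [map_add, hf, hg, add_zero]
      | single x c => simp [bd, ε, Finsupp.lmapDomain_apply, Finsupp.mapDomain_single]
    have : ε z = 1 := by rw [hz, map_add, hε]; simp [ε]
    rw [h0] at this
    simp at this
  obtain ⟨x, hx⟩ := Finsupp.support_nonempty_iff.2 hz0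
  have hpow : ∀ i : ℕ, n ^ i • x ∈ z.support := by
    intro i
    induction i with
    | zero => simpa using hx
    | succ i ih =>
      rw [pow_succ', mul_smul, Finsupp.mem_support_iff, ← hnz, T_apply_smul]
      simpa using ih
  have hninj : ¬ Function.Injective (fun i : ℕ => (⟨n ^ i • x, hpow i⟩ : z.support)) :=
    not_injective_infinite_finite _
  simp only [Function.Injective, not_forall] at hninj
  obtain ⟨i, j, hij, hne⟩ := hninj
  have hij' : n ^ i • x = n ^ j • x := congrArg Subtype.val hij
  have main : ∀ i j : ℕ, i < j → n ^ i • x = n ^ j • x → 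
      ∃ k : ℕ, 0 < k ∧ ∃ g : G, g⁻¹ * n ^ k * g ∈ K := by
    intro i j hlt h
    refine ⟨j - i, by omega, ?_⟩
    have h' : x = n ^ (j - i) • x := by
      have : j = i + (j - i) := by omega
      rw [this, pow_add, mul_smul] at h
      simpa using h
    induction x using QuotientGroup.induction_on with
    | H g =>
    refine ⟨g, ?_⟩
    have h'' : ((g : G) : G ⧸ K) = ((n ^ (j - i) * g : G) : G ⧸ K) := h'
    rw [QuotientGroup.eq] at h''
    rwa [mul_assoc]
  rcases lt_or_gt_of_ne hne with h | h
  · exact main i j h hij'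
  · exact main j i h hij'.symm

/-- Affine permutation. -/
noncomputable def aff {X : Type} [MulAction G X] (g : G) (c : X →₀ ℤ) :
    Equiv.Perm (X →₀ ℤ) where
  toFun f := T X g f + c
  invFun f := T X g⁻¹ (f - c)
  left_inv f := by simp [← T_mul]
  right_inv f := by simp [← T_mul]

end Abstract

end RaagQuot

namespace RaagQuot

section Raag

open Classical

variable {V : Type} {Γ : SimpleGraph V}

/-- The generator of a RAAG. -/
def o (Γ : SimpleGraph V) (v : V) : RAAG Γ := PresentedGroup.of v

/-- Universal property. -/
def rlift {H : Type} [Group H] (f : V → H) (h : ∀ v w, Γ.Adj v w → f v * f w = f w * f v) :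
    RAAG Γ →* H :=
  PresentedGroup.toGroup (f := f) (by
    rintro r ⟨v, w, hvw, rfl⟩
    simp only [map_mul, map_inv, FreeGroup.lift_apply_of]
    rw [h v w hvw]
    group)

@[simp]
theorem rlift_o {H : Type} [Group H] (f : V → H)
    (h : ∀ v w, Γ.Adj v w → f v * f w = f w * f v) (v : V) :
    rlift f h (o Γ v) = f v := PresentedGroup.toGroup.of _

theorem o_comm {v w : V} (h : Γ.Adj v w) : o Γ v * o Γ w = o Γ w * o Γ v := by
  have : (PresentedGroup.mk (raagRels Γ)) (FreeGroup.of v * FreeGroup.of w * (FreeGroup.of v)⁻¹ *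
      (FreeGroup.of w)⁻¹) = 1 := by
    apply PresentedGroup.one_of_mem
    exact ⟨v, w, h, rfl⟩
  simp only [map_mul, map_inv] at this
  rw [mul_inv_eq_one, mul_inv_eq_iff_eq_mul] at this
  exact this

theorem hext {H : Type} [Group H] {f g : RAAG Γ →* H} (h : ∀ v, f (o Γ v) = g (o Γ v)) : f = g :=
  PresentedGroup.ext h

theorem closure_o : Subgroup.closure (Set.range (o Γ)) = ⊤ :=
  PresentedGroup.closure_range_of _

/-- Link subgroup. -/
def Lk (Γ : SimpleGraph V) (v : V) : Subgroup (RAAG Γ) :=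
  Subgroup.closure (o Γ '' {u | Γ.Adj v u})

/-- Subgroup generated by other vertices. -/
def Kk (Γ : SimpleGraph V) (v : V) : Subgroup (RAAG Γ) :=
  Subgroup.closure (o Γ '' {u | u ≠ v})

theorem Lk_le_Kk (v : V) : Lk Γ v ≤ Kk Γ v :=
  Subgroup.closure_mono (Set.image_mono (fun _ hu => (SimpleGraph.Adj.ne hu).symm))

theorem Lk_comm (v : V) : ∀ l ∈ Lk Γ v, l * o Γ v = o Γ v * l := by
  intro l hl
  have : Lk Γ v ≤ Subgroup.centralizer {o Γ v} := by
    rw [Lk, Subgroup.closure_le]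
    rintro _ ⟨u, hu, rfl⟩
    simp only [SetLike.mem_coe, Subgroup.mem_centralizer_iff, Set.mem_singleton_iff, forall_eq]
    exact o_comm hu
  have := Subgroup.mem_centralizer_iff.1 (this hl) (o Γ v) rfl
  exact this.symm

theorem top_v (v : V) : Subgroup.closure ({o Γ v} ∪ Kk Γ v : Set (RAAG Γ)) = ⊤ := by
  rw [eq_top_iff, ← closure_o, Subgroup.closure_le]
  rintro _ ⟨u, rfl⟩
  apply Subgroup.subset_closure
  by_cases h : u = v
  · left; rw [h]; rfl
  · right; exact Subgroup.subset_closure ⟨u, h, rfl⟩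

theorem exists_der (Γ : SimpleGraph V) (v : V) : ∃ d : RAAG Γ → (RAAG Γ ⧸ Lk Γ v →₀ ℤ),
    IsDer d ∧ d (o Γ v) = Finsupp.single ((1 : RAAG Γ) : RAAG Γ ⧸ Lk Γ v) 1 ∧
    ∀ u, u ≠ v → d (o Γ u) = 0 := by
  let e : RAAG Γ ⧸ Lk Γ v →₀ ℤ := Finsupp.single ((1 : RAAG Γ) : RAAG Γ ⧸ Lk Γ v) 1
  let c : V → (RAAG Γ ⧸ Lk Γ v →₀ ℤ) := fun u => if u = v then e else 0
  have he : ∀ u, Γ.Adj v u → T _ (o Γ u) e = e := by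
    intro u hu
    rw [T_single]
    congr 1
    change ((o Γ u * 1 : RAAG Γ) : RAAG Γ ⧸ Lk Γ v) = _
    rw [QuotientGroup.eq]
    simp only [mul_one]
    exact (Lk Γ v).inv_mem (Subgroup.subset_closure ⟨u, hu, rfl⟩)
  let Φ : RAAG Γ →* Equiv.Perm (RAAG Γ ⧸ Lk Γ v →₀ ℤ) := rlift (fun u => aff (o Γ u) (c u)) (by
    intro a b hab
    ext1 f
    change T _ (o Γ a) (T _ (o Γ b) f + c b) + c a = T _ (o Γ b) (T _ (o Γ a) f + c a) + c b
    rw [map_add, map_add, ← T_mul, ← T_mul, o_comm hab]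
    by_cases ha : a = v
    · subst ha
      have hb : b ≠ a := hab.ne.symm
      simp [c, hb, he b hab]
    · by_cases hb : b = v
      · subst hb
        simp [c, ha, he a hab.symm]
      · simp [c, ha, hb])
  have hΦ : ∀ g f, Φ g f = T _ g f + Φ g 0 := by
    intro g
    have hg : g ∈ Subgroup.closure (Set.range (o Γ)) := by rw [closure_o]; trivial
    induction hg using Subgroup.closure_induction with
    | mem s hs =>
      obtain ⟨u, rfl⟩ := hs
      intro f
      simp only [Φ, rlift_o]
      change T _ (o Γ u) f + c u = T _ (o Γ u) f + (T _ (o Γ u) 0 + c u)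
      simp
    | one => intro f; simp
    | mul a b ha hb iha ihb =>
      intro f
      rw [map_mul, Equiv.Perm.mul_apply, Equiv.Perm.mul_apply, iha, ihb f, iha (Φ b 0), map_add,
        T_mul, add_assoc]
    | inv a ha iha =>
      intro f
      rw [map_inv, Equiv.Perm.inv_eq_iff_eq, iha, map_add, T_inv_cancel, add_assoc, ← iha,
        ← Equiv.Perm.mul_apply, mul_inv_cancel, Equiv.Perm.one_apply, add_zero]
  refine ⟨fun g => Φ g 0, ?_, ?_, ?_⟩
  · intro g h
    change Φ (g * h) 0 = Φ g 0 + T _ g (Φ h 0)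
    rw [map_mul, Equiv.Perm.mul_apply, hΦ g (Φ h 0), add_comm]
  · simp only [Φ, rlift_o]
    change T _ (o Γ v) 0 + c v = _
    simp [c, e]
  · intro u hu
    simp only [Φ, rlift_o]
    change T _ (o Γ u) 0 + c u = _
    simp [c, hu]

theorem der_Kk {v : V} {d : RAAG Γ → (RAAG Γ ⧸ Lk Γ v →₀ ℤ)} (hd : IsDer d)
    (h : ∀ u, u ≠ v → d (o Γ u) = 0) : ∀ k ∈ Kk Γ v, d k = 0 := by
  intro k hk
  induction hk using Subgroup.closure_induction with
  | mem s hs => obtain ⟨u, hu, rfl⟩ := hs; exact h u hu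
  | one => exact hd.one
  | mul a b ha hb iha ihb => rw [hd, iha, ihb]; simp
  | inv a ha iha => rw [hd.inv, iha]; simp

/-- Retraction. -/
noncomputable def ρ (Γ : SimpleGraph V) (S : Set V) : RAAG Γ →* RAAG Γ :=
  rlift (fun v => if v ∈ S then o Γ v else 1) (by
    intro a b hab
    by_cases ha : a ∈ S <;> by_cases hb : b ∈ S <;> simp [ha, hb, o_comm hab])

theorem ρ_o (S : Set V) (v : V) : ρ Γ S (o Γ v) = if v ∈ S then o Γ v else 1 := by
  simp [ρ]

theorem ρ_ρ (S S' : Set V) (g : RAAG Γ) : ρ Γ S (ρ Γ S' g) = ρ Γ (S ∩ S') g := by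
  have : (ρ Γ S).comp (ρ Γ S') = ρ Γ (S ∩ S') := by
    apply hext
    intro v
    simp only [MonoidHom.comp_apply, ρ_o]
    by_cases h' : v ∈ S' <;> by_cases h : v ∈ S <;> simp [h, h', ρ_o]
  exact DFunLike.congr_fun this g

theorem ρ_fix (S : Set V) (g : RAAG Γ) (hg : g ∈ Subgroup.closure (o Γ '' S)) :
    ρ Γ S g = g := by
  induction hg using Subgroup.closure_induction with
  | mem s hs => obtain ⟨u, hu, rfl⟩ := hs; simp [ρ_o, hu]
  | one => simp
  | mul a b ha hb iha ihb => rw [map_mul, iha, ihb]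
  | inv a ha iha => rw [map_inv, iha]

/-- Action on the free group. -/
def fact (G Y : Type) [Group G] [MulAction G Y] : G →* MulAut (FreeGroup Y) where
  toFun g := FreeGroup.freeGroupCongr (MulAction.toPerm g)
  map_one' := by
    ext x
    have : ((MulAction.toPerm (1 : G) : Equiv.Perm Y) : Y → Y) = id := by
      ext y
      simp
    simp [this]
  map_mul' a b := by
    ext x
    simp [FreeGroup.map.comp]
    congr 1
    ext y
    simp [mul_smul]

theorem torsion_ker (v : V) (g : RAAG Γ) (hg : ρ Γ {v}ᶜ g = 1) (j : ℕ) (hj : 0 < j)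
    (hgj : g ^ j = 1) : g = 1 := by
  let Y := RAAG Γ ⧸ Lk Γ v
  let y₀ : Y := ((1 : RAAG Γ) : RAAG Γ ⧸ Lk Γ v)
  let S := SemidirectProduct (FreeGroup Y) (RAAG Γ) (fact (RAAG Γ) Y)
  have hy₀ : ∀ u, Γ.Adj v u → o Γ u • y₀ = y₀ := by
    intro u hu
    change ((o Γ u * 1 : RAAG Γ) : RAAG Γ ⧸ Lk Γ v) = ((1 : RAAG Γ) : RAAG Γ ⧸ Lk Γ v)
    rw [QuotientGroup.eq]
    simp only [mul_one]
    exact (Lk Γ v).inv_mem (Subgroup.subset_closure ⟨u, hu, rfl⟩)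
  have hcomm : ∀ u, Γ.Adj v u → (SemidirectProduct.inl (FreeGroup.of y₀) : S) *
      SemidirectProduct.inr (o Γ u) = SemidirectProduct.inr (o Γ u) *
      SemidirectProduct.inl (FreeGroup.of y₀) := by
    intro u hu
    have h1 := SemidirectProduct.inl_aut (φ := fact (RAAG Γ) Y) (o Γ u) (FreeGroup.of y₀)
    have h2 : fact (RAAG Γ) Y (o Γ u) (FreeGroup.of y₀) = FreeGroup.of y₀ := by
      change FreeGroup.freeGroupCongr (MulAction.toPerm (o Γ u)) (FreeGroup.of y₀) = _
      simp [hy₀ u hu]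
    rw [h2, map_inv, eq_mul_inv_iff_mul_eq] at h1
    exact h1
  let Φ : RAAG Γ →* S := rlift (fun u => if u = v then SemidirectProduct.inl (FreeGroup.of y₀)
      else SemidirectProduct.inr (o Γ u)) (by
    intro a b hab
    by_cases ha : a = v
    · subst ha
      have hb : b ≠ a := hab.ne.symm
      simp only [if_true, if_neg hb]
      exact hcomm b hab
    · by_cases hb : b = v
      · subst hb
        simp only [if_true, if_neg ha]
        exact (hcomm a hab.symm).symm
      · simp only [if_neg ha, if_neg hb, ← map_mul, o_comm hab])
  have hright : ∀ g, (Φ g).right = ρ Γ {v}ᶜ g := by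
    intro g
    have : SemidirectProduct.rightHom.comp Φ = ρ Γ {v}ᶜ := by
      apply hext
      intro u
      simp only [MonoidHom.comp_apply, Φ, rlift_o, ρ_o]
      by_cases hu : u = v <;> simp [hu]
    exact DFunLike.congr_fun this g
  have hρL : ∀ l ∈ Lk Γ v, ρ Γ {v}ᶜ l = l := fun l hl => ρ_fix _ _ (Lk_le_Kk v hl)
  let cj : Y → RAAG Γ := Quotient.lift (s := QuotientGroup.leftRel (Lk Γ v))
    (fun g => ρ Γ {v}ᶜ g * o Γ v * (ρ Γ {v}ᶜ g)⁻¹) (by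
    intro a b hab
    have hab : a⁻¹ * b ∈ Lk Γ v := QuotientGroup.leftRel_apply.1 hab
    have hb : b = a * (a⁻¹ * b) := by group
    change ρ Γ {v}ᶜ a * o Γ v * (ρ Γ {v}ᶜ a)⁻¹ = ρ Γ {v}ᶜ b * o Γ v * (ρ Γ {v}ᶜ b)⁻¹
    have hc := Lk_comm v _ hab
    rw [hb, map_mul, hρL _ hab]
    generalize a⁻¹ * b = l at hc
    rw [mul_assoc (ρ Γ {v}ᶜ a) l, hc]
    group)
  have hcj : ∀ (g : RAAG Γ) (y : Y), cj (g • y) = ρ Γ {v}ᶜ g * cj y * (ρ Γ {v}ᶜ g)⁻¹ := by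
    intro g y
    induction y using QuotientGroup.induction_on with
    | H a =>
    change ρ Γ {v}ᶜ (g * a) * o Γ v * (ρ Γ {v}ᶜ (g * a))⁻¹ =
      ρ Γ {v}ᶜ g * (ρ Γ {v}ᶜ a * o Γ v * (ρ Γ {v}ᶜ a)⁻¹) * (ρ Γ {v}ᶜ g)⁻¹
    rw [map_mul]
    group
  let Ψ : S →* RAAG Γ := SemidirectProduct.lift (FreeGroup.lift cj) (ρ Γ {v}ᶜ) (by
    intro g
    ext y
    change FreeGroup.lift cj (FreeGroup.freeGroupCongr (MulAction.toPerm g) (FreeGroup.of y)) = _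
    simp [hcj])
  have hΨ : ∀ g, Ψ (Φ g) = g := by
    intro g
    have : Ψ.comp Φ = MonoidHom.id _ := by
      apply hext
      intro u
      simp only [MonoidHom.comp_apply, Φ, rlift_o, MonoidHom.id_apply]
      by_cases hu : u = v
      · rw [if_pos hu, hu]
        have h1 : Ψ (SemidirectProduct.inl (FreeGroup.of y₀)) = FreeGroup.lift cj (FreeGroup.of y₀) :=
          SemidirectProduct.lift_inl _ _ _ _
        rw [h1, FreeGroup.lift_apply_of]
        change ρ Γ {v}ᶜ 1 * o Γ v * (ρ Γ {v}ᶜ 1)⁻¹ = _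
        simp
      · rw [if_neg hu]
        have h1 : Ψ (SemidirectProduct.inr (o Γ u)) = ρ Γ {v}ᶜ (o Γ u) :=
          SemidirectProduct.lift_inr _ _ _ _
        rw [h1, ρ_o]
        simp [hu]
    exact DFunLike.congr_fun this g
  have h1 : Φ g = SemidirectProduct.inl (Φ g).left := by
    ext
    · simp
    · simp [hright, hg]
  have h2 : (Φ g).left ^ j = 1 := by
    apply SemidirectProduct.inl_injective (φ := fact (RAAG Γ) Y)
    rw [map_pow, ← h1, ← map_pow, hgj, map_one, map_one]
  have h3 : (Φ g).left = 1 := by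
    exact (pow_eq_one_iff_left hj.ne').1 h2
  rw [← hΨ g, h1, h3, map_one, map_one]

theorem ell_all (n : RAAG Γ) (S : Finset V)
    (hS : ∀ v ∈ S, ∃ k : ℕ, 0 < k ∧ ∃ g : RAAG Γ, g⁻¹ * n ^ k * g ∈ Kk Γ v) :
    ρ Γ (S : Set V) n = 1 := by
  induction S using Finset.induction_on with
  | empty =>
    have : ρ Γ ((∅ : Finset V) : Set V) = 1 := by
      apply hext
      intro v
      simp [ρ_o]
    rw [this]; rfl
  | insert v S hv ih =>
    have ih := ih (fun u hu => hS u (Finset.mem_insert_of_mem hu))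
    obtain ⟨k, hk, g, hg⟩ := hS v (Finset.mem_insert_self _ _)
    have hset : ({v}ᶜ : Set V) ∩ ((insert v S : Finset V) : Set V) = (S : Set V) := by
      ext u
      simp only [Set.mem_inter_iff, Set.mem_compl_iff, Set.mem_singleton_iff, Finset.coe_insert,
        Set.mem_insert_iff, Finset.mem_coe]
      constructor
      · tauto
      · intro hu
        refine ⟨?_, Or.inr hu⟩
        rintro rfl
        exact hv hu
    set R := ((insert v S : Finset V) : Set V) with hR
    apply torsion_ker v _ _ k hk
    · -- power is trivial
      have h1 : ρ Γ {v}ᶜ (g⁻¹ * n ^ k * g) = g⁻¹ * n ^ k * g := ρ_fix _ _ hg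
      have h2 : ρ Γ R (ρ Γ {v}ᶜ (g⁻¹ * n ^ k * g)) = 1 := by
        rw [ρ_ρ, Set.inter_comm, hset]
        simp [ih]
      rw [h1] at h2
      simp only [map_mul, map_inv, map_pow] at h2
      rw [mul_assoc, inv_mul_eq_one] at h2
      simpa using h2
    · rw [ρ_ρ, hset, ih]

/-- Exponent of `v`. -/
noncomputable def ex (Γ : SimpleGraph V) (v : V) : RAAG Γ →* Multiplicative ℤ :=
  rlift (fun u => if u = v then Multiplicative.ofAdd 1 else 1) (fun _ _ _ => mul_comm _ _)

theorem step (N : Subgroup (RAAG Γ)) [hN : N.Normal] (hfg : N.FG) (v : V) (n : RAAG Γ) (hn : n ∈ N)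
    (d : RAAG Γ → (RAAG Γ ⧸ Lk Γ v →₀ ℤ)) (hd : IsDer d) (hne : ¬ Ell d n) :
    (N ⊔ Lk Γ v).FiniteIndex := by
  obtain ⟨F, hF⟩ := crit hd N hfg n hn hne
  exact finiteIndex_of_orbits N _ F hF

theorem mem_of_fi (N : Subgroup (RAAG Γ)) [hN : N.Normal] (v : V) (g : RAAG Γ)
    (hg : g ∈ N ⊔ Lk Γ v) : g * o Γ v * g⁻¹ * (o Γ v)⁻¹ ∈ N := by
  rw [Subgroup.mem_sup_of_normal_left] at hg
  obtain ⟨m, hm, l, hl, rfl⟩ := hg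
  have : m * l * o Γ v * (m * l)⁻¹ * (o Γ v)⁻¹ = m * (o Γ v * m⁻¹ * (o Γ v)⁻¹) := by
    rw [mul_assoc m l, Lk_comm v l hl]
    group
  rw [this]
  exact N.mul_mem hm (hN.conj_mem _ (N.inv_mem hm) _)

theorem propagate (N : Subgroup (RAAG Γ)) [hN : N.Normal] (hfg : N.FG) (u v : V) (huv : u ≠ v)
    (hadj : ¬ Γ.Adj u v) (hv : (N ⊔ Lk Γ v).FiniteIndex) : (N ⊔ Lk Γ u).FiniteIndex := by
  obtain ⟨k, hk, -, hmem⟩ := Subgroup.exists_pow_mem_of_index_ne_zero hv.index_ne_zero (o Γ u)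
  have hn := mem_of_fi N v _ hmem
  obtain ⟨d, hd, hdu, hd0⟩ := exists_der Γ u
  refine step N hfg u _ hn d hd ?_
  let p : RAAG Γ → ℤ := fun g => Multiplicative.toAdd (ex Γ v g)
  have pmul : ∀ a b, p (a * b) = p a + p b := by intro a b; simp [p]
  have pinv : ∀ a, p a⁻¹ = - p a := by intro a; simp [p]
  have pu : p (o Γ u) = 0 := by simp [p, ex, huv]
  have pv : p (o Γ v) = 1 := by simp [p, ex]
  have pl : ∀ l ∈ Lk Γ u, p l = 0 := by
    intro l hl
    induction hl using Subgroup.closure_induction with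
    | mem s hs =>
      obtain ⟨w, hw, rfl⟩ := hs
      have : w ≠ v := by rintro rfl; exact hadj hw
      simp [p, ex, this]
    | one => simp [p]
    | mul a b _ _ ha hb => rw [pmul, ha, hb, add_zero]
    | inv a _ ha => rw [pinv, ha, neg_zero]
  let P : RAAG Γ ⧸ Lk Γ u → ℤ := Quotient.lift (s := QuotientGroup.leftRel (Lk Γ u)) p (by
    intro a b hab
    have hab : a⁻¹ * b ∈ Lk Γ u := QuotientGroup.leftRel_apply.1 hab
    have := pl _ hab
    rw [pmul, pinv] at this
    linarith)
  have hP : ∀ (g : RAAG Γ) x, P (g • x) = p g + P x := by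
    intro g x
    induction x using QuotientGroup.induction_on with
    | H a => exact pmul g a
  let Λ : (RAAG Γ ⧸ Lk Γ u →₀ ℤ) →ₗ[ℤ] ℤ := Finsupp.linearCombination ℤ P
  let ε : (RAAG Γ ⧸ Lk Γ u →₀ ℤ) →ₗ[ℤ] ℤ := Finsupp.linearCombination ℤ (fun _ => (1 : ℤ))
  have hΛ : ∀ (g : RAAG Γ) f, Λ (T _ g f) = Λ f + p g * ε f := by
    intro g f
    induction f using Finsupp.induction_linear with
    | zero => simp
    | add f g hf hg => simp only [map_add, hf, hg]; ring
    | single x c => rw [T_single]; simp [Λ, ε, hP]; ring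
  have hε : ∀ (g : RAAG Γ) f, ε (T _ g f) = ε f := by
    intro g f
    induction f using Finsupp.induction_linear with
    | zero => simp
    | add f g hf hg => simp only [map_add, hf, hg]
    | single x c => rw [T_single]; simp [ε]
  have P1 : P ((1 : RAAG Γ) : RAAG Γ ⧸ Lk Γ u) = 0 := by
    change p 1 = 0
    simp [p]
  have dv : d (o Γ v) = 0 := hd0 v huv.symm
  have hpow : ∀ i : ℕ, p (o Γ u ^ i) = 0 ∧ Λ (d (o Γ u ^ i)) = 0 ∧ ε (d (o Γ u ^ i)) = i := by
    intro i
    induction i with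
    | zero => simp [hd.one, p]
    | succ i ih =>
      obtain ⟨h1, h2, h3⟩ := ih
      rw [pow_succ, pmul, hd, map_add, map_add, hΛ, hε, h1, h2, h3, hdu, pu]
      simp [Λ, ε, P1]
  obtain ⟨h1, h2, h3⟩ := hpow k
  rintro ⟨y, hy⟩
  have hp : p (o Γ u ^ k * o Γ v * (o Γ u ^ k)⁻¹ * (o Γ v)⁻¹) = 0 := by
    simp only [pmul, pinv]; ring
  have hc := congrArg Λ hy
  rw [map_sub, hΛ, hp] at hc
  rw [hd, hd, hd, hd.inv, hd.inv, dv] at hc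
  simp only [map_zero, neg_zero, add_zero, map_add, map_neg, hΛ, hε, h1, h2, h3, pmul, pinv, pv]
    at hc
  have : (k : ℤ) ≠ 0 := by exact_mod_cast hk.ne'
  apply this
  linarith

theorem triv_of_not_fi (N : Subgroup (RAAG Γ)) [hN : N.Normal] (hfg : N.FG) (A : Finset V)
    (hA : ∀ v ∈ A, ¬ (N ⊔ Lk Γ v).FiniteIndex) (n : RAAG Γ) (hn : n ∈ N) :
    ρ Γ (A : Set V) n = 1 := by
  apply ell_all
  intro v hv
  obtain ⟨d, hd, hdv, hd0⟩ := exists_der Γ v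
  have hell : Ell d n := by
    by_contra h
    exact hA v hv (step N hfg v n hn d hd h)
  exact ell_fix (o Γ v) (Lk Γ v) (Kk Γ v) (Lk_le_Kk v) (Lk_comm v) d hd hdv (der_Kk hd hd0)
    (top_v v) n hell

end Raag

end RaagQuot

namespace RaagQuot

section Final

open Classical

variable {V : Type} {Γ : SimpleGraph V}

theorem closure_comm {G : Type} [Group G] {s t : Set G} (h : ∀ a ∈ s, ∀ b ∈ t, a * b = b * a) :
    ∀ a ∈ Subgroup.closure s, ∀ b ∈ Subgroup.closure t, a * b = b * a := by
  have h1 : ∀ b ∈ t, Subgroup.closure s ≤ Subgroup.centralizer {b} := by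
    intro b hb
    rw [Subgroup.closure_le]
    intro a ha
    simp only [SetLike.mem_coe, Subgroup.mem_centralizer_iff, Set.mem_singleton_iff, forall_eq]
    exact (h a ha b hb).symm
  intro a ha
  have h2 : Subgroup.closure t ≤ Subgroup.centralizer {a} := by
    rw [Subgroup.closure_le]
    intro b hb
    simp only [SetLike.mem_coe, Subgroup.mem_centralizer_iff, Set.mem_singleton_iff, forall_eq]
    exact (Subgroup.mem_centralizer_iff.1 (h1 b hb ha) b rfl).symm
  intro b hb
  exact Subgroup.mem_centralizer_iff.1 (h2 hb) a rfl

theorem ρ_mem (S : Set V) (g : RAAG Γ) : ρ Γ S g ∈ Subgroup.closure (o Γ '' S) := by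
  have hg : g ∈ Subgroup.closure (Set.range (o Γ)) := by rw [closure_o]; trivial
  induction hg using Subgroup.closure_induction with
  | mem s hs =>
    obtain ⟨u, rfl⟩ := hs
    rw [ρ_o]
    by_cases hu : u ∈ S
    · rw [if_pos hu]; exact Subgroup.subset_closure ⟨u, hu, rfl⟩
    · rw [if_neg hu]; exact Subgroup.one_mem _
  | one => rw [map_one]; exact Subgroup.one_mem _
  | mul a b _ _ ha hb => rw [map_mul]; exact Subgroup.mul_mem _ ha hb
  | inv a _ ha => rw [map_inv]; exact Subgroup.inv_mem _ ha

theorem decomp (A B : Set V) (hAB : ∀ a ∈ A, ∀ b ∈ B, Γ.Adj a b) (hU : ∀ v, v ∈ A ∨ v ∈ B)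
    (g : RAAG Γ) : g = ρ Γ A g * ρ Γ B g := by
  have hc : ∀ x y : RAAG Γ, ρ Γ A x * ρ Γ B y = ρ Γ B y * ρ Γ A x := by
    intro x y
    refine closure_comm ?_ _ (ρ_mem A x) _ (ρ_mem B y)
    rintro _ ⟨a, ha, rfl⟩ _ ⟨b, hb, rfl⟩
    exact o_comm (hAB a ha b hb)
  have hg : g ∈ Subgroup.closure (Set.range (o Γ)) := by rw [closure_o]; trivial
  induction hg using Subgroup.closure_induction with
  | mem s hs =>
    obtain ⟨u, rfl⟩ := hs
    have hn : ¬ (u ∈ A ∧ u ∈ B) := fun h => (hAB u h.1 u h.2).ne rfl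
    rw [ρ_o, ρ_o]
    rcases hU u with h | h
    · have : u ∉ B := fun h' => hn ⟨h, h'⟩
      simp [h, this]
    · have : u ∉ A := fun h' => hn ⟨h', h⟩
      simp [h, this]
  | one => simp
  | mul a b _ _ ha hb =>
    calc a * b = (ρ Γ A a * ρ Γ B a) * (ρ Γ A b * ρ Γ B b) := by rw [← ha, ← hb]
      _ = ρ Γ A a * (ρ Γ B a * ρ Γ A b) * ρ Γ B b := by group
      _ = ρ Γ A (a * b) * ρ Γ B (a * b) := by rw [← hc, map_mul, map_mul]; group
  | inv a _ ha =>
    calc a⁻¹ = (ρ Γ A a * ρ Γ B a)⁻¹ := by rw [← ha]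
      _ = _ := by rw [hc, mul_inv_rev, map_inv, map_inv]

/-- Join of the induced graph on `A` with a complete graph on `J`. -/
def joinGraph (Γ : SimpleGraph V) (A : Finset V) (J : Type) :
    SimpleGraph ({a // a ∈ A} ⊕ J) where
  Adj x y := match x, y with
    | Sum.inl a, Sum.inl b => Γ.Adj a b
    | Sum.inl _, Sum.inr _ => True
    | Sum.inr _, Sum.inl _ => True
    | Sum.inr i, Sum.inr j => i ≠ j
  symm := ⟨by
    rintro (a | i) (b | j) h
    · have h : Γ.Adj a b := h
      exact h.symm
    · trivial
    · trivial
    · exact Ne.symm h⟩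
  loopless := ⟨by
    rintro (a | i) h
    · exact Γ.loopless.irrefl _ h
    · exact h rfl⟩

theorem assemble {Q : Type} [Group Q] (A : Finset V) (π : RAAG Γ →* Q) (ρbar : Q →* RAAG Γ)
    (hρ : ∀ g, ρbar (π g) = ρ Γ (A : Set V) g) (P : Subgroup Q)
    (hP : ∀ p ∈ P, ρbar p = 1) (hPA : ∀ p ∈ P, ∀ a ∈ A, π (o Γ a) * p = p * π (o Γ a))
    (hQ : ∀ q, ∃ p ∈ P, ∃ g, q = p * π (ρ Γ (A : Set V) g))
    (J : Type) [Fintype J] (ζ : (J → Multiplicative ℤ) →* Q) (hζ : Function.Injective ζ)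
    (hζP : ∀ t, ζ t ∈ P) (Z : Subgroup P) (hZ : Z.FiniteIndex)
    (hZζ : ∀ z ∈ Z, ∃ t, ζ t = (z : Q)) :
    ∃ H : Subgroup Q, H.FiniteIndex ∧ Nonempty (H ≃* RAAG (joinGraph Γ A J)) := by
  set Δ := joinGraph Γ A J with hΔ
  let e : J → (J → Multiplicative ℤ) := fun i => Pi.mulSingle i (Multiplicative.ofAdd 1)
  let θ : RAAG Δ →* Q := rlift (Sum.elim (fun a => π (o Γ a)) (fun i => ζ (e i))) (by
    rintro (a | i) (b | j) h
    · have h : Γ.Adj a b := h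
      simp only [Sum.elim_inl, ← map_mul, o_comm h]
    · exact hPA _ (hζP _) _ a.2
    · exact (hPA _ (hζP _) _ b.2).symm
    · simp only [Sum.elim_inr, ← map_mul, mul_comm])
  let κ : RAAG Γ →* RAAG Δ := rlift
      (fun v => if h : v ∈ A then o Δ (Sum.inl ⟨v, h⟩) else 1) (by
    intro a b hab
    by_cases ha : a ∈ A <;> by_cases hb : b ∈ A <;> simp [ha, hb]
    apply o_comm
    exact hab)
  let τ : RAAG Δ →* (J → Multiplicative ℤ) := rlift (Sum.elim (fun _ => 1) e)
    (fun _ _ _ => mul_comm _ _)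
  have hJadj : ∀ i j : J, i ≠ j → Δ.Adj (Sum.inr i) (Sum.inr j) := fun i j h => h
  have hEcomm : Pairwise fun i j : J => ∀ x y, Commute (zpowersHom _ (o Δ (Sum.inr i)) x)
      (zpowersHom _ (o Δ (Sum.inr j)) y) := by
    intro i j hij x y
    simp only [zpowersHom_apply]
    apply Commute.zpow_zpow
    exact o_comm (hJadj i j hij)
  let E : (J → Multiplicative ℤ) →* RAAG Δ :=
    MonoidHom.noncommPiCoprod (fun i => zpowersHom _ (o Δ (Sum.inr i))) hEcomm
  have hEs : ∀ i x, E (Pi.mulSingle i x) = zpowersHom _ (o Δ (Sum.inr i)) x :=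
    fun i x => MonoidHom.noncommPiCoprod_mulSingle _ _ _
  have hEe : ∀ i, E (e i) = o Δ (Sum.inr i) := by
    intro i
    rw [show e i = Pi.mulSingle i (Multiplicative.ofAdd 1) from rfl, hEs]
    simp
  set SA : Set ({a // a ∈ A} ⊕ J) := Set.range Sum.inl
  set SB : Set ({a // a ∈ A} ⊕ J) := Set.range Sum.inr
  have hdec : ∀ w, w = ρ Δ SA w * ρ Δ SB w := by
    apply decomp
    · rintro _ ⟨a, rfl⟩ _ ⟨b, rfl⟩
      trivial
    · rintro (a | i)
      · left; exact ⟨a, rfl⟩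
      · right; exact ⟨i, rfl⟩
  have h1 : ∀ w, κ (ρbar (θ w)) = ρ Δ SA w := by
    intro w
    have : κ.comp (ρbar.comp θ) = ρ Δ SA := by
      apply hext
      rintro (a | i)
      · simp [θ, hρ, ρ_o, κ, SA]
      · simp [θ, ρ_o, SA, hP _ (hζP _)]
    exact DFunLike.congr_fun this w
  have h2 : ∀ w, E (τ w) = ρ Δ SB w := by
    intro w
    have : E.comp τ = ρ Δ SB := by
      apply hext
      rintro (a | i)
      · simp [τ, ρ_o, SB]
      · simp [τ, ρ_o, SB, hEe]
    exact DFunLike.congr_fun this w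
  have h3 : ∀ w, θ (ρ Δ SB w) = ζ (τ w) := by
    intro w
    have : θ.comp (ρ Δ SB) = ζ.comp τ := by
      apply hext
      rintro (a | i)
      · simp [τ, ρ_o, SB]
      · simp [τ, ρ_o, SB, θ]
    exact DFunLike.congr_fun this w
  have h4 : ∀ t, τ (E t) = t := by
    intro t
    have : τ.comp E = MonoidHom.id _ := by
      apply MonoidHom.functions_ext
      intro i x
      simp only [MonoidHom.comp_apply, hEs, zpowersHom_apply,
        map_zpow, τ, rlift_o, Sum.elim_inr, e, MonoidHom.id_apply]
      rw [← Pi.mulSingle_zpow]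
      congr 1
      rw [← ofAdd_zsmul]
      simp
    exact DFunLike.congr_fun this t
  have h5 : ∀ g, θ (κ g) = π (ρ Γ (A : Set V) g) := by
    intro g
    have : θ.comp κ = π.comp (ρ Γ (A : Set V)) := by
      apply hext
      intro v
      by_cases hv : v ∈ A <;> simp [κ, θ, ρ_o, hv]
    exact DFunLike.congr_fun this g
  have hinj : Function.Injective θ := by
    rw [injective_iff_map_eq_one]
    intro w hw
    have ha : ρ Δ SA w = 1 := by rw [← h1, hw, map_one, map_one]
    have hw' := hw
    rw [hdec w, ha, one_mul, h3] at hw'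
    have hb : τ w = 1 := hζ (by rw [hw', map_one])
    rw [hdec w, ha, ← h2, hb, map_one, one_mul]
  refine ⟨θ.range, ?_, ⟨(MonoidHom.ofInjective hinj).symm⟩⟩
  let f : P ⧸ Z → Q ⧸ θ.range := Quotient.map' (fun p => (p : Q)) (by
    intro a b hab
    rw [QuotientGroup.leftRel_apply] at hab ⊢
    obtain ⟨t, ht⟩ := hZζ _ hab
    refine ⟨ρ Δ SB (E t), ?_⟩
    rw [h3, h4, ht]
    simp)
  have hf : Function.Surjective f := by
    intro y
    induction y using QuotientGroup.induction_on with
    | H q =>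
    obtain ⟨p, hp, g, rfl⟩ := hQ q
    refine ⟨((⟨p, hp⟩ : P) : P ⧸ Z), ?_⟩
    change ((p : Q) : Q ⧸ θ.range) = _
    rw [QuotientGroup.eq]
    exact ⟨κ g, by rw [h5]; group⟩
  have : Finite (P ⧸ Z) := inferInstance
  have : Finite (Q ⧸ θ.range) := Finite.of_surjective f hf
  exact Subgroup.finiteIndex_of_finite_quotient

theorem center_free {P : Type} [Group P] [Group.FG P] (hcenter : (Subgroup.center P).FiniteIndex) :
    ∃ (J : Type) (_ : Fintype J) (ζ : (J → Multiplicative ℤ) →* P), Function.Injective ζ ∧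
      ∃ Z : Subgroup P, Z.FiniteIndex ∧ ∀ z ∈ Z, ∃ t, ζ t = z := by
  have hZfg : Group.FG (Subgroup.center P) := inferInstance
  letI : CommGroup (Subgroup.center P) :=
    { (inferInstance : Group (Subgroup.center P)) with
      mul_comm := fun a b => Subtype.ext (Subgroup.mem_center_iff.1 b.2 a) }
  obtain ⟨ι, J, _, _, p, hp, ex, ⟨f⟩⟩ :=
    CommGroup.equiv_free_prod_prod_multiplicative_zmod (Subgroup.center P)
  have hfin : Finite ((i : ι) → Multiplicative (ZMod (p i ^ ex i))) := by
    have : ∀ i, Finite (Multiplicative (ZMod (p i ^ ex i))) := by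
      intro i
      have : NeZero (p i ^ ex i) := ⟨pow_ne_zero _ (hp i).ne_zero⟩
      exact inferInstanceAs (Finite (ZMod (p i ^ ex i)))
    infer_instance
  let ζ : (J → Multiplicative ℤ) →* P :=
    ((Subgroup.center P).subtype.comp (f.symm.toMonoidHom.comp (MonoidHom.inl _ _)))
  have hζ : Function.Injective ζ := by
    intro a b hab
    have h1 : f.symm (a, 1) = f.symm (b, 1) := Subtype.ext hab
    exact congrArg Prod.fst (f.symm.injective h1)
  let Z0 : Subgroup (Subgroup.center P) := ((MonoidHom.snd _ _).comp f.toMonoidHom).ker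
  have hZ0 : Z0.FiniteIndex := Subgroup.finiteIndex_ker _
  refine ⟨J, inferInstance, ζ, hζ, Z0.map (Subgroup.center P).subtype, ?_, ?_⟩
  · constructor
    rw [Subgroup.index_map_subtype]
    exact mul_ne_zero hZ0.index_ne_zero hcenter.index_ne_zero
  · rintro z ⟨c, hc, rfl⟩
    refine ⟨(f c).1, ?_⟩
    have hc' : (f c).2 = 1 := hc
    have : ((f c).1, 1) = f c := Prod.ext rfl hc'.symm
    change ((f.symm ((f c).1, 1) : Subgroup.center P) : P) = _
    rw [this, f.symm_apply_apply]
    rfl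

theorem main [Fintype V] (N : Subgroup (RAAG Γ)) [hN : N.Normal] (hfg : N.FG) :
    ∃ (W : Type) (_ : Fintype W) (Δ : SimpleGraph W) (H : Subgroup (RAAG Γ ⧸ N)),
      H.FiniteIndex ∧ Nonempty (↥H ≃* RAAG Δ) := by
  let A : Finset V := Finset.univ.filter (fun v => ¬ (N ⊔ Lk Γ v).FiniteIndex)
  let B : Finset V := Finset.univ.filter (fun v => (N ⊔ Lk Γ v).FiniteIndex)
  have hA : ∀ v ∈ A, ¬ (N ⊔ Lk Γ v).FiniteIndex := fun v hv => (Finset.mem_filter.1 hv).2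
  have hB : ∀ v ∈ B, (N ⊔ Lk Γ v).FiniteIndex := fun v hv => (Finset.mem_filter.1 hv).2
  have hU : ∀ v, v ∈ (A : Set V) ∨ v ∈ (B : Set V) := by
    intro v
    by_cases h : (N ⊔ Lk Γ v).FiniteIndex
    · right; simp [B, h]
    · left; simp [A, h]
  have hAB : ∀ a ∈ (A : Set V), ∀ b ∈ (B : Set V), Γ.Adj a b := by
    intro a ha b hb
    by_contra h
    have hne : a ≠ b := by rintro rfl; exact hA a ha (hB a hb)
    exact hA a ha (propagate N hfg a b hne h (hB b hb))
  let π : RAAG Γ →* RAAG Γ ⧸ N := QuotientGroup.mk' N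
  have hπ : Function.Surjective π := QuotientGroup.mk'_surjective N
  let ρbar : RAAG Γ ⧸ N →* RAAG Γ := QuotientGroup.lift N (ρ Γ (A : Set V))
    (fun n hn => triv_of_not_fi N hfg A hA n hn)
  have hρ : ∀ g, ρbar (π g) = ρ Γ (A : Set V) g := fun g => rfl
  let P : Subgroup (RAAG Γ ⧸ N) := Subgroup.closure ((B.image (fun b => π (o Γ b)) : Finset _) : Set _)
  have hbP : ∀ b ∈ B, π (o Γ b) ∈ P := by
    intro b hb
    apply Subgroup.subset_closure
    exact Finset.mem_coe.2 (Finset.mem_image_of_mem _ hb)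
  have hP : ∀ p ∈ P, ρbar p = 1 := by
    intro p hp
    have : P ≤ ρbar.ker := by
      rw [Subgroup.closure_le]
      intro q hq
      obtain ⟨b, hb, rfl⟩ := Finset.mem_image.1 (Finset.mem_coe.1 hq)
      have hbA : b ∉ (A : Set V) := fun h => hA b h (hB b hb)
      rw [SetLike.mem_coe, MonoidHom.mem_ker, hρ, ρ_o, if_neg hbA]
    exact this hp
  have hPA : ∀ p ∈ P, ∀ a ∈ A, π (o Γ a) * p = p * π (o Γ a) := by
    intro p hp a ha
    refine closure_comm (s := {π (o Γ a)}) ?_ _ (Subgroup.subset_closure rfl) _ hp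
    intro x hx q hq
    obtain ⟨b, hb, rfl⟩ := Finset.mem_image.1 (Finset.mem_coe.1 hq)
    rw [Set.mem_singleton_iff.1 hx, ← map_mul, ← map_mul, o_comm (hAB a ha b hb)]
  have hQ : ∀ q, ∃ p ∈ P, ∃ g, q = p * π (ρ Γ (A : Set V) g) := by
    intro q
    obtain ⟨g, rfl⟩ := hπ q
    refine ⟨π (ρ Γ (B : Set V) g), ?_, g, ?_⟩
    · have h1 : Subgroup.closure (o Γ '' (B : Set V)) ≤ P.comap π := by
        rw [Subgroup.closure_le]
        rintro _ ⟨b, hb, rfl⟩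
        exact hbP b hb
      exact h1 (ρ_mem _ g)
    · rw [← map_mul]
      congr 1
      exact decomp (B : Set V) (A : Set V) (fun b hb a ha => (hAB a ha b hb).symm)
        (fun v => (hU v).symm) g
  -- finite index centre
  have hcent : ∀ b ∈ B, (Subgroup.centralizer {π (o Γ b)}).FiniteIndex := by
    intro b hb
    have := hB b hb
    have h1 : N ⊔ Lk Γ b ≤ (Subgroup.centralizer {π (o Γ b)}).comap π := by
      intro g hg
      have h2 := mem_of_fi N b g hg
      rw [Subgroup.mem_comap, Subgroup.mem_centralizer_iff]
      rintro x rfl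
      have h3 : π (g * o Γ b * g⁻¹ * (o Γ b)⁻¹) = 1 := (QuotientGroup.eq_one_iff _).2 h2
      simp only [map_mul, map_inv] at h3
      rw [mul_inv_eq_one, mul_inv_eq_iff_eq_mul] at h3
      exact h3.symm
    have h4 := Subgroup.finiteIndex_of_le h1
    have h5 := h4.index_ne_zero
    rw [Subgroup.index_comap_of_surjective _ hπ] at h5
    exact ⟨h5⟩
  have hC := Subgroup.finiteIndex_iInf' (s := B) (fun b => Subgroup.centralizer {π (o Γ b)}) hcent
  have hcenter : (Subgroup.center P).FiniteIndex := by
    refine Subgroup.finiteIndex_of_le (H := (⨅ b ∈ B, Subgroup.centralizer {π (o Γ b)}).subgroupOf P)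
      ?_
    intro c hc
    rw [Subgroup.mem_subgroupOf] at hc
    rw [Subgroup.mem_center_iff]
    rintro ⟨p, hp⟩
    apply Subtype.ext
    change p * (c : RAAG Γ ⧸ N) = c * p
    symm
    refine closure_comm (s := {(c : RAAG Γ ⧸ N)}) ?_ _ (Subgroup.subset_closure rfl) _ hp
    intro x hx q hq
    obtain ⟨b, hb, rfl⟩ := Finset.mem_image.1 (Finset.mem_coe.1 hq)
    rw [Set.mem_singleton_iff.1 hx]
    simp only [Subgroup.mem_iInf] at hc
    exact (Subgroup.mem_centralizer_iff.1 (hc b hb) _ rfl).symm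
  have hPfg : Group.FG P := (Group.fg_iff_subgroup_fg P).2 ⟨_, rfl⟩
  obtain ⟨J, _, ζ, hζ, Z, hZ, hZζ⟩ := center_free hcenter
  obtain ⟨H, hH⟩ := assemble A π ρbar hρ P hP hPA hQ J (P.subtype.comp ζ)
    (P.subtype_injective.comp hζ) (fun t => (ζ t).2) Z hZ (by
    intro z hz
    obtain ⟨t, rfl⟩ := hZζ z hz
    exact ⟨t, rfl⟩)
  exact ⟨_, inferInstance, _, H, hH⟩

end Final

end RaagQuot

theorem quotient_of_RAAG_by_fg_normal_subgroup_is_virtually_RAAG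
    {V : Type} [Fintype V] (Γ : SimpleGraph V)
    (N : Subgroup (RAAG Γ)) [N.Normal] (hfg : N.FG) :
    ∃ (W : Type) (_ : Fintype W) (Δ : SimpleGraph W) (H : Subgroup (RAAG Γ ⧸ N)),
      H.FiniteIndex ∧ Nonempty (↥H ≃* RAAG Δ) :=
  RaagQuot.main N hfg
end

section
/- Let Γ be a finite simple graph and let W = W(Γ) be the associated right-angled Coxeter group. Let N be any finitely generated normal subgroup of W. Then W/N is virtually a RACG, i.e., there exist a finite simple graph Δ and a finite index subgroup of W/N isomorphic to the right-angled Coxeter group W(Δ). -/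
/-- The defining relators of a right-angled Coxeter group: squares of the generators and
commutators of generators corresponding to adjacent vertices. -/
def racgRels {V : Type} (Γ : SimpleGraph V) : Set (FreeGroup V) :=
  { r | (∃ v : V, r = FreeGroup.of v * FreeGroup.of v) ∨
      ∃ v w : V, Γ.Adj v w ∧
        r = FreeGroup.of v * FreeGroup.of w * (FreeGroup.of v)⁻¹ * (FreeGroup.of w)⁻¹ }

/-- The right-angled Coxeter group associated to the simple graph `Γ`. -/
abbrev RACG {V : Type} (Γ : SimpleGraph V) : Type := PresentedGroup (racgRels Γ)

section Dietzmann

theorem racg_exists_list {Q : Type*} [Group Q] {S : Set Q} {x : Q}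
    (hx : x ∈ Subgroup.closure S) :
    ∃ l : List Q, (∀ y ∈ l, y ∈ S ∨ y⁻¹ ∈ S) ∧ l.prod = x := by
  rw [← Subgroup.mem_toSubmonoid, Subgroup.closure_toSubmonoid] at hx
  exact Submonoid.exists_list_of_mem_closure hx

/-- A word in a conjugation-invariant set of involutions can be rewritten without repetition. -/
theorem racg_nodup_word {Q : Type*} [Group Q] (C : Set Q)
    (hinv : ∀ c ∈ C, c * c = 1) (hconj : ∀ q, ∀ c ∈ C, q * c * q⁻¹ ∈ C) :
    ∀ (k : ℕ) (l : List Q), l.length = k → (∀ x ∈ l, x ∈ C) →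
      ∃ l' : List Q, l'.Nodup ∧ (∀ x ∈ l', x ∈ C) ∧ l'.prod = l.prod := by
  intro k
  induction k using Nat.strong_induction_on with
  | _ k ih =>
    intro l hl hC
    by_cases hnd : l.Nodup
    · exact ⟨l, hnd, hC, rfl⟩
    · obtain ⟨c, hc⟩ := List.exists_duplicate_iff_not_nodup.mpr hnd
      have hsub := List.duplicate_iff_sublist.mp hc
      obtain ⟨l₁, l₂, rfl, h₁, h₂⟩ := List.cons_sublist_iff.mp hsub
      have h₂ : c ∈ l₂ := by simpa using h₂
      obtain ⟨a, b, rfl⟩ := List.append_of_mem h₁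
      obtain ⟨d, e, rfl⟩ := List.append_of_mem h₂
      have hcC : c ∈ C := hC c (by simp)
      have hcc := hinv c hcC
      obtain ⟨l', h1, h2, h3⟩ := ih (a ++ (b ++ d).map (MulAut.conj c) ++ e).length
        (by simp at hl ⊢; omega) _ rfl (by
          intro x hx
          simp only [List.mem_append, List.mem_map] at hx
          rcases hx with (hx | ⟨y, hy, rfl⟩) | hx
          · exact hC x (by simp [hx])
          · rw [MulAut.conj_apply]
            exact hconj _ _ (hC y (by rcases hy with hy | hy <;> simp [hy]))
          · exact hC x (by simp [hx]))
      refine ⟨l', h1, h2, h3.trans ?_⟩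
      have hci : c⁻¹ = c := inv_eq_of_mul_eq_one_left hcc
      have : ((b ++ d).map (MulAut.conj c)).prod = c * (b ++ d).prod * c := by
        rw [← map_list_prod, MulAut.conj_apply, hci]
      rw [List.prod_append, List.prod_append, this]
      simp [mul_assoc]

theorem racg_dietzmann {Q : Type*} [Group Q] (C : Set Q) (hfin : C.Finite)
    (hinv : ∀ c ∈ C, c * c = 1) (hconj : ∀ q, ∀ c ∈ C, q * c * q⁻¹ ∈ C) :
    Finite (Subgroup.closure C) := by
  have : Finite C := hfin
  have := Fintype.ofFinite C
  have hL : {l : List C | l.length ≤ Fintype.card C}.Finite := List.finite_length_le _ _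
  refine ((hL.image (fun l => (l.map Subtype.val).prod)).subset ?_ :
    (Subgroup.closure C : Set Q).Finite)
  intro x hx
  obtain ⟨l, hl, rfl⟩ := racg_exists_list hx
  have hl' : ∀ y ∈ l, y ∈ C := by
    intro y hy
    rcases hl y hy with h | h
    · exact h
    · have := hinv _ h
      have h2 : y⁻¹ = y := by
        have h3 : y⁻¹ = (y⁻¹)⁻¹ := eq_inv_of_mul_eq_one_left this
        rwa [inv_inv] at h3
      rwa [h2] at h
  obtain ⟨l', h1, h2, h3⟩ := racg_nodup_word C hinv hconj _ l rfl hl'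
  lift l' to List C using h2
  exact ⟨l', (List.Nodup.of_map _ h1).length_le_card, h3⟩

end Dietzmann

section Basic

variable {V : Type} {Γ : SimpleGraph V}

/-- The standard generators. -/
def rgen (Γ : SimpleGraph V) (s : V) : RACG Γ := PresentedGroup.of s

theorem rgen_sq (s : V) : rgen Γ s * rgen Γ s = 1 := by
  have : FreeGroup.of s * FreeGroup.of s ∈ racgRels Γ := Or.inl ⟨s, rfl⟩
  simpa [rgen, PresentedGroup.of] using PresentedGroup.one_of_mem this

theorem rgen_inv (s : V) : (rgen Γ s)⁻¹ = rgen Γ s :=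
  inv_eq_of_mul_eq_one_left (rgen_sq s)

theorem rgen_comm {s t : V} (h : Γ.Adj s t) : rgen Γ s * rgen Γ t = rgen Γ t * rgen Γ s := by
  have : FreeGroup.of s * FreeGroup.of t * (FreeGroup.of s)⁻¹ * (FreeGroup.of t)⁻¹
    ∈ racgRels Γ := Or.inr ⟨s, t, h, rfl⟩
  have h1 : rgen Γ s * rgen Γ t * (rgen Γ s)⁻¹ * (rgen Γ t)⁻¹ = 1 := by
    simpa [rgen, PresentedGroup.of] using PresentedGroup.one_of_mem this
  have h2 := mul_inv_eq_one.mp h1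
  exact mul_inv_eq_iff_eq_mul.mp h2

theorem racg_lift {G : Type*} [Group G] (f : V → G) (h1 : ∀ s, f s * f s = 1)
    (h2 : ∀ s t, Γ.Adj s t → f s * f t = f t * f s) :
    ∃ φ : RACG Γ →* G, ∀ s, φ (rgen Γ s) = f s := by
  have h : ∀ r ∈ racgRels Γ, FreeGroup.lift f r = 1 := by
    rintro r (⟨s, rfl⟩ | ⟨s, t, hst, rfl⟩)
    · simp [h1]
    · simp [h2 s t hst]
  exact ⟨PresentedGroup.toGroup h, fun s => PresentedGroup.toGroup.of h⟩

theorem rgen_closure : Subgroup.closure (Set.range (rgen Γ)) = ⊤ :=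
  PresentedGroup.closure_range_of _

theorem racg_word (w : RACG Γ) : ∃ L : List V, (L.map (rgen Γ)).prod = w := by
  have hw : w ∈ Subgroup.closure (Set.range (rgen Γ)) := by rw [rgen_closure]; trivial
  obtain ⟨l, hl, rfl⟩ := racg_exists_list hw
  clear hw
  induction l with
  | nil => exact ⟨[], rfl⟩
  | cons a l ih =>
    obtain ⟨L, hL⟩ := ih (fun y hy => hl y (by simp [hy]))
    have : ∃ s, rgen Γ s = a := by
      rcases hl a (by simp) with ⟨s, hs⟩ | ⟨s, hs⟩
      · exact ⟨s, hs⟩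
      · exact ⟨s, by rw [← rgen_inv, hs, inv_inv]⟩
    obtain ⟨s, rfl⟩ := this
    exact ⟨s :: L, by simp [hL]⟩

theorem racg_ind {P : RACG Γ → Prop} (h1 : P 1) (h2 : ∀ s w, P w → P (rgen Γ s * w))
    (w : RACG Γ) : P w := by
  obtain ⟨L, rfl⟩ := racg_word w
  induction L with
  | nil => exact h1
  | cons s L ih => simpa using h2 s _ ih

open Classical in
/-- The separation cocycle: `η w r = 1` iff the wall of the `v`-reflection `r` separates the
base vertex from its translate by `w`. -/
theorem racg_cocycle (Γ : SimpleGraph V) (v : V) : ∃ η : RACG Γ → RACG Γ → ZMod 2,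
    (∀ g w r, η (g * w) r = η g r + η w (g⁻¹ * r * g)) ∧
    (∀ s r, η (rgen Γ s) r = if s = v ∧ r = rgen Γ v then 1 else 0) := by
  let c : V → RACG Γ → ZMod 2 := fun s r => if s = v ∧ r = rgen Γ v then 1 else 0
  have hc : ∀ s r, c s r = if s = v ∧ r = rgen Γ v then 1 else 0 := fun _ _ => rfl
  have hconjv : ∀ r, rgen Γ v * r * rgen Γ v = rgen Γ v ↔ r = rgen Γ v := by
    intro r
    constructor
    · intro h
      have : rgen Γ v * (rgen Γ v * r * rgen Γ v) * rgen Γ v = r := by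
        simp only [mul_assoc, rgen_sq, mul_one]
        rw [← mul_assoc, rgen_sq, one_mul]
      rw [← this, h, rgen_sq, one_mul]
    · rintro rfl
      rw [rgen_sq, one_mul]
  have hcc : ∀ s r, c s r + c s (rgen Γ s * r * rgen Γ s) = 0 := by
    intro s r
    simp only [hc]
    by_cases hs : s = v
    · subst hs
      simp only [hconjv, true_and]
      split_ifs <;> decide
    · simp [hs]
  let f : V → Function.End (RACG Γ × ZMod 2) := fun s p =>
    (rgen Γ s * p.1 * rgen Γ s, p.2 + c s p.1)
  have hff : ∀ s p, f s (f s p) = p := by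
    rintro s ⟨r, e⟩
    refine Prod.ext ?_ ?_
    · simp only [f, mul_assoc, rgen_sq, mul_one]
      rw [← mul_assoc, rgen_sq, one_mul]
    · simp only [f]
      rw [add_assoc, hcc, add_zero]
  let F : V → Equiv.Perm (RACG Γ × ZMod 2) := fun s => ⟨f s, f s, hff s, hff s⟩
  have hF : ∀ s p, F s p = (rgen Γ s * p.1 * rgen Γ s, p.2 + c s p.1) := fun _ _ => rfl
  have hcomm1 : ∀ s t, Γ.Adj s t → ∀ r, c t (rgen Γ s * r * rgen Γ s) = c t r := by
    intro s t hst r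
    simp only [hc]
    by_cases ht : t = v
    · subst ht
      have : rgen Γ s * r * rgen Γ s = rgen Γ t ↔ r = rgen Γ t := by
        constructor
        · intro h
          have h2 : rgen Γ s * (rgen Γ s * r * rgen Γ s) * rgen Γ s = r := by
            simp only [mul_assoc, rgen_sq, mul_one]
            rw [← mul_assoc, rgen_sq, one_mul]
          rw [← h2, h, rgen_comm hst, mul_assoc, rgen_sq, mul_one]
        · rintro rfl
          rw [rgen_comm hst, mul_assoc, rgen_sq, mul_one]
      simp only [this]
    · simp [ht]
  obtain ⟨φ, hφ⟩ := racg_lift (Γ := Γ) F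
    (fun s => Equiv.ext (fun p => hff s p))
    (fun s t hst => by
      refine Equiv.ext (fun p => ?_)
      simp only [Equiv.Perm.mul_apply, hF]
      refine Prod.ext ?_ ?_
      · calc rgen Γ s * (rgen Γ t * p.1 * rgen Γ t) * rgen Γ s
            = (rgen Γ s * rgen Γ t) * p.1 * (rgen Γ t * rgen Γ s) := by group
          _ = (rgen Γ t * rgen Γ s) * p.1 * (rgen Γ s * rgen Γ t) := by rw [rgen_comm hst]
          _ = _ := by group
      · simp only [hcomm1 s t hst, hcomm1 t s hst.symm]
        ring)
  have key : ∀ w r e, φ w (r, e) = (w * r * w⁻¹, e + (φ w (r, 0)).2) := by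
    intro w
    induction w using racg_ind with
    | h1 => intro r e; simp
    | h2 s w ih =>
      intro r e
      rw [map_mul, Equiv.Perm.mul_apply, Equiv.Perm.mul_apply, hφ, hF, hF, ih r e, ih r 0]
      refine Prod.ext ?_ ?_
      · simp [mul_assoc, rgen_inv]
      · simp [add_assoc]
  refine ⟨fun w r => (φ w⁻¹ (r, 0)).2, ?_, ?_⟩
  · intro g w r
    simp only [mul_inv_rev, map_mul, Equiv.Perm.mul_apply]
    rw [key g⁻¹ r 0, key w⁻¹]
    simp
  · intro s r
    simp only [rgen_inv, hφ, hF, zero_add]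
    exact hc s r

end Basic

section Wall

variable {V : Type} {Γ : SimpleGraph V} {v : V} {η : RACG Γ → RACG Γ → ZMod 2}

open Classical in
/-- The defining property of the separation cocycle. -/
def IsSep (v : V) (η : RACG Γ → RACG Γ → ZMod 2) : Prop :=
  (∀ g w r, η (g * w) r = η g r + η w (g⁻¹ * r * g)) ∧
    (∀ s r, η (rgen Γ s) r = if s = v ∧ r = rgen Γ v then 1 else 0)

/-- The vertex stabilizer. -/
def offV (Γ : SimpleGraph V) (v : V) : Subgroup (RACG Γ) :=
  Subgroup.closure (rgen Γ '' {s | s ≠ v})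

theorem rgen_mem_offV {s : V} (h : s ≠ v) : rgen Γ s ∈ offV Γ v :=
  Subgroup.subset_closure ⟨s, h, rfl⟩

theorem IsSep.one (h : IsSep v η) (r : RACG Γ) : η 1 r = 0 := by
  have := h.1 1 1 r
  simpa using this

theorem IsSep.gen_ne (h : IsSep v η) {s : V} (hs : s ≠ v) (r : RACG Γ) :
    η (rgen Γ s) r = 0 := by
  rw [h.2]; simp [hs]

theorem IsSep.inv (h : IsSep v η) (g r : RACG Γ) : η g⁻¹ r = η g (g * r * g⁻¹) := by
  have h1 := h.1 g g⁻¹ (g * r * g⁻¹)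
  rw [mul_inv_cancel, h.one] at h1
  have h2 : g⁻¹ * (g * r * g⁻¹) * g = r := by group
  rw [h2] at h1
  generalize η g⁻¹ r = a at *
  generalize η g (g * r * g⁻¹) = b at *
  revert a b; decide

theorem IsSep.off (h : IsSep v η) {g : RACG Γ} (hg : g ∈ offV Γ v) : ∀ r, η g r = 0 := by
  induction hg using Subgroup.closure_induction with
  | mem x hx => obtain ⟨s, hs, rfl⟩ := hx; exact h.gen_ne hs
  | one => exact h.one
  | mul x y _ _ hx hy => intro r; rw [h.1, hx, hy, add_zero]
  | inv x _ hx => intro r; rw [h.inv, hx]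

theorem IsSep.finite (h : IsSep v η) (w : RACG Γ) : {r | η w r ≠ 0}.Finite := by
  induction w using racg_ind with
  | h1 => simp [h.one]
  | h2 s w ih =>
    refine ((Set.finite_singleton (rgen Γ v)).union
      (ih.image (fun r => rgen Γ s * r * (rgen Γ s)⁻¹))).subset ?_
    intro r hr
    simp only [Set.mem_ofPred_eq, h.1] at hr
    by_cases h1 : η (rgen Γ s) r = 0
    · right
      rw [h1, zero_add] at hr
      exact ⟨_, hr, by group⟩
    · left
      rw [h.2] at h1
      by_contra h3
      exact h1 (if_neg (fun h4 => h3 h4.2))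

/-- A separating wall is crossed by every word. -/
theorem IsSep.crossing (h : IsSep v η) (L : List V) : ∀ r, η (L.map (rgen Γ)).prod r ≠ 0 →
    ∃ L₁ L₂, L = L₁ ++ v :: L₂ ∧
      (L₁.map (rgen Γ)).prod * rgen Γ v * ((L₁.map (rgen Γ)).prod)⁻¹ = r := by
  induction L with
  | nil => intro r hr; exact absurd (h.one r) (by simpa using hr)
  | cons s L ih =>
    intro r hr
    rw [List.map_cons, List.prod_cons, h.1] at hr
    by_cases h1 : η (rgen Γ s) r = 0
    · rw [h1, zero_add] at hr
      obtain ⟨L₁, L₂, rfl, h2⟩ := ih _ hr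
      refine ⟨s :: L₁, L₂, rfl, ?_⟩
      rw [List.map_cons, List.prod_cons]
      have : r = rgen Γ s * ((rgen Γ s)⁻¹ * r * rgen Γ s) * (rgen Γ s)⁻¹ := by group
      rw [this, ← h2]
      group
    · rw [h.2] at h1
      have h3 : s = v ∧ r = rgen Γ v := by
        by_contra h3
        exact h1 (if_neg h3)
      obtain ⟨rfl, rfl⟩ := h3
      exact ⟨[], L, rfl, by simp⟩

theorem IsSep.mem_off_aux (h : IsSep v η) : ∀ (k : ℕ) (L : List V), L.length = k →
    (∀ g ∈ offV Γ v, η (L.map (rgen Γ)).prod (g * rgen Γ v * g⁻¹) = 0) →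
      (L.map (rgen Γ)).prod ∈ offV Γ v := by
  intro k
  induction k using Nat.strong_induction_on with
  | _ k ih =>
    intro L hL h0
    cases L with
    | nil => simp [one_mem]
    | cons s L =>
      by_cases hs : s = v
      · subst hs
        have h1 := h0 1 (one_mem _)
        rw [List.map_cons, List.prod_cons, h.1, h.2] at h1
        have h2 : (rgen Γ s)⁻¹ * (1 * rgen Γ s * 1⁻¹) * rgen Γ s = rgen Γ s := by group
        rw [h2, if_pos ⟨rfl, by simp⟩] at h1
        have h3 : η (L.map (rgen Γ)).prod (rgen Γ s) ≠ 0 := by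
          intro h3
          rw [h3] at h1
          exact absurd h1 (by decide)
        obtain ⟨L₁, L₂, rfl, h4⟩ := h.crossing L _ h3
        have h5 : ((s :: (L₁ ++ s :: L₂)).map (rgen Γ)).prod
            = ((L₁ ++ L₂).map (rgen Γ)).prod := by
          simp only [List.map_cons, List.prod_cons, List.map_append, List.prod_append]
          have h6 := mul_inv_eq_iff_eq_mul.mp h4
          rw [← mul_assoc, ← h6, mul_assoc, ← mul_assoc (rgen Γ s), rgen_sq, one_mul]
        rw [h5] at h0 ⊢
        refine ih _ ?_ _ rfl h0
        simp at hL ⊢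
        omega
      · rw [List.map_cons, List.prod_cons]
        refine mul_mem (rgen_mem_offV hs) (ih L.length (by simp at hL; omega) L rfl ?_)
        intro g hg
        have h1 := h0 (rgen Γ s * g) (mul_mem (rgen_mem_offV hs) hg)
        rw [List.map_cons, List.prod_cons, h.1, h.gen_ne hs, zero_add] at h1
        rw [← h1]
        congr 1
        group

theorem IsSep.mem_off (h : IsSep v η) (w : RACG Γ)
    (h0 : ∀ g ∈ offV Γ v, η w (g * rgen Γ v * g⁻¹) = 0) : w ∈ offV Γ v := by
  obtain ⟨L, rfl⟩ := racg_word w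
  exact h.mem_off_aux _ L rfl h0

/-- The dichotomy: either `N` fixes the base vertex, or every `v`-wall separates an `N`-orbit. -/
theorem IsSep.all (h : IsSep v η) (N : Subgroup (RACG Γ)) [hN : N.Normal]
    (hnot : ¬ N ≤ offV Γ v) (g : RACG Γ) : ∃ n ∈ N, η n (g * rgen Γ v * g⁻¹) ≠ 0 := by
  let E : Set (RACG Γ) := {r | ∃ n ∈ N, η n r ≠ 0}
  have hEN : ∀ m ∈ N, ∀ r ∈ E, m * r * m⁻¹ ∈ E := by
    rintro m hm r ⟨n, hn, hr⟩
    by_cases h1 : η m (m * r * m⁻¹) = 0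
    · refine ⟨m * n, mul_mem hm hn, ?_⟩
      have h2 : m⁻¹ * (m * r * m⁻¹) * m = r := by group
      rw [h.1, h1, zero_add, h2]
      exact hr
    · exact ⟨m, hm, h1⟩
  have hEH : ∀ m ∈ offV Γ v, ∀ r ∈ E, m * r * m⁻¹ ∈ E := by
    rintro m hm r ⟨n, hn, hr⟩
    refine ⟨m * n * m⁻¹, hN.conj_mem n hn m, ?_⟩
    have h2 : m⁻¹ * (m * r * m⁻¹) * m = r := by group
    rw [h.1, h.off (inv_mem hm), add_zero, h.1, h.off hm, zero_add, h2]
    exact hr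
  have hv : rgen Γ v ∈ E := by
    obtain ⟨n, hn, hn'⟩ := SetLike.not_le_iff_exists.mp hnot
    have h1 : ¬ ∀ g ∈ offV Γ v, η n (g * rgen Γ v * g⁻¹) = 0 := fun h1 => hn' (h.mem_off n h1)
    push Not at h1
    obtain ⟨g, hg, h2⟩ := h1
    have h3 := hEH g⁻¹ (inv_mem hg) _ ⟨n, hn, h2⟩
    have h4 : g⁻¹ * (g * rgen Γ v * g⁻¹) * g⁻¹⁻¹ = rgen Γ v := by group
    rwa [h4] at h3
  have hEv : ∀ r ∈ E, rgen Γ v * r * (rgen Γ v)⁻¹ ∈ E := by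
    rintro r ⟨n, hn, hr⟩
    have hm : rgen Γ v * n * (rgen Γ v)⁻¹ ∈ N := hN.conj_mem n hn _
    by_cases h1 : rgen Γ v * r * (rgen Γ v)⁻¹ = rgen Γ v
    · rwa [h1]
    by_cases h2 : n⁻¹ * r * n = rgen Γ v
    · have h3 := hEN _ hm _ hv
      have h4 : r = n * rgen Γ v * n⁻¹ := by rw [← h2]; group
      rw [h4]
      convert h3 using 1
      group
    · refine ⟨_, hm, ?_⟩
      have h3 : (rgen Γ v)⁻¹ * (rgen Γ v * r * (rgen Γ v)⁻¹) * rgen Γ v = r := by group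
      have h4 : (rgen Γ v * n)⁻¹ * (rgen Γ v * r * (rgen Γ v)⁻¹) * (rgen Γ v * n)
          = n⁻¹ * r * n := by group
      rw [h.1, h.1, h3, h4, h.2 v, if_neg (fun h5 => h1 h5.2), rgen_inv, h.2 v,
        if_neg (fun h5 => h2 h5.2), zero_add, add_zero]
      exact hr
  change g * rgen Γ v * g⁻¹ ∈ E
  induction g using racg_ind with
  | h1 => simpa using hv
  | h2 s w ih =>
    have h1 : rgen Γ s * w * rgen Γ v * (rgen Γ s * w)⁻¹
        = rgen Γ s * (w * rgen Γ v * w⁻¹) * (rgen Γ s)⁻¹ := by group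
    rw [h1]
    by_cases hs : s = v
    · subst hs; exact hEv _ ih
    · exact hEH _ (rgen_mem_offV hs) _ ih

theorem racg_dichotomy (v : V) (N : Subgroup (RACG Γ)) [hN : N.Normal] (hfg : N.FG)
    (hnot : ¬ N ≤ offV Γ v) :
    {q : RACG Γ ⧸ N | ∃ x, x * (rgen Γ v : RACG Γ ⧸ N) * x⁻¹ = q}.Finite := by
  obtain ⟨η, h⟩ : ∃ η, IsSep (Γ := Γ) v η := racg_cocycle Γ v
  obtain ⟨S, rfl⟩ := hfg
  set N := Subgroup.closure (S : Set (RACG Γ)) with hNdef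
  let F : Set (RACG Γ ⧸ N) := ⋃ n ∈ S, (fun r : RACG Γ => (r : RACG Γ ⧸ N)) '' {r | η n r ≠ 0}
  have hF : F.Finite := S.finite_toSet.biUnion (fun n _ => (h.finite n).image _)
  have hNF : ∀ n ∈ N, ∀ r : RACG Γ, (r : RACG Γ ⧸ N) ∉ F → η n r = 0 := by
    have hconj : ∀ n ∈ N, ∀ r : RACG Γ,
        ((n⁻¹ * r * n : RACG Γ) : RACG Γ ⧸ N) = (r : RACG Γ ⧸ N) := by
      intro n hn r
      have : (n : RACG Γ ⧸ N) = 1 := (QuotientGroup.eq_one_iff n).mpr hn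
      simp [this]
    intro n hn
    have hn' : n ∈ Subgroup.closure (S : Set (RACG Γ)) := hn
    induction hn' using Subgroup.closure_induction with
    | mem x hx =>
      intro r hr
      by_contra h1
      exact hr (Set.mem_biUnion hx ⟨r, h1, rfl⟩)
    | one => intro r _; exact h.one r
    | mul x y hx hy ihx ihy =>
      intro r hr
      rw [h.1, ihx hx r hr, ihy hy _ (by rwa [hconj x hx]), add_zero]
    | inv x hx ihx =>
      intro r hr
      rw [h.inv]
      refine ihx hx _ ?_
      have := hconj x⁻¹ (inv_mem hx) r
      rw [inv_inv] at this
      rwa [this]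
  refine hF.subset ?_
  rintro q ⟨x, rfl⟩
  obtain ⟨g, rfl⟩ := QuotientGroup.mk_surjective x
  obtain ⟨n, hn, h1⟩ := h.all N hnot g
  by_contra h2
  exact h1 (hNF n hn _ (by simpa using h2))

end Wall

section Retract

variable {V : Type} {Γ : SimpleGraph V}

open Classical in
theorem racg_inter (T : Finset V) (x : RACG Γ) (hx : ∀ v ∈ T, x ∈ offV Γ v) :
    x ∈ Subgroup.closure (rgen Γ '' {s | s ∉ T}) := by
  induction T using Finset.induction_on with
  | empty => simp [rgen_closure]
  | insert v T _ ih =>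
    have h1 := ih (fun u hu => hx u (by simp [hu]))
    have h2 := hx v (by simp)
    obtain ⟨ρ, hρ⟩ := racg_lift (Γ := Γ) (fun s => if s = v then 1 else rgen Γ s)
      (fun s => by split_ifs <;> simp [rgen_sq])
      (fun s t hst => by split_ifs <;> simp [rgen_comm hst])
    have h3 : ρ x = x := by
      refine MonoidHom.eqOn_closure (f := ρ) (g := MonoidHom.id _) ?_ h2
      rintro _ ⟨s, hs, rfl⟩
      have hs : s ≠ v := hs
      simp [hρ, hs]
    have h4 : Subgroup.closure (rgen Γ '' {s | s ∉ T}) ≤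
        (Subgroup.closure (rgen Γ '' {s | s ∉ insert v T})).comap ρ := by
      rw [Subgroup.closure_le]
      rintro _ ⟨s, hs, rfl⟩
      have hs : s ∉ T := hs
      simp only [Subgroup.coe_comap, Set.mem_preimage, hρ, SetLike.mem_coe]
      split_ifs with hsv
      · exact one_mem _
      · exact Subgroup.subset_closure ⟨s, by simp [hs, hsv], rfl⟩
    have h5 := h4 h1
    rwa [Subgroup.mem_comap, h3] at h5

end Retract

theorem quotient_of_RACG_by_fg_normal_subgroup_is_virtually_RACG
    {V : Type} [Fintype V] (Γ : SimpleGraph V)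
    (N : Subgroup (RACG Γ)) [N.Normal] (hfg : N.FG) :
    ∃ (W : Type) (_ : Fintype W) (Δ : SimpleGraph W) (H : Subgroup (RACG Γ ⧸ N)),
      H.FiniteIndex ∧ Nonempty (↥H ≃* RACG Δ) := by
  classical
  let B : Set V := {v | N ≤ offV Γ v}
  let Δ : SimpleGraph B := Γ.induce B
  obtain ⟨ι, hι⟩ := racg_lift (Γ := Δ) (fun s => rgen Γ (s : V)) (fun s => rgen_sq _)
    (fun s t hst => rgen_comm hst)
  obtain ⟨π, hπ⟩ := racg_lift (Γ := Γ) (fun s => if hs : s ∈ B then rgen Δ ⟨s, hs⟩ else 1)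
    (fun s => by split_ifs <;> simp [rgen_sq])
    (fun s t hst => by
      split_ifs with h1 h2
      · exact rgen_comm (Γ := Δ) (s := ⟨s, h1⟩) (t := ⟨t, h2⟩) hst
      all_goals simp)
  have hπN : ∀ n ∈ N, π n = 1 := by
    intro n hn
    have h1 := racg_inter (Γ := Γ) B.toFinset n (fun v hv => by
      have hv : v ∈ B := by simpa using hv
      exact hv hn)
    refine MonoidHom.eqOn_closure (f := π) (g := 1) ?_ h1
    rintro _ ⟨s, hs, rfl⟩
    have hs : s ∉ B := by simpa using hs
    simp [hπ, hs]
  have hπι : ∀ x, π (ι x) = x := by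
    intro x
    induction x using racg_ind with
    | h1 => simp
    | h2 s w ih =>
      rw [map_mul, map_mul, ih, hι, hπ, dif_pos s.2]
  let f : RACG Δ →* RACG Γ ⧸ N := (QuotientGroup.mk' N).comp ι
  have hf : Function.Injective f := by
    rw [injective_iff_map_eq_one]
    intro x hx
    have h1 : ι x ∈ N := (QuotientGroup.eq_one_iff _).mp hx
    rw [← hπι x, hπN _ h1]
  refine ⟨B, inferInstance, Δ, f.range, ?_, ⟨(MonoidHom.ofInjective hf).symm⟩⟩
  let C : Set (RACG Γ ⧸ N) :=
    ⋃ v ∈ {v : V | v ∉ B}, {q | ∃ x, x * (rgen Γ v : RACG Γ ⧸ N) * x⁻¹ = q}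
  have hC : C.Finite := (Set.toFinite _).biUnion (fun v hv => racg_dichotomy v N hfg hv)
  have hconj : ∀ q, ∀ c ∈ C, q * c * q⁻¹ ∈ C := by
    intro q c hc
    obtain ⟨v, hv, x, rfl⟩ := Set.mem_iUnion₂.mp hc
    exact Set.mem_iUnion₂.mpr ⟨v, hv, q * x, by group⟩
  have hinv : ∀ c ∈ C, c * c = 1 := by
    intro c hc
    obtain ⟨v, hv, x, rfl⟩ := Set.mem_iUnion₂.mp hc
    have h1 : (rgen Γ v : RACG Γ ⧸ N) * (rgen Γ v : RACG Γ ⧸ N) = 1 := by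
      rw [← QuotientGroup.mk_mul, rgen_sq, QuotientGroup.mk_one]
    calc x * (rgen Γ v : RACG Γ ⧸ N) * x⁻¹ * (x * (rgen Γ v : RACG Γ ⧸ N) * x⁻¹)
        = x * ((rgen Γ v : RACG Γ ⧸ N) * (rgen Γ v : RACG Γ ⧸ N)) * x⁻¹ := by group
      _ = 1 := by rw [h1]; group
  have hfin := racg_dietzmann C hC hinv hconj
  have hnorm : (Subgroup.closure C).Normal := by
    constructor
    intro n hn g
    have h1 : Subgroup.closure C ≤ (Subgroup.closure C).comap (MulAut.conj g).toMonoidHom := by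
      rw [Subgroup.closure_le]
      intro c hc
      exact Subgroup.subset_closure (hconj g c hc)
    exact h1 hn
  have htop : ∀ q : RACG Γ ⧸ N, q ∈ Subgroup.closure C ⊔ f.range := by
    intro q
    obtain ⟨w, rfl⟩ := QuotientGroup.mk_surjective q
    induction w using racg_ind with
    | h1 => exact one_mem _
    | h2 s w ih =>
      rw [QuotientGroup.mk_mul]
      refine mul_mem ?_ ih
      by_cases hs : s ∈ B
      · refine Subgroup.mem_sup_right ⟨rgen Δ ⟨s, hs⟩, ?_⟩
        simp [f, hι]
      · exact Subgroup.mem_sup_left (Subgroup.subset_closure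
          (Set.mem_iUnion₂.mpr ⟨s, hs, 1, by simp⟩))
  have hsurj : Function.Surjective (fun c : Subgroup.closure C =>
      ((c : RACG Γ ⧸ N) : (RACG Γ ⧸ N) ⧸ f.range)) := by
    intro y
    obtain ⟨q, rfl⟩ := QuotientGroup.mk_surjective y
    obtain ⟨c, hc, d, hd, rfl⟩ := Subgroup.mem_sup_of_normal_left.mp (htop q)
    exact ⟨⟨c, hc⟩, QuotientGroup.eq.mpr (by simpa using hd)⟩
  have := Finite.of_surjective _ hsurj
  exact Subgroup.finiteIndex_of_finite_quotient
end
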